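/- Let ℓ be an integer with ⌊(ℓ−1)/3⌋ ≥ 1, and let c,σ,σ'>0 with σ<σ' and c > 1/⌊(ℓ−1)/3⌋. Let K'>0 be an integer and λ'>0. Then there exist λ>0 and integers N,K>0 with the following property: for every graph G with |G|≥N and every blockade A in G of length K, with linkage at most λ and shrinkage at most σ, such that A is not (|G|^{−c}, |G|^{−c})-divergent, there is an A-rainbow bi-grading (L, M, B) with height ℓ, such that B has length K', linkage at most λ' and shrinkage at most σ'. -/

import Mathlib

noncomputable section

namespace PurePairs

open SimpleGraph

variable {V W : Type*}

/-- A pure pair in `G`: a pair of disjoint vertex sets that are complete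
or anticomplete to each other. -/
def PurePair (G : SimpleGraph V) (A B : Set V) : Prop :=
  Disjoint A B ∧
    ((∀ a ∈ A, ∀ b ∈ B, G.Adj a b) ∨ (∀ a ∈ A, ∀ b ∈ B, ¬ G.Adj a b))

/-- `G` contains `H`: some induced subgraph of `G` is isomorphic to `H`. -/
def Contains (G : SimpleGraph V) (H : SimpleGraph W) : Prop :=
  Nonempty (H ↪g G)

/-- The congestion of a graph `H`: the maximum (here: supremum, together with `0`)
of `1 - (|J|-1)/|E(J)|` over all subgraphs `J` of `H` with at least one edge.
If `H` has no edges this is `0`. -/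
def congestion (H : SimpleGraph V) : ℝ :=
  sSup ({0} ∪ {x : ℝ | ∃ J : H.Subgraph, J.edgeSet.Nonempty ∧
    x = 1 - ((J.verts.ncard : ℝ) - 1) / (J.edgeSet.ncard : ℝ)})

/-- `A` is anticomplete to `B`: no edges between them. -/
def Anticomplete (G : SimpleGraph V) (A B : Set V) : Prop :=
  ∀ a ∈ A, ∀ b ∈ B, ¬ G.Adj a b

/-- `A` covers `B`: every vertex of `B` has a neighbour in `A`. -/
def Covers (G : SimpleGraph V) (A B : Set V) : Prop :=
  ∀ b ∈ B, ∃ a ∈ A, G.Adj a b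

/-- `G` is `ε`-sparse: every vertex has degree less than `ε|G|`. -/
def EpsSparse (G : SimpleGraph V) [Fintype V] (ε : ℝ) : Prop :=
  ∀ v : V, ((G.neighborSet v).ncard : ℝ) < ε * (Fintype.card V : ℝ)

/-- `G` is `(γ,δ)`-coherent: there is no pair of disjoint anticomplete sets `A`, `B`
with `|A| ≥ γ` and `|B| ≥ δ`. -/
def Coherent (G : SimpleGraph V) (γ δ : ℝ) : Prop :=
  ¬ ∃ A B : Set V, Disjoint A B ∧ Anticomplete G A B ∧
      γ ≤ (A.ncard : ℝ) ∧ δ ≤ (B.ncard : ℝ)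

/-- `N(X)`: the set of vertices with a neighbour in `X`. -/
def nbhd (G : SimpleGraph V) (X : Set V) : Set V :=
  {v | ∃ x ∈ X, G.Adj x v}

/-- A blockade: a family of nonempty pairwise disjoint vertex sets indexed by a
finite set of integers. -/
def IsBlockade (I : Finset ℤ) (A : ℤ → Set V) : Prop :=
  (∀ i ∈ I, (A i).Nonempty) ∧
    ∀ i ∈ I, ∀ j ∈ I, i ≠ j → Disjoint (A i) (A j)

/-- The blockade `(A i : i ∈ I)` is `(γ,δ)`-divergent. -/
def Divergent (G : SimpleGraph V) (I : Finset ℤ) (A : ℤ → Set V) (γ δ : ℝ) : Prop :=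
  ∃ i ∈ I, ∃ j ∈ I, i ≠ j ∧ ∃ X ⊆ A i, ∃ Y ⊆ A j,
    γ * ((A i).ncard : ℝ) ≤ (X.ncard : ℝ) ∧ δ * ((A j).ncard : ℝ) ≤ (Y.ncard : ℝ) ∧
    Anticomplete G X Y

/-- The blockade `(A i : i ∈ I)` is `τ`-expanding. -/
def Expanding (G : SimpleGraph V) (I : Finset ℤ) (A : ℤ → Set V) (τ : ℝ) : Prop :=
  ∀ i ∈ I, ∀ j ∈ I, i ≠ j → ∀ X ⊆ A i,
    min (τ * (X.ncard : ℝ) / ((A i).ncard : ℝ)) (1/4)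
      ≤ (((nbhd G X) ∩ A j).ncard : ℝ) / ((A j).ncard : ℝ)

/-- The linkage of the blockade `(A i : i ∈ I)` is at most `lam`. -/
def LinkageLE (G : SimpleGraph V) (I : Finset ℤ) (A : ℤ → Set V) (lam : ℝ) : Prop :=
  ∀ i ∈ I, ∀ j ∈ I, i ≠ j → ∀ v ∈ A i,
    ((G.neighborSet v ∩ A j).ncard : ℝ) ≤ lam * ((A j).ncard : ℝ)

/-- The shrinkage of the blockade `(A i : i ∈ I)` is at most `σ`, i.e. its width is at
least `|G|^{1-σ}`. -/
def ShrinkageLE [Fintype V] (I : Finset ℤ) (A : ℤ → Set V) (σ : ℝ) : Prop :=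
  ∀ i ∈ I, (Fintype.card V : ℝ) ^ (1 - σ) ≤ ((A i).ncard : ℝ)

/-- `(L 0, …, L k)` is a levelling in `G`. -/
def IsLevelling (G : SimpleGraph V) (L : ℕ → Set V) (k : ℕ) : Prop :=
  1 ≤ k ∧ (L 0).ncard = 1 ∧
  (∀ i ≤ k, ∀ j ≤ k, i ≠ j → Disjoint (L i) (L j)) ∧
  (∀ i, 1 ≤ i → i ≤ k → Covers G (L (i-1)) (L i)) ∧
  (∀ i, 2 ≤ i → i ≤ k → ∀ h, h + 2 ≤ i → Anticomplete G (L h) (L i))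

/-- The levelling `(L 0, …, L k)` reaches `C`, i.e. `(L 0, …, L k, C)` is a levelling. -/
def Reaches (G : SimpleGraph V) (L : ℕ → Set V) (k : ℕ) (C : Set V) : Prop :=
  IsLevelling G (fun i => if i = k + 1 then C else L i) (k + 1)

/-- The levelling `(L 0, …, L k)` is `(B i : i ∈ I)`-rainbow. -/
def RainbowLevelling (I : Finset ℤ) (B : ℤ → Set V) (L : ℕ → Set V) (k : ℕ) : Prop :=
  ∃ q : ℕ → ℤ, (∀ i ≤ k, q i ∈ I ∧ L i ⊆ B (q i)) ∧
    ∀ i ≤ k, ∀ j ≤ k, q i = q j → i = j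

/-- The levelling `(L 0, …, L k)` grades the blockade `(C j : j ∈ J)` (in some order). -/
def Grades (G : SimpleGraph V) (L : ℕ → Set V) (k : ℕ) (J : Finset ℤ) (C : ℤ → Set V) :
    Prop :=
  Reaches G L k (⋃ j ∈ J, C j) ∧
  ∃ e : ℕ → ℤ, (∀ g < J.card, e g ∈ J) ∧
    (∀ g < J.card, ∀ h < J.card, e g = e h → g = h) ∧
    ∀ g < J.card, ∃ Y ⊆ L k,
      (∀ h, g ≤ h → h < J.card → Covers G Y (C (e h))) ∧
      (∀ h, h < g → Anticomplete G Y (C (e h)))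

/-- The levelling `(L 0, …, L k)` grades the blockade `(C j : j ∈ J)` forwards. -/
def GradesFwd (G : SimpleGraph V) (L : ℕ → Set V) (k : ℕ) (J : Finset ℤ) (C : ℤ → Set V) :
    Prop :=
  Reaches G L k (⋃ j ∈ J, C j) ∧
  ∀ j ∈ J, ∃ Y ⊆ L k,
    (∀ i ∈ J, j ≤ i → Covers G Y (C i)) ∧
    (∀ i ∈ J, i < j → Anticomplete G Y (C i))

/-- The levelling `(L 0, …, L k)` grades the blockade `(C j : j ∈ J)` backwards. -/
def GradesBwd (G : SimpleGraph V) (L : ℕ → Set V) (k : ℕ) (J : Finset ℤ) (C : ℤ → Set V) :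
    Prop :=
  Reaches G L k (⋃ j ∈ J, C j) ∧
  ∀ j ∈ J, ∃ Y ⊆ L k,
    (∀ i ∈ J, i ≤ j → Covers G Y (C i)) ∧
    (∀ i ∈ J, j < i → Anticomplete G Y (C i))

/-- Two levellings are parallel. -/
def Parallel (G : SimpleGraph V) (L : ℕ → Set V) (k : ℕ) (M : ℕ → Set V) (m : ℕ) : Prop :=
  L 0 = M 0 ∧
  Disjoint (⋃ j ∈ Finset.Icc 1 m, M j) (⋃ i ∈ Finset.Icc 1 k, L i) ∧
  Anticomplete G (⋃ j ∈ Finset.Icc 1 m, M j) (⋃ i ∈ Finset.Icc 1 k, L i)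

/-- `(L, M, C)` is a bi-levelling, where `L` has height `k` and `M` has height `m`:
`C` is a blockade, `L, M` are parallel levellings both reaching the union of the
blocks of `C`, and `L` grades `C` forwards. Its height is `k + m` and its length is
the length of `C`. -/
def IsBiLevelling (G : SimpleGraph V) (L : ℕ → Set V) (k : ℕ) (M : ℕ → Set V) (m : ℕ)
    (J : Finset ℤ) (C : ℤ → Set V) : Prop :=
  IsBlockade J C ∧ IsLevelling G L k ∧ IsLevelling G M m ∧ Parallel G L k M m ∧
    Reaches G M m (⋃ j ∈ J, C j) ∧ GradesFwd G L k J C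

/-- A bi-grading: a bi-levelling in which `M` also grades `C` backwards. -/
def IsBiGrading (G : SimpleGraph V) (L : ℕ → Set V) (k : ℕ) (M : ℕ → Set V) (m : ℕ)
    (J : Finset ℤ) (C : ℤ → Set V) : Prop :=
  IsBiLevelling G L k M m J C ∧ GradesBwd G M m J C

/-- The bi-levelling `(L, M, C)` is `(A i : i ∈ I)`-rainbow: each block of `C`, each
level of `L`, and each level of `M` other than `M 0 = L 0` is included in a block of
`A`, and distinct such sets lie in distinct blocks. -/
def RainbowBiLevelling (I : Finset ℤ) (A : ℤ → Set V)
    (L : ℕ → Set V) (k : ℕ) (M : ℕ → Set V) (m : ℕ)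
    (J : Finset ℤ) (C : ℤ → Set V) : Prop :=
  ∃ (qc : ℤ → ℤ) (ql qm : ℕ → ℤ),
    (∀ j ∈ J, qc j ∈ I ∧ C j ⊆ A (qc j)) ∧
    (∀ i ≤ k, ql i ∈ I ∧ L i ⊆ A (ql i)) ∧
    (∀ i, 1 ≤ i → i ≤ m → qm i ∈ I ∧ M i ⊆ A (qm i)) ∧
    (∀ j ∈ J, ∀ j' ∈ J, qc j = qc j' → j = j') ∧
    (∀ i ≤ k, ∀ i' ≤ k, ql i = ql i' → i = i') ∧
    (∀ i, 1 ≤ i → i ≤ m → ∀ i', 1 ≤ i' → i' ≤ m → qm i = qm i' → i = i') ∧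
    (∀ j ∈ J, ∀ i ≤ k, qc j ≠ ql i) ∧
    (∀ j ∈ J, ∀ i, 1 ≤ i → i ≤ m → qc j ≠ qm i) ∧
    (∀ i ≤ k, ∀ i', 1 ≤ i' → i' ≤ m → ql i ≠ qm i')

/-- Each block of `(C j : j ∈ J)` lies in a block of `(A i : i ∈ I)`; the `A`-size of
`C` is at least `η` when every block of `C` has size at least `η` times the size of the
block of `A` containing it. -/
def SizeGE (I : Finset ℤ) (A : ℤ → Set V) (J : Finset ℤ) (C : ℤ → Set V) (η : ℝ) : Prop :=
  ∀ j ∈ J, ∀ i ∈ I, C j ⊆ A i → η * ((A i).ncard : ℝ) ≤ ((C j).ncard : ℝ)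

/-- A `(B i : i ∈ I)`-rainbow induced path `p 0 - p 1 - ⋯ - p n` in `G`. -/
def RainbowPath (G : SimpleGraph V) (I : Finset ℤ) (B : ℤ → Set V)
    (n : ℕ) (p : ℕ → V) : Prop :=
  (∀ i ≤ n, ∀ j ≤ n, p i = p j → i = j) ∧
  (∀ i < n, G.Adj (p i) (p (i+1))) ∧
  (∀ i j, i + 1 < j → j ≤ n → ¬ G.Adj (p i) (p j)) ∧
  ∃ q : ℕ → ℤ, (∀ i ≤ n, q i ∈ I ∧ p i ∈ B (q i)) ∧
    ∀ i ≤ n, ∀ j ≤ n, q i = q j → i = j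

/-- A `(B i : i ∈ I)`-rainbow copy of `H` in `G`: an induced copy of `H` with each
vertex in a different block. -/
def RainbowCopy (G : SimpleGraph V) (I : Finset ℤ) (B : ℤ → Set V)
    (H : SimpleGraph W) : Prop :=
  ∃ (f : H ↪g G) (q : W → ℤ), Function.Injective q ∧ ∀ w : W, q w ∈ I ∧ f w ∈ B (q w)

/-- `(N,K,σ,lam,c)` forces `H`. -/
def Forces (H : SimpleGraph W) (N K : ℕ) (σ lam c : ℝ) : Prop :=
  ∀ {V : Type} [Fintype V] (G : SimpleGraph V),
    Coherent G ((Fintype.card V : ℝ) ^ (1 - c)) ((Fintype.card V : ℝ) ^ (1 - c)) →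
    N ≤ Fintype.card V →
    ∀ (I : Finset ℤ) (A : ℤ → Set V), IsBlockade I A → I.card = K →
      ShrinkageLE I A σ → LinkageLE G I A lam →
      RainbowCopy G I A H

/-- `p 0 - ⋯ - p n` is a handle of length `n` that can be added to (the graph induced
on) `S` inside the ambient graph `H`: an induced path of `H[S ∪ p]` of length at least
two whose ends lie in `S`, whose internal vertices avoid `S` and have degree two in
`H[S ∪ p]`. -/
def IsHandle (H : SimpleGraph V) (S : Set V) (n : ℕ) (p : ℕ → V) : Prop :=
  2 ≤ n ∧
  (∀ i ≤ n, ∀ j ≤ n, p i = p j → i = j) ∧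
  p 0 ∈ S ∧ p n ∈ S ∧
  (∀ i, 0 < i → i < n → p i ∉ S) ∧
  (∀ i < n, H.Adj (p i) (p (i+1))) ∧
  (∀ i j, i + 1 < j → j ≤ n → ¬ H.Adj (p i) (p j)) ∧
  (∀ i, 0 < i → i < n → ∀ w, (w ∈ S ∨ ∃ j ≤ n, w = p j) → H.Adj (p i) w →
    w = p (i-1) ∨ w = p (i+1))

/-- The vertex sets `S` such that the induced subgraph `H[S]` can be built, starting
from the two-vertex graph with no edges, by repeatedly adding handles of length at
least `β`. -/
inductive BuildableOn (H : SimpleGraph V) (β : ℕ) : Set V → Prop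
  | base (u v : V) (huv : u ≠ v) (hadj : ¬ H.Adj u v) : BuildableOn H β {u, v}
  | handle (S : Set V) (n : ℕ) (p : ℕ → V) (hS : BuildableOn H β S)
      (hh : IsHandle H S n p) (hn : β ≤ n) :
      BuildableOn H β (S ∪ {w | ∃ j ≤ n, w = p j})

/-- `H` is `β`-buildable. -/
def Buildable [Fintype V] (H : SimpleGraph V) (β : ℕ) : Prop :=
  BuildableOn H β Set.univ

/-- The vertex sets `S` such that the induced subgraph `H[S]` can be built, starting
from the null graph, by repeatedly adding a subleaf or a handle of length at least
`β`. -/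
inductive WeaklyBuildableOn (H : SimpleGraph V) (β : ℕ) : Set V → Prop
  | empty : WeaklyBuildableOn H β ∅
  | subleaf (S : Set V) (v : V) (hv : v ∉ S) (hdeg : (S ∩ H.neighborSet v).ncard ≤ 1)
      (hS : WeaklyBuildableOn H β S) : WeaklyBuildableOn H β (insert v S)
  | handle (S : Set V) (n : ℕ) (p : ℕ → V) (hS : WeaklyBuildableOn H β S)
      (hh : IsHandle H S n p) (hn : β ≤ n) :
      WeaklyBuildableOn H β (S ∪ {w | ∃ j ≤ n, w = p j})

/-- `H` is weakly `β`-buildable. -/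
def WeaklyBuildable [Fintype V] (H : SimpleGraph V) (β : ℕ) : Prop :=
  WeaklyBuildableOn H β Set.univ

/-! ### Basic facts on sizes and neighbourhoods -/

/-- Size of a set as a real number. -/
def sz {V : Type} (S : Set V) : ℝ := (S.ncard : ℝ)

section basics
variable {V : Type} [Fintype V] (G : SimpleGraph V)

lemma sz_nonneg (S : Set V) : 0 ≤ sz S := Nat.cast_nonneg _

lemma sz_mono {S T : Set V} (h : S ⊆ T) : sz S ≤ sz T := by
  unfold sz; exact_mod_cast Set.ncard_le_ncard h (Set.toFinite _)

lemma sz_union_le (S T : Set V) : sz (S ∪ T) ≤ sz S + sz T := by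
  unfold sz; exact_mod_cast Set.ncard_union_le S T

lemma sz_union_disj {S T : Set V} (h : Disjoint S T) : sz (S ∪ T) = sz S + sz T := by
  unfold sz; exact_mod_cast Set.ncard_union_eq h (Set.toFinite _) (Set.toFinite _)

lemma sz_inter_add_diff (S T : Set V) : sz (T ∩ S) + sz (S \ T) = sz S := by
  unfold sz; rw [Set.inter_comm]
  exact_mod_cast Set.ncard_inter_add_ncard_diff_eq_ncard S T (Set.toFinite _)

lemma sz_pos {S : Set V} (h : S.Nonempty) : 0 < sz S := by
  unfold sz; exact_mod_cast (Set.ncard_pos (Set.toFinite _)).2 h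

lemma sz_one_le {S : Set V} (h : S.Nonempty) : 1 ≤ sz S := by
  unfold sz; exact_mod_cast (Set.ncard_pos (Set.toFinite _)).2 h

lemma nonempty_of_sz {S : Set V} (h : 0 < sz S) : S.Nonempty := by
  by_contra hh
  rw [Set.not_nonempty_iff_eq_empty] at hh
  simp [sz, hh] at h

lemma sz_empty : sz (∅ : Set V) = 0 := by simp [sz]

lemma sz_singleton (v : V) : sz ({v} : Set V) = 1 := by simp [sz]

lemma sz_le_card (S : Set V) : sz S ≤ (Fintype.card V : ℝ) := by
  unfold sz
  have := Set.ncard_le_ncard (Set.subset_univ S) (Set.toFinite _)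
  rw [Set.ncard_univ, Nat.card_eq_fintype_card] at this
  exact_mod_cast this

lemma sz_biUnion_le {ι : Type*} (s : Finset ι) (f : ι → Set V) :
    sz (⋃ i ∈ s, f i) ≤ ∑ i ∈ s, sz (f i) := by
  classical
  induction s using Finset.induction_on with
  | empty => simp [sz]
  | insert a s ha ih =>
    rw [Finset.sum_insert ha, Finset.set_biUnion_insert]
    exact (sz_union_le _ _).trans (by linarith)

lemma nbhd_mono {S T : Set V} (h : S ⊆ T) : nbhd G S ⊆ nbhd G T := by
  rintro v ⟨x, hx, hv⟩; exact ⟨x, h hx, hv⟩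

lemma nbhd_union (S T : Set V) : nbhd G (S ∪ T) = nbhd G S ∪ nbhd G T := by
  ext v; simp only [nbhd, Set.mem_setOf_eq, Set.mem_union]
  constructor
  · rintro ⟨x, hx | hx, h⟩
    · exact Or.inl ⟨x, hx, h⟩
    · exact Or.inr ⟨x, hx, h⟩
  · rintro (⟨x, hx, h⟩ | ⟨x, hx, h⟩)
    · exact ⟨x, Or.inl hx, h⟩
    · exact ⟨x, Or.inr hx, h⟩

lemma nbhd_empty : nbhd G (∅ : Set V) = ∅ := by
  ext v; simp [nbhd]

lemma nbhd_singleton (v : V) : nbhd G {v} = G.neighborSet v := by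
  ext u; simp [nbhd]

/-- non-divergence between a pair of sets -/
def NDp (ν : ℝ) (X Y : Set V) : Prop :=
  ∀ S ⊆ X, ν * sz X ≤ sz S → sz (Y \ nbhd G S) < ν * sz Y

/-- expansion between a pair of sets -/
def Exq (τ : ℝ) (X Y : Set V) : Prop :=
  ∀ S ⊆ X, min (τ * sz S / sz X) (1/4) * sz Y ≤ sz (nbhd G S ∩ Y)

/-- linkage between a pair of sets -/
def Lk (lam : ℝ) (X Y : Set V) : Prop :=
  ∀ v ∈ X, sz (nbhd G {v} ∩ Y) ≤ lam * sz Y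

variable {G}

lemma NDp.sub {ν κ : ℝ} {X Y X' Y' : Set V} (h : NDp G ν X Y) (hν : 0 ≤ ν) (hκ : 0 < κ)
    (hX : X' ⊆ X) (hY : Y' ⊆ Y) (hX' : κ * sz X ≤ sz X') (hY' : κ * sz Y ≤ sz Y') :
    NDp G (ν / κ) X' Y' := by
  intro S hS hsz
  have e1 : ν * sz X ≤ ν / κ * sz X' := by
    calc ν * sz X = ν / κ * (κ * sz X) := by field_simp
      _ ≤ _ := by gcongr
  have e2 : ν * sz Y ≤ ν / κ * sz Y' := by
    calc ν * sz Y = ν / κ * (κ * sz Y) := by field_simp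
      _ ≤ _ := by gcongr
  have := h S (hS.trans hX) (e1.trans hsz)
  have h2 : sz (Y' \ nbhd G S) ≤ sz (Y \ nbhd G S) := sz_mono (Set.diff_subset_diff_left hY)
  linarith

lemma NDp.mono {ν ν' : ℝ} {X Y : Set V} (h : NDp G ν X Y) (hν : ν ≤ ν') : NDp G ν' X Y := by
  intro S hS hsz
  have h1 : ν * sz X ≤ ν' * sz X := by have := sz_nonneg X; gcongr
  have h2 : ν * sz Y ≤ ν' * sz Y := by have := sz_nonneg Y; gcongr
  have := h S hS (h1.trans hsz)
  linarith

lemma Lk.sub {lam κ : ℝ} {X Y X' Y' : Set V} (h : Lk G lam X Y) (hl : 0 ≤ lam) (hκ : 0 < κ)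
    (hX : X' ⊆ X) (hY : Y' ⊆ Y) (hY' : κ * sz Y ≤ sz Y') :
    Lk G (lam / κ) X' Y' := by
  intro v hv
  have e2 : lam * sz Y ≤ lam / κ * sz Y' := by
    calc lam * sz Y = lam / κ * (κ * sz Y) := by field_simp
      _ ≤ _ := by gcongr
  have := h v (hX hv)
  have h2 : sz (nbhd G {v} ∩ Y') ≤ sz (nbhd G {v} ∩ Y) :=
    sz_mono (Set.inter_subset_inter_right _ hY)
  linarith

lemma exists_max_nat {α : Type*} (P : α → Prop) (f : α → ℕ) (b : ℕ) (hb : ∀ a, P a → f a ≤ b)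
    (h : ∃ a, P a) : ∃ a, P a ∧ ∀ a', P a' → f a' ≤ f a := by
  classical
  have hne : ({n | ∃ a, P a ∧ f a = n} : Set ℕ).Nonempty := by
    obtain ⟨a, ha⟩ := h; exact ⟨f a, a, ha, rfl⟩
  have hbd : BddAbove ({n | ∃ a, P a ∧ f a = n} : Set ℕ) := by
    refine ⟨b, ?_⟩; rintro n ⟨a, ha, rfl⟩; exact hb a ha
  obtain ⟨a, ha, hfa⟩ := Nat.sSup_mem hne hbd
  refine ⟨a, ha, fun a' ha' => ?_⟩
  rw [hfa]; exact le_csSup hbd ⟨a', ha', rfl⟩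

/-- Cleaning lemma. -/
lemma clean (J : Finset ℕ) (X : ℕ → Set V) (γ : ℝ) (hγ : 0 < γ) (hγ8 : γ ≤ 1/8)
    (hJ : (J.card : ℝ) * γ ≤ 1/2) (hne : ∀ i ∈ J, (X i).Nonempty)
    (hnd : ∀ i ∈ J, ∀ j ∈ J, i ≠ j → NDp G γ (X i) (X j)) :
    ∃ X' : ℕ → Set V, (∀ i ∈ J, X' i ⊆ X i ∧ (1/2) * sz (X i) ≤ sz (X' i)) ∧
      ∀ i ∈ J, ∀ j ∈ J, i ≠ j → Exq G (1 / (16 * γ)) (X' i) (X' j) := by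
  classical
  set τ : ℝ := 1 / (16 * γ) with hτ
  have hτ0 : 0 < τ := by positivity
  have hτγ : 2 * τ * γ = 1/8 := by rw [hτ]; field_simp; norm_num
  let A' : (ℕ → ℕ → Set V) → ℕ → Set V := fun D j => X j \ ⋃ k ∈ J.erase j, D j k
  let P : (ℕ → ℕ → Set V) → Prop := fun D => ∀ i ∈ J, ∀ j ∈ J, i ≠ j →
    D i j ⊆ X i ∧ sz (D i j) ≤ γ * sz (X i) ∧
      sz (nbhd G (D i j) ∩ A' D j) ≤ 2 * τ * sz (D i j) * (sz (X j) / sz (X i))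
  let f : (ℕ → ℕ → Set V) → ℕ := fun D => ∑ i ∈ J, ∑ j ∈ J, (D i j).ncard
  obtain ⟨D, hD, hmax⟩ := exists_max_nat P f (∑ i ∈ J, ∑ j ∈ J, Fintype.card V)
    (by
      intro D _
      refine Finset.sum_le_sum fun i _ => Finset.sum_le_sum fun j _ => ?_
      have := Set.ncard_le_ncard (Set.subset_univ (D i j)) (Set.toFinite _)
      rwa [Set.ncard_univ, Nat.card_eq_fintype_card] at this)
    ⟨fun _ _ => ∅, by
      intro i hi j hj hij
      refine ⟨Set.empty_subset _, ?_, ?_⟩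
      · rw [sz_empty]; have := sz_nonneg (X i); positivity
      · rw [nbhd_empty, Set.empty_inter, sz_empty]; simp⟩
  have hA'half : ∀ j ∈ J, (1/2) * sz (X j) ≤ sz (A' D j) := by
    intro j hj
    have h1 := sz_inter_add_diff (X j) (⋃ k ∈ J.erase j, D j k)
    have h2 : sz ((⋃ k ∈ J.erase j, D j k) ∩ X j) ≤ ∑ k ∈ J.erase j, sz (D j k) :=
      (sz_mono Set.inter_subset_left).trans (sz_biUnion_le _ _)
    have h3 : ∑ k ∈ J.erase j, sz (D j k) ≤ ∑ k ∈ J.erase j, γ * sz (X j) := by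
      refine Finset.sum_le_sum fun k hk => ?_
      have hk' := Finset.mem_erase.1 hk
      exact (hD j hj k hk'.2 (Ne.symm hk'.1)).2.1
    rw [Finset.sum_const, nsmul_eq_mul] at h3
    have h4 : ((J.erase j).card : ℝ) ≤ J.card := by
      exact_mod_cast Finset.card_le_card (Finset.erase_subset _ _)
    have h5 := sz_nonneg (X j)
    have h6 : ((J.erase j).card : ℝ) * (γ * sz (X j)) ≤ (J.card : ℝ) * γ * sz (X j) := by
      rw [← mul_assoc]; gcongr
    have h7 : (J.card : ℝ) * γ * sz (X j) ≤ 1/2 * sz (X j) := by gcongr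
    show (1/2) * sz (X j) ≤ sz (X j \ ⋃ k ∈ J.erase j, D j k)
    linarith
  refine ⟨A' D, fun i hi => ⟨Set.diff_subset, hA'half i hi⟩, ?_⟩
  intro i hi j hj hij S hS
  by_contra hbad
  push Not at hbad
  have hXi : 0 < sz (X i) := sz_pos (hne i hi)
  have hXj : 0 < sz (X j) := sz_pos (hne j hj)
  have hAi := hA'half i hi
  have hAj := hA'half j hj
  have hAjX : sz (A' D j) ≤ sz (X j) := sz_mono Set.diff_subset
  have hSne : S.Nonempty := by
    by_contra hh
    rw [Set.not_nonempty_iff_eq_empty] at hh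
    rw [hh, sz_empty, nbhd_empty, Set.empty_inter, sz_empty] at hbad
    simp at hbad
  have hSpos := sz_pos hSne
  have hdisj : Disjoint (D i j) S := by
    rw [Set.disjoint_left]
    intro v hv hvS
    have := (hS hvS).2
    apply this
    simp only [Set.mem_iUnion]
    exact ⟨j, Finset.mem_erase.2 ⟨Ne.symm hij, hj⟩, hv⟩
  have hszu := sz_union_disj hdisj
  obtain ⟨hD1, hD2, hD3⟩ := hD i hi j hj hij
  have hb1 : sz (nbhd G S ∩ A' D j) ≤ 2 * τ * sz S * (sz (X j) / sz (X i)) := by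
    have e : min (τ * sz S / sz (A' D i)) (1/4) * sz (A' D j)
        ≤ τ * sz S / ((1/2) * sz (X i)) * sz (X j) := by
      have e1 : min (τ * sz S / sz (A' D i)) (1/4) ≤ τ * sz S / sz (A' D i) := min_le_left _ _
      have e2 : τ * sz S / sz (A' D i) ≤ τ * sz S / ((1/2) * sz (X i)) := by
        gcongr
      have e3 : 0 ≤ τ * sz S / ((1/2) * sz (X i)) := by positivity
      exact mul_le_mul (e1.trans e2) hAjX (sz_nonneg _) e3
    have e2 : τ * sz S / ((1/2) * sz (X i)) * sz (X j) = 2 * τ * sz S * (sz (X j) / sz (X i)) := by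
      field_simp
    linarith
  have hb2 : sz (nbhd G S ∩ A' D j) ≤ 1/4 * sz (A' D j) := by
    refine hbad.le.trans ?_
    have := min_le_right (τ * sz S / sz (A' D i)) (1/4)
    have h0 := sz_nonneg (A' D j)
    gcongr
  by_cases hcase : sz (D i j ∪ S) ≤ γ * sz (X i)
  · -- enlarge
    let D' : ℕ → ℕ → Set V := fun a b => if a = i ∧ b = j then D i j ∪ S else D a b
    have hDD' : ∀ a b, D a b ⊆ D' a b := by
      intro a b
      by_cases h : a = i ∧ b = j
      · obtain ⟨rfl, rfl⟩ := h
        simp [D']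
      · simp [D', h]
    have hA'' : ∀ k, A' D' k ⊆ A' D k := by
      intro k
      apply Set.diff_subset_diff_right
      exact Set.iUnion₂_mono fun l _ => hDD' k l
    have hPD' : P D' := by
      intro a ha b hb hab
      by_cases h : a = i ∧ b = j
      · obtain ⟨rfl, rfl⟩ := h
        have e : D' a b = D a b ∪ S := by simp [D']
        rw [e]
        refine ⟨Set.union_subset hD1 (hS.trans Set.diff_subset), hcase, ?_⟩
        rw [nbhd_union, Set.union_inter_distrib_right]
        refine (sz_union_le _ _).trans ?_
        have q1 : sz (nbhd G (D a b) ∩ A' D' b) ≤ sz (nbhd G (D a b) ∩ A' D b) :=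
          sz_mono (Set.inter_subset_inter_right _ (hA'' b))
        have q2 : sz (nbhd G S ∩ A' D' b) ≤ sz (nbhd G S ∩ A' D b) :=
          sz_mono (Set.inter_subset_inter_right _ (hA'' b))
        rw [hszu, mul_add, add_mul]
        linarith
      · have e : D' a b = D a b := by simp [D', h]
        rw [e]
        obtain ⟨g1, g2, g3⟩ := hD a ha b hb hab
        exact ⟨g1, g2, (sz_mono (Set.inter_subset_inter_right _ (hA'' b))).trans g3⟩
    have hm := hmax D' hPD'
    have hlt : f D < f D' := by
      refine Finset.sum_lt_sum (fun a _ => Finset.sum_le_sum fun b _ =>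
        Set.ncard_le_ncard (hDD' a b) (Set.toFinite _)) ⟨i, hi, ?_⟩
      refine Finset.sum_lt_sum (fun b _ =>
        Set.ncard_le_ncard (hDD' i b) (Set.toFinite _)) ⟨j, hj, ?_⟩
      have e : D' i j = D i j ∪ S := by simp [D']
      rw [e]
      have : sz (D i j) < sz (D i j ∪ S) := by rw [hszu]; linarith
      unfold sz at this
      exact_mod_cast this
    omega
  · push Not at hcase
    have hnd' := hnd i hi j hj hij (D i j ∪ S)
      (Set.union_subset hD1 (hS.trans Set.diff_subset)) hcase.le
    have h1 := sz_inter_add_diff (A' D j) (nbhd G (D i j ∪ S))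
    have h2 : sz (A' D j \ nbhd G (D i j ∪ S)) ≤ sz (X j \ nbhd G (D i j ∪ S)) :=
      sz_mono (Set.diff_subset_diff_left Set.diff_subset)
    have h3 : sz (nbhd G (D i j ∪ S) ∩ A' D j) ≤
        sz (nbhd G (D i j) ∩ A' D j) + sz (nbhd G S ∩ A' D j) := by
      rw [nbhd_union, Set.union_inter_distrib_right]
      exact sz_union_le _ _
    have h4 : 2 * τ * sz (D i j) * (sz (X j) / sz (X i)) ≤ 1/8 * sz (X j) := by
      calc 2 * τ * sz (D i j) * (sz (X j) / sz (X i))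
          ≤ 2 * τ * (γ * sz (X i)) * (sz (X j) / sz (X i)) := by gcongr
        _ = (2 * τ * γ) * sz (X j) := by field_simp
        _ = _ := by rw [hτγ]
    have h5 : γ * sz (X j) ≤ 1/8 * sz (X j) := by gcongr
    linarith

end basics

section selectsec
variable {V : Type} [Fintype V] {G : SimpleGraph V}

lemma scale_exists (Λ x : ℝ) (r : ℕ) (hx1 : 1 ≤ x) (hr : 1 ≤ r) (hx : x ≤ Λ ^ r) :
    ∃ k < r, Λ ^ k ≤ x ∧ x ≤ Λ ^ (k+1) := by
  induction r with
  | zero => omega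
  | succ r ih =>
    by_cases h : x ≤ Λ ^ r
    · rcases Nat.eq_zero_or_pos r with h0 | h0
      · subst h0
        exact ⟨0, by omega, by simpa using hx1, by simpa using hx⟩
      · obtain ⟨k, hk, h1, h2⟩ := ih h0 h
        exact ⟨k, by omega, h1, h2⟩
    · push Not at h
      exact ⟨r, by omega, h.le, hx⟩

lemma pigeon_set {ι : Type*} (S : Finset ι) (D : Set V) (E : ι → Set V) (hS : S.Nonempty)
    (h : D ⊆ ⋃ k ∈ S, E k) : ∃ k ∈ S, sz D ≤ S.card * sz (E k ∩ D) := by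
  by_contra hcon
  push Not at hcon
  have h1 : sz D ≤ ∑ k ∈ S, sz (E k ∩ D) := by
    refine le_trans (sz_mono ?_) (sz_biUnion_le S (fun k => E k ∩ D))
    intro v hv
    have := h hv
    simp only [Set.mem_iUnion] at this ⊢
    obtain ⟨k, hk, hvk⟩ := this
    exact ⟨k, hk, hvk, hv⟩
  have h2 : ∑ k ∈ S, (S.card : ℝ) * sz (E k ∩ D) < ∑ k ∈ S, sz D :=
    Finset.sum_lt_sum_of_nonempty hS (fun k hk => hcon k hk)
  rw [← Finset.mul_sum, Finset.sum_const, nsmul_eq_mul] at h2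
  have h3 : (0:ℝ) < S.card := by exact_mod_cast hS.card_pos
  have h4 := lt_of_mul_lt_mul_left h2 h3.le
  linarith

lemma pigeon_fin {α ι : Type*} [DecidableEq ι] (R : Finset α) (S : Finset ι) (f : α → ι)
    (hS : S.Nonempty) (h : ∀ t ∈ R, f t ∈ S) :
    ∃ k ∈ S, R.card ≤ S.card * (R.filter (fun t => f t = k)).card := by
  by_contra hcon
  push Not at hcon
  have h1 := Finset.card_eq_sum_card_fiberwise (f := f) (s := R) (t := S) h
  have h2 : ∑ k ∈ S, S.card * (R.filter (fun t => f t = k)).card < ∑ k ∈ S, R.card :=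
    Finset.sum_lt_sum_of_nonempty hS (fun k hk => hcon k hk)
  rw [← Finset.mul_sum, ← h1, Finset.sum_const, smul_eq_mul] at h2
  omega

/-- a set as a finset -/
def fs (S : Set V) : Finset V := (Set.toFinite S).toFinset

lemma mem_fs (S : Set V) (v : V) : v ∈ fs S ↔ v ∈ S := by simp [fs]

lemma card_fs (S : Set V) : ((fs S).card : ℝ) = sz S := by
  unfold sz fs; rw [Set.ncard_eq_toFinset_card S]

open Classical in
lemma sz_eq_sum (S : Set V) : sz S = ∑ v : V, if v ∈ S then (1:ℝ) else 0 := by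
  unfold sz
  rw [Finset.sum_boole, Set.ncard_eq_toFinset_card' S]
  congr 2
  ext v; simp

open Classical in
lemma double_count (T U : Set V) :
    ∑ z ∈ (fs T), sz (nbhd G {z} ∩ U) = ∑ u ∈ (fs U), sz (nbhd G {u} ∩ T) := by
  have e : ∀ T U : Set V, ∑ z ∈ (fs T), sz (nbhd G {z} ∩ U)
      = ∑ z : V, ∑ u : V, if z ∈ T ∧ u ∈ U ∧ G.Adj z u then (1:ℝ) else 0 := by
    intro T U
    have : (fs T) = Finset.univ.filter (fun z => z ∈ T) := by ext; simp [mem_fs]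
    rw [this, Finset.sum_filter]
    refine Finset.sum_congr rfl fun z _ => ?_
    by_cases hz : z ∈ T
    · rw [if_pos hz, sz_eq_sum]
      refine Finset.sum_congr rfl fun u _ => ?_
      simp [hz, nbhd_singleton, and_comm]
    · simp [hz]
  rw [e, e, Finset.sum_comm]
  refine Finset.sum_congr rfl fun z _ => Finset.sum_congr rfl fun u _ => ?_
  have : (u ∈ T ∧ z ∈ U ∧ G.Adj u z) ↔ (z ∈ U ∧ u ∈ T ∧ G.Adj z u) := by
    rw [G.adj_comm]; tauto
  simp only [this]

lemma classes (T : Set V) (R : Finset ℕ) (D : ℕ → Set V) (Λ : ℝ) (r : ℕ) (hr : 1 ≤ r)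
    (hn : (Fintype.card V : ℝ) ≤ Λ ^ r) (hD : ∀ t ∈ R, D t ⊆ nbhd G T) :
    ∃ k < r, ∃ R' ⊆ R, ∃ D' : ℕ → Set V, R.card ≤ r * R'.card ∧
      ∀ t ∈ R', D' t ⊆ D t ∧ sz (D t) ≤ r * sz (D' t) ∧
        ∀ u ∈ D' t, Λ ^ k ≤ sz (nbhd G {u} ∩ T) ∧ sz (nbhd G {u} ∩ T) ≤ Λ ^ (k+1) := by
  classical
  let E : ℕ → Set V := fun k =>
    {u | Λ ^ k ≤ sz (nbhd G {u} ∩ T) ∧ sz (nbhd G {u} ∩ T) ≤ Λ ^ (k+1)}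
  have h0 : (Finset.range r).Nonempty := Finset.nonempty_range_iff.2 (by omega)
  have h1 : ∀ t, ∃ k, t ∈ R → k ∈ Finset.range r ∧ sz (D t) ≤ r * sz (E k ∩ D t) := by
    intro t
    by_cases ht : t ∈ R
    · have : D t ⊆ ⋃ k ∈ Finset.range r, E k := by
        intro u hu
        obtain ⟨x, hx, hxu⟩ := hD t ht hu
        have hne : (nbhd G {u} ∩ T).Nonempty := ⟨x, by
          rw [nbhd_singleton]; exact ⟨hxu.symm, hx⟩⟩
        obtain ⟨k, hk, ha, hb⟩ := scale_exists Λ (sz (nbhd G {u} ∩ T)) r (sz_one_le hne) hr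
          ((sz_le_card _).trans hn)
        simp only [Set.mem_iUnion]
        exact ⟨k, Finset.mem_range.2 hk, ha, hb⟩
      obtain ⟨k, hk, hs⟩ := pigeon_set _ _ _ h0 this
      refine ⟨k, fun _ => ⟨hk, ?_⟩⟩
      simpa using hs
    · exact ⟨0, fun h => absurd h ht⟩
  choose f hf using h1
  obtain ⟨k, hk, hc⟩ := pigeon_fin R (Finset.range r) f h0 (fun t ht => (hf t ht).1)
  refine ⟨k, Finset.mem_range.1 hk, R.filter (fun t => f t = k), Finset.filter_subset _ _,
    fun t => E k ∩ D t, by simpa using hc, ?_⟩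
  intro t ht
  rw [Finset.mem_filter] at ht
  refine ⟨Set.inter_subset_right, ?_, fun u hu => hu.1⟩
  have := (hf t ht.1).2
  rwa [ht.2] at this

lemma select (T : Set V) (R : Finset ℕ) (D : ℕ → Set V) (Λ : ℝ) (hΛ : 1 ≤ Λ) (k : ℕ)
    (hu : ∀ t ∈ R, ∀ u ∈ D t, Λ ^ k ≤ sz (nbhd G {u} ∩ T) ∧ sz (nbhd G {u} ∩ T) ≤ Λ ^ (k+1))
    (hne : ∀ t ∈ R, (D t).Nonempty)
    (hlk : ∀ t ∈ R, ∀ z ∈ T, sz (nbhd G {z} ∩ D t) ≤ 1/4 * sz (D t))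
    (t0 : ℕ) (ht0 : t0 ∈ R) :
    ∃ Z ⊆ T, sz (D t0) ≤ 8 * R.card * Λ * sz (nbhd G Z ∩ D t0) ∧
      ∀ t ∈ R, sz (nbhd G Z ∩ D t) ≤ 1/2 * sz (D t) := by
  classical
  have hpos : ∀ t ∈ R, 0 < sz (D t) := fun t ht => sz_pos (hne t ht)
  have hm : (1:ℝ) ≤ R.card := by exact_mod_cast Finset.card_pos.2 ⟨t0, ht0⟩
  let P : Set V → Prop := fun Z => Z ⊆ T ∧
    (∑ t ∈ R, sz (nbhd G Z ∩ D t) / sz (D t) ≤ 2 * R.card * Λ * (sz (nbhd G Z ∩ D t0) / sz (D t0))) ∧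
    ∀ t ∈ R, sz (nbhd G Z ∩ D t) ≤ 1/2 * sz (D t)
  obtain ⟨Z, ⟨hZT, hZs, hZh⟩, hmax⟩ := exists_max_nat P (fun Z => (nbhd G Z ∩ D t0).ncard)
    (Fintype.card V)
    (by
      intro Z _
      have := sz_le_card (nbhd G Z ∩ D t0)
      unfold sz at this
      exact_mod_cast this)
    ⟨∅, Set.empty_subset _, by simp [nbhd_empty, sz_empty], by
      intro t ht
      rw [nbhd_empty, Set.empty_inter, sz_empty]
      have := hpos t ht
      positivity⟩
  refine ⟨Z, hZT, ?_, hZh⟩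
  by_cases hbig : ∃ t ∈ R, 1/4 * sz (D t) ≤ sz (nbhd G Z ∩ D t)
  · obtain ⟨t, ht, hq⟩ := hbig
    have h1 : sz (nbhd G Z ∩ D t) / sz (D t) ≤ ∑ t ∈ R, sz (nbhd G Z ∩ D t) / sz (D t) :=
      Finset.single_le_sum (f := fun t => sz (nbhd G Z ∩ D t) / sz (D t))
        (fun i _ => div_nonneg (sz_nonneg _) (sz_nonneg _)) ht
    have h2 : 1/4 ≤ sz (nbhd G Z ∩ D t) / sz (D t) := by
      rw [le_div_iff₀ (hpos t ht)]; exact hq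
    have h3 := (h2.trans h1).trans hZs
    have h4 := hpos t0 ht0
    rw [← mul_div_assoc, le_div_iff₀ h4] at h3
    linarith
  · push Not at hbig
    exfalso
    let U : ℕ → Set V := fun t => D t \ nbhd G Z
    have hUsz : ∀ t ∈ R, 3/4 * sz (D t) ≤ sz (U t) := by
      intro t ht
      have := sz_inter_add_diff (D t) (nbhd G Z)
      have := hbig t ht
      show 3/4 * sz (D t) ≤ sz (D t \ nbhd G Z)
      linarith
    let w : ℕ → V → ℝ := fun t z => sz (nbhd G {z} ∩ U t) / sz (D t)
    have hw0 : ∀ t z, 0 ≤ w t z := fun t z => div_nonneg (sz_nonneg _) (sz_nonneg _)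
    have hcard : ∀ S : Set V, ((fs S).card : ℝ) = sz S := by
      exact card_fs
    have hΛk : 0 < Λ ^ k := by positivity
    have hsumw : ∀ t ∈ R, ∑ z ∈ (fs T), w t z = (∑ u ∈ (fs (U t)), sz (nbhd G {u} ∩ T)) / sz (D t) := by
      intro t ht
      rw [← double_count, Finset.sum_div]
    have hup : ∀ t ∈ R, ∑ z ∈ (fs T), w t z ≤ Λ ^ (k+1) := by
      intro t ht
      rw [hsumw t ht, div_le_iff₀ (hpos t ht)]
      calc ∑ u ∈ (fs (U t)), sz (nbhd G {u} ∩ T) ≤ ∑ u ∈ (fs (U t)), Λ ^ (k+1) := by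
            refine Finset.sum_le_sum fun u hu' => ?_
            rw [mem_fs] at hu'
            exact (hu t ht u hu'.1).2
        _ = Λ ^ (k+1) * sz (U t) := by rw [Finset.sum_const, nsmul_eq_mul, hcard, mul_comm]
        _ ≤ _ := by
          have : sz (U t) ≤ sz (D t) := sz_mono Set.sdiff_subset
          gcongr
    have hlow : 3/4 * Λ ^ k ≤ ∑ z ∈ (fs T), w t0 z := by
      rw [hsumw t0 ht0, le_div_iff₀ (hpos t0 ht0)]
      calc 3/4 * Λ ^ k * sz (D t0) = Λ ^ k * (3/4 * sz (D t0)) := by ring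
        _ ≤ Λ ^ k * sz (U t0) := by have := hUsz t0 ht0; gcongr
        _ = ∑ u ∈ (fs (U t0)), Λ ^ k := by
          rw [Finset.sum_const, nsmul_eq_mul, hcard, mul_comm]
        _ ≤ _ := by
            refine Finset.sum_le_sum fun u hu' => ?_
            rw [mem_fs] at hu'
            exact (hu t0 ht0 u hu'.1).1
    have hex : ∃ z ∈ T, 0 < w t0 z ∧ ∑ t ∈ R, w t z ≤ 2 * R.card * Λ * w t0 z := by
      by_contra hcon
      push Not at hcon
      have h1 : ∑ z ∈ (fs T), 2 * R.card * Λ * w t0 z ≤ ∑ z ∈ (fs T), ∑ t ∈ R, w t z := by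
        refine Finset.sum_le_sum fun z hz => ?_
        rw [mem_fs] at hz
        rcases (hw0 t0 z).eq_or_lt with h | h
        · rw [← h, mul_zero]
          exact Finset.sum_nonneg fun t _ => hw0 t z
        · exact (hcon z hz h).le
      rw [← Finset.mul_sum, Finset.sum_comm] at h1
      have h2 : ∑ t ∈ R, ∑ z ∈ (fs T), w t z ≤ R.card * Λ ^ (k+1) := by
        refine (Finset.sum_le_sum hup).trans ?_
        rw [Finset.sum_const, nsmul_eq_mul]
      have h3 : 2 * R.card * Λ * (3/4 * Λ ^ k) ≤ 2 * R.card * Λ * ∑ z ∈ (fs T), w t0 z := by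
        gcongr
      have h4 : (0:ℝ) < R.card * Λ ^ (k+1) := by positivity
      have h5 : 2 * R.card * Λ * (3/4 * Λ ^ k) = 3/2 * (R.card * Λ ^ (k+1)) := by ring
      linarith
    obtain ⟨z, hzT, hz0, hzs⟩ := hex
    have hdec : ∀ t ∈ R, sz (nbhd G (Z ∪ {z}) ∩ D t) = sz (nbhd G Z ∩ D t) + sz (nbhd G {z} ∩ U t) := by
      intro t ht
      rw [← sz_union_disj]
      · congr 1
        rw [nbhd_union]
        ext v
        simp only [U, Set.mem_inter_iff, Set.mem_union, Set.mem_sdiff]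
        tauto
      · rw [Set.disjoint_left]
        rintro v ⟨hv, _⟩ ⟨_, hv'⟩
        exact hv'.2 hv
    have hP : P (Z ∪ {z}) := by
      refine ⟨Set.union_subset hZT (by simpa using hzT), ?_, ?_⟩
      · have e1 : ∑ t ∈ R, sz (nbhd G (Z ∪ {z}) ∩ D t) / sz (D t) =
            ∑ t ∈ R, sz (nbhd G Z ∩ D t) / sz (D t) + ∑ t ∈ R, w t z := by
          rw [← Finset.sum_add_distrib]
          refine Finset.sum_congr rfl fun t ht => ?_
          rw [hdec t ht, add_div]
        rw [e1, hdec t0 ht0, add_div, mul_add]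
        exact add_le_add hZs hzs
      · intro t ht
        rw [hdec t ht]
        have h1 := hbig t ht
        have h2 : sz (nbhd G {z} ∩ U t) ≤ sz (nbhd G {z} ∩ D t) :=
          sz_mono (Set.inter_subset_inter_right _ Set.sdiff_subset)
        have h3 := hlk t ht z hzT
        linarith
    have := hmax _ hP
    have h1 : sz (nbhd G Z ∩ D t0) < sz (nbhd G (Z ∪ {z}) ∩ D t0) := by
      rw [hdec t0 ht0]
      have : 0 < sz (nbhd G {z} ∩ U t0) := by
        by_contra hh
        have : sz (nbhd G {z} ∩ U t0) = 0 := le_antisymm (not_lt.1 hh) (sz_nonneg _)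
        simp [w, this] at hz0
      linarith
    unfold sz at h1
    have h2 : (nbhd G Z ∩ D t0).ncard < (nbhd G (Z ∪ {z}) ∩ D t0).ncard := by exact_mod_cast h1
    exact absurd this (not_le.2 h2)

lemma step (T : Set V) (J : Finset ℕ) (W : ℕ → Set V) (Λ μ : ℝ) (r K : ℕ) (hr : 1 ≤ r)
    (hΛ : 1 ≤ Λ) (hn : (Fintype.card V : ℝ) ≤ Λ ^ r)
    (hne : ∀ t ∈ J, (W t).Nonempty)
    (hcov : ∀ t ∈ J, 1/2 * sz (W t) ≤ sz (nbhd G T ∩ W t))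
    (hlk : ∀ t ∈ J, Lk G μ T (W t)) (hμ0 : 0 ≤ μ) (hμ : 8 * r * μ ≤ 1)
    (hJ : r * (K + 1) ≤ J.card) :
    ∃ q ∈ J, ∃ J' ⊆ J, J'.card = K ∧ (∀ t ∈ J', q < t) ∧
      ∃ Z ⊆ T, Z.Nonempty ∧ ∃ Mn ⊆ nbhd G Z ∩ W q, sz (W q) ≤ 16 * r * (K + 1) * Λ * sz Mn ∧
      ∃ W' : ℕ → Set V, ∀ t ∈ J', W' t ⊆ W t \ nbhd G Z ∧ sz (W t) ≤ 4 * r * sz (W' t) := by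
  classical
  obtain ⟨k, hk, R, hRJ, D, hRc, hD⟩ := classes (G := G) T J (fun t => nbhd G T ∩ W t) Λ r hr hn
    (fun t _ => Set.inter_subset_left)
  have hRK : K + 1 ≤ R.card := by
    have : r * (K+1) ≤ r * R.card := hJ.trans hRc
    exact Nat.le_of_mul_le_mul_left this (by omega)
  obtain ⟨R', hR'R, hR'c⟩ := Finset.exists_subset_card_eq hRK
  have hR'ne : R'.Nonempty := Finset.card_pos.1 (by omega)
  have hrr : (1:ℝ) ≤ r := by exact_mod_cast hr
  have hDW : ∀ t ∈ R, sz (W t) ≤ 2 * r * sz (D t) := by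
    intro t ht
    have h1 := (hD t ht).2.1
    have h2 := hcov t (hRJ ht)
    linarith
  have hDpos : ∀ t ∈ R, 0 < sz (D t) := by
    intro t ht
    by_contra h
    have h0 : sz (D t) = 0 := le_antisymm (not_lt.1 h) (sz_nonneg _)
    have := hDW t ht
    rw [h0] at this
    have := sz_pos (hne t (hRJ ht))
    linarith
  set q := R'.min' hR'ne with hq
  have hqR' : q ∈ R' := Finset.min'_mem _ _
  obtain ⟨Z, hZT, hZ1, hZ2⟩ := select (G := G) T R' D Λ hΛ k
    (fun t ht => (hD t (hR'R ht)).2.2) (fun t ht => nonempty_of_sz (hDpos t (hR'R ht)))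
    (by
      intro t ht z hz
      have h1 := hlk t (hRJ (hR'R ht)) z hz
      have h2 : sz (nbhd G {z} ∩ D t) ≤ sz (nbhd G {z} ∩ W t) :=
        sz_mono (Set.inter_subset_inter_right _ (((hD t (hR'R ht)).1).trans Set.inter_subset_right))
      have h3 := hDW t (hR'R ht)
      have h4 : μ * sz (W t) ≤ μ * (2 * r * sz (D t)) := by gcongr
      have h5 : (8 * r * μ) * sz (D t) ≤ 1 * sz (D t) := by
        have := sz_nonneg (D t); gcongr
      linarith) q hqR'
  have hMpos : 0 < sz (nbhd G Z ∩ D q) := by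
    by_contra h
    have h0 : sz (nbhd G Z ∩ D q) = 0 := le_antisymm (not_lt.1 h) (sz_nonneg _)
    rw [h0, mul_zero] at hZ1
    have := hDpos q (hR'R hqR')
    linarith
  refine ⟨q, hRJ (hR'R hqR'), R'.erase q, (Finset.erase_subset _ _).trans (hR'R.trans hRJ), ?_, ?_,
    Z, hZT, ?_, nbhd G Z ∩ D q, ?_, ?_, fun t => D t \ nbhd G Z, ?_⟩
  · rw [Finset.card_erase_of_mem hqR', hR'c]; rfl
  · intro t ht
    have ht' := Finset.mem_erase.1 ht
    exact lt_of_le_of_ne (Finset.min'_le _ _ ht'.2) (Ne.symm ht'.1)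
  · obtain ⟨v, ⟨x, hx, _⟩, _⟩ := nonempty_of_sz hMpos
    exact ⟨x, hx⟩
  · exact Set.inter_subset_inter_right _ (((hD q (hR'R hqR')).1).trans Set.inter_subset_right)
  · have h1 := hDW q (hR'R hqR')
    rw [hR'c] at hZ1
    push_cast at hZ1
    calc sz (W q) ≤ 2 * r * sz (D q) := h1
      _ ≤ 2 * r * (8 * (K + 1) * Λ * sz (nbhd G Z ∩ D q)) := by gcongr
      _ = _ := by ring
  · intro t ht
    have ht' := (Finset.mem_erase.1 ht).2
    refine ⟨?_, ?_⟩
    · exact Set.sdiff_subset_sdiff_left (((hD t (hR'R ht')).1).trans Set.inter_subset_right)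
    · have h1 := hDW t (hR'R ht')
      have h2 := hZ2 t ht'
      have h3 := sz_inter_add_diff (D t) (nbhd G Z)
      have h4 : sz (D t) ≤ 2 * sz (D t \ nbhd G Z) := by linarith
      calc sz (W t) ≤ 2 * r * sz (D t) := h1
        _ ≤ 2 * r * (2 * sz (D t \ nbhd G Z)) := by gcongr
        _ = _ := by ring

end selectsec

section growth
variable {V : Type} [Fintype V]

/-- number of blocks needed to grow `b` more levels and keep `K` blocks -/
def Kf (r K : ℕ) : ℕ → ℕ
  | 0 => K
  | (b+1) => 2 * r ^ 2 * (Kf r K b + 1)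

/-- standing hypotheses for the growth lemma -/
structure GCtx (G : SimpleGraph V) (X0 : Set V) (z : V) (X W0 : ℕ → Set V) (J0 : Finset ℕ)
    (r b K : ℕ) (Λ κ τ ν lam dl : ℝ) : Prop where
  hr : 1 ≤ r
  hb : 1 ≤ b
  hn : (Fintype.card V : ℝ) ≤ Λ ^ r
  hz : z ∈ X0
  W0sub : ∀ t ∈ J0, W0 t ⊆ X t
  W0sz : ∀ t ∈ J0, κ * sz (X t) ≤ sz (W0 t)
  Xne : ∀ t ∈ J0, (X t).Nonempty
  exp0 : ∀ t ∈ J0, Exq G τ X0 (X t)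
  exp : ∀ q ∈ J0, ∀ t ∈ J0, q ≠ t → Exq G τ (X q) (X t)
  nd0 : ∀ t ∈ J0, NDp G ν X0 (X t)
  nd : ∀ q ∈ J0, ∀ t ∈ J0, q ≠ t → NDp G ν (X q) (X t)
  lk0 : ∀ t ∈ J0, Lk G lam X0 (X t)
  lk : ∀ q ∈ J0, ∀ t ∈ J0, q ≠ t → Lk G lam (X q) (X t)
  hJ0 : Kf r K b ≤ J0.card
  hdl : dl = 1 / (4 * r)
  hκ : 0 < κ
  hκ1 : κ ≤ 1
  hν : 0 ≤ ν
  hνΛ : ν * Λ ^ 5 ≤ 1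
  hΛ : 64 * r * (Kf r K b + 1) * (b + 1) ≤ Λ * (κ * dl ^ b)
  hlam : 0 ≤ lam
  hlamκ : 8 * r * lam ≤ κ * dl ^ b
  hτ : 4 * b * Λ ≤ τ
  hτn : (Fintype.card V : ℝ) < (τ / 2) ^ b

/-- a partially grown sequence of levels -/
structure GState (G : SimpleGraph V) (z : V) (X W0 : ℕ → Set V) (J0 : Finset ℕ)
    (κ lam dl : ℝ) (i : ℕ) (M : ℕ → Set V) (q : ℕ → ℕ) (J : Finset ℕ) (W : ℕ → Set V) :
    Prop where
  M0 : M 0 = {z}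
  Mq : ∀ h, 1 ≤ h → h ≤ i → q h ∈ J0 ∧ M h ⊆ X (q h)
  qlt : ∀ h h', 1 ≤ h → h < h' → h' ≤ i → q h < q h'
  cov : ∀ h, h < i → M (h+1) ⊆ nbhd G (M h)
  anti : ∀ h h', h + 2 ≤ h' → h' ≤ i → Disjoint (nbhd G (M h)) (M h')
  JJ0 : J ⊆ J0
  qJ : ∀ t ∈ J, ∀ h, 1 ≤ h → h ≤ i → q h < t
  Wsub : ∀ t ∈ J, W t ⊆ W0 t
  Wsz : ∀ t ∈ J, κ * dl ^ i * sz (X t) ≤ sz (W t)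
  Wanti : ∀ t ∈ J, ∀ h, h < i → Disjoint (nbhd G (M h)) (W t)
  lkM : ∀ t ∈ J, Lk G lam (M i) (X t)

variable {G : SimpleGraph V} {X0 : Set V} {z : V} {X W0 : ℕ → Set V} {J0 : Finset ℕ}
    {r b K : ℕ} {Λ κ τ ν lam dl : ℝ}

/-- union of the levels below `i` -/
def Mlt (M : ℕ → Set V) (i : ℕ) : Set V := ⋃ h ∈ Finset.range i, M h

lemma mem_nbhd_Mlt {M : ℕ → Set V} {i h : ℕ} (hh : h < i) : nbhd G (M h) ⊆ nbhd G (Mlt M i) := by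
  apply nbhd_mono
  intro v hv
  simp only [Mlt, Set.mem_iUnion]
  exact ⟨h, Finset.mem_range.2 hh, hv⟩

lemma Mlt_succ (M : ℕ → Set V) (i : ℕ) : Mlt M (i+1) = Mlt M i ∪ M i := by
  ext v
  simp only [Mlt, Set.mem_iUnion, Finset.mem_range, Set.mem_union]
  constructor
  · rintro ⟨h, hh, hv⟩
    rcases Nat.lt_succ_iff_lt_or_eq.1 hh with h1 | h1
    · exact Or.inl ⟨h, h1, hv⟩
    · subst h1; exact Or.inr hv
  · rintro (⟨h, hh, hv⟩ | hv)
    · exact ⟨h, by omega, hv⟩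
    · exact ⟨i, by omega, hv⟩

/-- replacing level `i` by `Z` and level `i+1` by `Mn` -/
def pushM (M : ℕ → Set V) (i : ℕ) (Z Mn : Set V) : ℕ → Set V :=
  fun h => if h = i + 1 then Mn else if h = i then Z else M h

lemma pushM_succ (M : ℕ → Set V) (i : ℕ) (Z Mn : Set V) : pushM M i Z Mn (i+1) = Mn := by
  simp [pushM]

lemma pushM_self (M : ℕ → Set V) (i : ℕ) (Z Mn : Set V) : pushM M i Z Mn i = Z := by
  simp [pushM]

lemma pushM_lt (M : ℕ → Set V) (i : ℕ) (Z Mn : Set V) (h : ℕ) (hh : h < i) :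
    pushM M i Z Mn h = M h := by
  have h1 : h ≠ i + 1 := by omega
  have h2 : h ≠ i := by omega
  simp [pushM, h1, h2]

lemma pushM_sub (M : ℕ → Set V) (i : ℕ) (Z Mn : Set V) (hZ : Z ⊆ M i) (h : ℕ) (hh : h ≤ i) :
    pushM M i Z Mn h ⊆ M h := by
  rcases hh.eq_or_lt with h1 | h1
  · subst h1; rw [pushM_self]; exact hZ
  · rw [pushM_lt _ _ _ _ _ h1]

lemma GState.push {i : ℕ} {M : ℕ → Set V} {q : ℕ → ℕ} {J : Finset ℕ} {W : ℕ → Set V}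
    (S : GState G z X W0 J0 κ lam dl i M q J W) (Z Mn : Set V) (hZ : Z ⊆ M i)
    (hZ0 : i = 0 → Z = {z}) (q' : ℕ) (hq' : q' ∈ J) (J' : Finset ℕ) (hJ' : J' ⊆ J)
    (hqJ' : ∀ t ∈ J', q' < t) (hMnX : Mn ⊆ X q') (hMnZ : Mn ⊆ nbhd G Z)
    (hMna : ∀ h < i, Disjoint (nbhd G (M h)) Mn) (W' : ℕ → Set V)
    (hW' : ∀ t ∈ J', W' t ⊆ W t \ nbhd G Z)
    (hW'sz : ∀ t ∈ J', κ * dl ^ (i+1) * sz (X t) ≤ sz (W' t))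
    (hlk : ∀ t ∈ J', Lk G lam Mn (X t)) :
    GState G z X W0 J0 κ lam dl (i+1) (pushM M i Z Mn)
      (fun h => if h = i + 1 then q' else q h) J' W' where
  M0 := by
    rcases Nat.eq_zero_or_pos i with h | h
    · rw [← hZ0 h]; subst h; rw [pushM_self]
    · rw [pushM_lt _ _ _ _ _ h, S.M0]
  Mq := by
    intro h h1 h2
    by_cases e : h = i + 1
    · subst e; rw [pushM_succ, if_pos rfl]
      exact ⟨S.JJ0 hq', hMnX⟩
    · rw [if_neg e]
      obtain ⟨g1, g2⟩ := S.Mq h h1 (by omega)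
      exact ⟨g1, (pushM_sub M i Z Mn hZ h (by omega)).trans g2⟩
  qlt := by
    intro h h' h1 h2 h3
    rw [if_neg (by omega : h ≠ i + 1)]
    by_cases e : h' = i + 1
    · rw [if_pos e]; exact S.qJ q' hq' h h1 (by omega)
    · rw [if_neg e]; exact S.qlt h h' h1 h2 (by omega)
  cov := by
    intro h hh
    by_cases e : h = i
    · subst e; rw [pushM_succ, pushM_self]; exact hMnZ
    · have hlt : h < i := by omega
      rw [pushM_lt _ _ _ _ _ hlt]
      exact (pushM_sub M i Z Mn hZ (h+1) (by omega)).trans (S.cov h hlt)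
  anti := by
    intro h h' h1 h2
    rw [pushM_lt _ _ _ _ _ (by omega : h < i)]
    by_cases e : h' = i + 1
    · subst e; rw [pushM_succ]; exact hMna h (by omega)
    · exact (S.anti h h' h1 (by omega)).mono_right (pushM_sub M i Z Mn hZ h' (by omega))
  JJ0 := hJ'.trans S.JJ0
  qJ := by
    intro t ht h h1 h2
    by_cases e : h = i + 1
    · rw [if_pos e]; exact hqJ' t ht
    · rw [if_neg e]; exact S.qJ t (hJ' ht) h h1 (by omega)
  Wsub := fun t ht => ((hW' t ht).trans Set.sdiff_subset).trans (S.Wsub t (hJ' ht))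
  Wsz := hW'sz
  Wanti := by
    intro t ht h hh
    by_cases e : h = i
    · subst e; rw [pushM_self, Set.disjoint_left]
      intro v hv hvW
      exact (hW' t ht hvW).2 hv
    · rw [pushM_lt _ _ _ _ _ (by omega : h < i)]
      exact (S.Wanti t (hJ' ht) h (by omega)).mono_right ((hW' t ht).trans Set.sdiff_subset)
  lkM := by
    intro t ht
    rw [pushM_succ]; exact hlk t ht

lemma GCtx.dl0 (C : GCtx G X0 z X W0 J0 r b K Λ κ τ ν lam dl) : 0 < dl := by
  rw [C.hdl]; have : (1:ℝ) ≤ r := by exact_mod_cast C.hr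
  positivity

lemma GCtx.rdl (C : GCtx G X0 z X W0 J0 r b K Λ κ τ ν lam dl) : 4 * r * dl = 1 := by
  rw [C.hdl]; have : (1:ℝ) ≤ r := by exact_mod_cast C.hr
  field_simp

lemma GCtx.dl1 (C : GCtx G X0 z X W0 J0 r b K Λ κ τ ν lam dl) : dl ≤ 1/4 := by
  have h := C.rdl
  have : (1:ℝ) ≤ r := by exact_mod_cast C.hr
  have := C.dl0
  nlinarith

lemma GCtx.dlpow (C : GCtx G X0 z X W0 J0 r b K Λ κ τ ν lam dl) {i : ℕ} (hi : i ≤ b) :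
    κ * dl ^ b ≤ κ * dl ^ i := by
  have h0 := C.dl0
  have h1 := C.dl1
  have h2 := C.hκ
  exact mul_le_mul_of_nonneg_left (pow_le_pow_of_le_one h0.le (by linarith) hi) h2.le

lemma GCtx.kd1 (C : GCtx G X0 z X W0 J0 r b K Λ κ τ ν lam dl) : κ * dl ^ b ≤ 1 := by
  have h0 := C.dl0
  have h1 := C.dl1
  have h2 := C.hκ
  have h3 := C.hκ1
  have : dl ^ b ≤ 1 := pow_le_one₀ h0.le (by linarith)
  nlinarith

lemma GCtx.kd0 (C : GCtx G X0 z X W0 J0 r b K Λ κ τ ν lam dl) (i : ℕ) : 0 < κ * dl ^ i := by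
  have h0 := C.dl0
  have h2 := C.hκ
  positivity

lemma GCtx.Λb (C : GCtx G X0 z X W0 J0 r b K Λ κ τ ν lam dl) : 64 * ((b:ℝ) + 1) ≤ Λ * (κ * dl ^ b) := by
  refine le_trans ?_ C.hΛ
  have h1 : (1:ℝ) ≤ r := by exact_mod_cast C.hr
  have h2 : (1:ℝ) ≤ (Kf r K b : ℝ) + 1 := by linarith [(Nat.cast_nonneg (Kf r K b) : (0:ℝ) ≤ _)]
  have h3 : (1:ℝ) ≤ r * ((Kf r K b : ℝ) + 1) := one_le_mul_of_one_le_of_one_le h1 h2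
  have h4 : (0:ℝ) ≤ (b:ℝ) + 1 := by positivity
  nlinarith

lemma GCtx.Λpos (C : GCtx G X0 z X W0 J0 r b K Λ κ τ ν lam dl) : 0 < Λ := by
  have h1 := C.Λb
  have h2 := C.kd0 b
  by_contra h
  push Not at h
  have : (0:ℝ) ≤ (b:ℝ) := Nat.cast_nonneg _
  nlinarith

lemma GCtx.Λ64 (C : GCtx G X0 z X W0 J0 r b K Λ κ τ ν lam dl) : 64 * ((b:ℝ) + 1) ≤ Λ := by
  have h1 := C.Λb
  have h2 := C.kd1
  have h3 := C.Λpos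
  nlinarith

/-- the level already sees half of every watcher -/
def GPost (G : SimpleGraph V) (M : ℕ → Set V) (J : Finset ℕ) (W : ℕ → Set V) (i : ℕ) : Prop :=
  ∀ t ∈ J, 1/2 * sz (W t) ≤ sz (nbhd G (M i) ∩ W t)

/-- the level is still small -/
def GPre (G : SimpleGraph V) (X : ℕ → Set V) (Λ τ : ℝ) (M : ℕ → Set V) (J : Finset ℕ) (i : ℕ) :
    Prop :=
  ∃ f : ℝ, (τ / 2) ^ i ≤ f * (Fintype.card V : ℝ) ∧ f * Λ ^ 3 ≤ 1 ∧ 0 < f ∧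
    ∀ t ∈ J, min (τ * f) (1/4) * sz (X t) ≤ sz (nbhd G (M i) ∩ X t) ∧
      sz (nbhd G (Mlt M i) ∩ X t) ≤ 2 * i * Λ * f * sz (X t)

lemma GCtx.post_of_nd (C : GCtx G X0 z X W0 J0 r b K Λ κ τ ν lam dl) {Mn : Set V} {q' t : ℕ}
    (hq' : q' ∈ J0) (ht : t ∈ J0) (hqt : q' ≠ t) (hMn : Mn ⊆ X q') (hsz : ν * sz (X q') ≤ sz Mn)
    {W' : Set V} {i : ℕ} (hi : i ≤ b) (hW' : W' ⊆ X t) (hWsz : κ * dl ^ i * sz (X t) ≤ sz W') :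
    1/2 * sz W' ≤ sz (nbhd G Mn ∩ W') := by
  have h1 := C.nd q' hq' t ht hqt Mn hMn hsz
  have h2 : sz (W' \ nbhd G Mn) ≤ sz (X t \ nbhd G Mn) := sz_mono (Set.sdiff_subset_sdiff_left hW')
  have h3 := sz_inter_add_diff W' (nbhd G Mn)
  have hΛ := C.Λ64
  have hΛ0 := C.Λpos
  have hb0 : (0:ℝ) ≤ b := Nat.cast_nonneg _
  have hx := sz_nonneg (X t)
  -- ν ≤ 1/2 κ dl^i
  have h4 : 2 * ν ≤ κ * dl ^ i := by
    refine le_trans ?_ (C.dlpow hi)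
    have e1 : (2:ℝ) ≤ Λ * (κ * dl ^ b) := by linarith [C.Λb]
    have e2 : ν * Λ ≤ 1 := by
      have : ν * Λ ≤ ν * Λ ^ 5 := by
        have := C.hν
        have : Λ ≤ Λ ^ 5 := le_self_pow₀ (by linarith) (by norm_num)
        gcongr
      linarith [C.hνΛ]
    calc 2 * ν ≤ Λ * (κ * dl ^ b) * ν := by have := C.hν; gcongr
      _ = (ν * Λ) * (κ * dl ^ b) := by ring
      _ ≤ 1 * (κ * dl ^ b) := by have := C.kd0 b; gcongr
      _ = _ := one_mul _
  have h5 : 2 * ν * sz (X t) ≤ κ * dl ^ i * sz (X t) := by gcongr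
  linarith

lemma GCtx.post_step (C : GCtx G X0 z X W0 J0 r b K Λ κ τ ν lam dl)
    {i : ℕ} {M : ℕ → Set V} {q : ℕ → ℕ} {J : Finset ℕ} {W : ℕ → Set V}
    (S : GState G z X W0 J0 κ lam dl i M q J W) (hi : i < b) (Jb : Finset ℕ) (hJb : Jb ⊆ J)
    (k' : ℕ) (hk' : k' ≤ Kf r K b) (hJc : r * (k' + 1) ≤ Jb.card)
    (hpost : GPost G M Jb W i) :
    ∃ M' q' J' W', GState G z X W0 J0 κ lam dl (i+1) M' q' J' W' ∧ J'.card = k' ∧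
      GPost G M' J' W' (i+1) := by
  have hΛ := C.Λ64
  have hΛ0 := C.Λpos
  have hb0 : (0:ℝ) ≤ b := Nat.cast_nonneg _
  have hr1 : (1:ℝ) ≤ r := by exact_mod_cast C.hr
  have hk := C.kd0 i
  have hWX : ∀ t ∈ J, W t ⊆ X t := fun t ht => (S.Wsub t ht).trans (C.W0sub t (S.JJ0 ht))
  have hWpos : ∀ t ∈ J, 0 < sz (W t) := by
    intro t ht
    have h1 := S.Wsz t ht
    have h2 := sz_pos (C.Xne t (S.JJ0 ht))
    have : 0 < κ * dl ^ i * sz (X t) := by positivity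
    linarith
  obtain ⟨q', hq', J', hJ', hJ'c, hqlt, Z, hZ, hZne, Mn, hMn, hMnsz, W', hW'⟩ :=
    step (G := G) (M i) Jb W Λ (lam / (κ * dl ^ i)) r k' C.hr (by linarith) C.hn
      (fun t ht => nonempty_of_sz (hWpos t (hJb ht))) hpost
      (fun t ht => (S.lkM t (hJb ht)).sub C.hlam hk subset_rfl (hWX t (hJb ht)) (S.Wsz t (hJb ht)))
      (div_nonneg C.hlam hk.le)
      (by
        rw [← mul_div_assoc, div_le_one hk]
        exact C.hlamκ.trans (C.dlpow hi.le)) hJc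
  have hqJ : q' ∈ J := hJb hq'
  have hMnX : Mn ⊆ X q' := (hMn.trans Set.inter_subset_right).trans (hWX q' hqJ)
  have hW'sz : ∀ t ∈ J', κ * dl ^ (i+1) * sz (X t) ≤ sz (W' t) := by
    intro t ht
    have h1 := (hW' t ht).2
    have h2 := S.Wsz t (hJb (hJ' ht))
    have h3 := C.rdl
    have h4 := C.dl0
    have h5 : dl * (κ * dl ^ i * sz (X t)) ≤ dl * (4 * r * sz (W' t)) := by
      have := h2.trans h1
      gcongr
    calc κ * dl ^ (i+1) * sz (X t) = dl * (κ * dl ^ i * sz (X t)) := by ring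
      _ ≤ dl * (4 * r * sz (W' t)) := h5
      _ = (4 * r * dl) * sz (W' t) := by ring
      _ = _ := by rw [h3, one_mul]
  have hMnν : ν * sz (X q') ≤ sz Mn := by
    have h1 := S.Wsz q' hqJ
    have h2 := h1.trans hMnsz
    set A : ℝ := 16 * r * ((k':ℝ) + 1) * Λ with hA
    have hA0 : 0 < A := by positivity
    have h3 : ν * A ≤ κ * dl ^ i := by
      refine le_trans ?_ (C.dlpow hi.le)
      have e1 : 16 * r * ((k':ℝ) + 1) ≤ Λ * (κ * dl ^ b) := by
        refine le_trans ?_ C.hΛ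
        have g1 : ((k':ℝ) + 1) ≤ (Kf r K b : ℝ) + 1 := by
          have : (k':ℝ) ≤ Kf r K b := by exact_mod_cast hk'
          linarith
        have g2 : (1:ℝ) ≤ (b:ℝ) + 1 := by linarith
        have g3 : (0:ℝ) ≤ r * ((Kf r K b : ℝ) + 1) := by positivity
        calc 16 * r * ((k':ℝ) + 1) ≤ 16 * r * ((Kf r K b : ℝ) + 1) := by gcongr
          _ ≤ 64 * r * ((Kf r K b : ℝ) + 1) * (b + 1) := by nlinarith
      have e2 : ν * Λ ^ 2 ≤ 1 := by
        have : ν * Λ ^ 2 ≤ ν * Λ ^ 5 := by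
          have := C.hν
          have : Λ ^ 2 ≤ Λ ^ 5 := pow_le_pow_right₀ (by linarith) (by norm_num)
          gcongr
        linarith [C.hνΛ]
      calc ν * A = (16 * r * ((k':ℝ) + 1)) * (ν * Λ) := by rw [hA]; ring
        _ ≤ Λ * (κ * dl ^ b) * (ν * Λ) := by have := C.hν; gcongr
        _ = (ν * Λ ^ 2) * (κ * dl ^ b) := by ring
        _ ≤ 1 * (κ * dl ^ b) := by have := C.kd0 b; gcongr
        _ = _ := one_mul _
    have h4 : A * (ν * sz (X q')) ≤ A * sz Mn := by
      have := sz_nonneg (X q')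
      calc A * (ν * sz (X q')) = (ν * A) * sz (X q') := by ring
        _ ≤ κ * dl ^ i * sz (X q') := by gcongr
        _ ≤ _ := h2
    exact le_of_mul_le_mul_left h4 hA0
  refine ⟨_, _, J', W', S.push Z Mn hZ ?_ q' hqJ J' (hJ'.trans hJb) hqlt hMnX
    (hMn.trans Set.inter_subset_left) ?_ W' (fun t ht => (hW' t ht).1) hW'sz ?_, hJ'c, ?_⟩
  · intro h0
    subst h0
    rw [S.M0] at hZ
    exact (Set.subset_singleton_iff_eq.1 hZ).resolve_left hZne.ne_empty
  · intro h hh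
    exact (S.Wanti q' hqJ h hh).mono_right (hMn.trans Set.inter_subset_right)
  · intro t ht v hv
    exact C.lk q' (S.JJ0 hqJ) t (S.JJ0 (hJb (hJ' ht))) (hqlt t ht).ne v (hMnX hv)
  · intro t ht
    rw [pushM_succ]
    exact C.post_of_nd (S.JJ0 hqJ) (S.JJ0 (hJb (hJ' ht))) (hqlt t ht).ne hMnX hMnν (i := i+1)
      (by omega) (((hW' t ht).1.trans Set.sdiff_subset).trans (hWX t (hJb (hJ' ht)))) (hW'sz t ht)

end growth

section growth2
variable {V : Type} [Fintype V]
variable {G : SimpleGraph V} {X0 : Set V} {z : V} {X W0 : ℕ → Set V} {J0 : Finset ℕ}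
    {r b K : ℕ} {Λ κ τ ν lam dl : ℝ}

lemma GCtx.direct (C : GCtx G X0 z X W0 J0 r b K Λ κ τ ν lam dl)
    {i : ℕ} {M : ℕ → Set V} {q : ℕ → ℕ} {J : Finset ℕ} {W : ℕ → Set V}
    (S : GState G z X W0 J0 κ lam dl i M q J W) (Jb : Finset ℕ) (hJb : Jb ⊆ J)
    (k' : ℕ) (hJc : k' + 1 ≤ Jb.card)
    (hsm : ∀ t ∈ Jb, sz (nbhd G (M i) ∩ W t) ≤ 1/2 * sz (W t)) :
    ∃ q0 ∈ Jb, ∃ J' ⊆ Jb, J'.card = k' ∧ (∀ t ∈ J', q0 < t) ∧ ∃ q' : ℕ → ℕ,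
      GState G z X W0 J0 κ lam dl (i+1)
        (pushM M i (M i) ((nbhd G (M i) ∩ X q0) \ nbhd G (Mlt M i))) q' J'
        (fun t => W t \ nbhd G (M i)) := by
  classical
  obtain ⟨R', hR'R, hR'c⟩ := Finset.exists_subset_card_eq hJc
  have hR'ne : R'.Nonempty := Finset.card_pos.1 (by omega)
  set q0 := R'.min' hR'ne with hq
  have hqR' : q0 ∈ R' := Finset.min'_mem _ _
  have hlt : ∀ t ∈ R'.erase q0, q0 < t := by
    intro t ht
    have ht' := Finset.mem_erase.1 ht
    exact lt_of_le_of_ne (Finset.min'_le _ _ ht'.2) (Ne.symm ht'.1)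
  have hsub : R'.erase q0 ⊆ Jb := (Finset.erase_subset _ _).trans hR'R
  refine ⟨q0, hR'R hqR', R'.erase q0, hsub, ?_, hlt, _,
    S.push (M i) _ subset_rfl ?_ q0 (hJb (hR'R hqR')) (R'.erase q0) (hsub.trans hJb) hlt
      ?_ ?_ ?_ _ (fun t _ => subset_rfl) ?_ ?_⟩
  · rw [Finset.card_erase_of_mem hqR', hR'c]; rfl
  · intro h; rw [h]; exact S.M0
  · exact Set.sdiff_subset.trans Set.inter_subset_right
  · exact Set.sdiff_subset.trans Set.inter_subset_left
  · intro h hh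
    rw [Set.disjoint_left]
    intro v hv hv'
    exact hv'.2 (mem_nbhd_Mlt hh hv)
  · intro t ht
    have h1 := hsm t (hsub ht)
    have h2 := S.Wsz t (hJb (hsub ht))
    have h3 := sz_inter_add_diff (W t) (nbhd G (M i))
    have h4 := C.dl0
    have h5 := C.dl1
    have h6 : 0 ≤ κ * dl ^ i * sz (X t) := mul_nonneg (C.kd0 i).le (sz_nonneg _)
    calc κ * dl ^ (i+1) * sz (X t) = dl * (κ * dl ^ i * sz (X t)) := by ring
      _ ≤ 1/4 * (κ * dl ^ i * sz (X t)) := by gcongr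
      _ ≤ _ := by linarith
  · intro t ht v hv
    exact C.lk q0 (S.JJ0 (hJb (hR'R hqR'))) t (S.JJ0 (hJb (hsub ht))) (hlt t ht).ne v hv.1.2

lemma Kf_mono_b (r K : ℕ) (hr : 1 ≤ r) {a b : ℕ} (h : a ≤ b) : Kf r K a ≤ Kf r K b := by
  induction h with
  | refl => exact le_rfl
  | step h ih =>
    refine ih.trans ?_
    show _ ≤ 2 * r ^ 2 * (Kf r K _ + 1)
    have : 1 ≤ r ^ 2 := Nat.one_le_pow _ _ hr
    nlinarith

set_option maxHeartbeats 1600000 in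
lemma GCtx.pre_step (C : GCtx G X0 z X W0 J0 r b K Λ κ τ ν lam dl)
    {i : ℕ} {M : ℕ → Set V} {q : ℕ → ℕ} {J : Finset ℕ} {W : ℕ → Set V}
    (S : GState G z X W0 J0 κ lam dl i M q J W) (hi : i < b)
    (k' : ℕ) (hk' : k' ≤ Kf r K b) (hJc : 2 * r ^ 2 * (k' + 1) ≤ J.card)
    (hpre : GPre G X Λ τ M J i) :
    ∃ M' q' J' W', GState G z X W0 J0 κ lam dl (i+1) M' q' J' W' ∧ J'.card = k' ∧
      (GPre G X Λ τ M' J' (i+1) ∨ GPost G M' J' W' (i+1)) := by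
  classical
  obtain ⟨f, hf1, hf2, hf0, hf⟩ := hpre
  have hΛ := C.Λ64
  have hΛ0 := C.Λpos
  have hb0 : (0:ℝ) ≤ b := Nat.cast_nonneg _
  have hb1 : (1:ℝ) ≤ b := by exact_mod_cast C.hb
  have hib : (i:ℝ) + 1 ≤ b := by exact_mod_cast hi
  have hi0 : (0:ℝ) ≤ i := Nat.cast_nonneg _
  have hr1 : (1:ℝ) ≤ r := by exact_mod_cast C.hr
  have hk := C.kd0 i
  have hΛ1 : 1 ≤ Λ := by linarith
  have hτ := C.hτ
  have hτΛ : Λ ≤ τ := by nlinarith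
  have hτ2 : 2 ≤ τ := by linarith
  have hτ0 : 0 < τ := by linarith
  have hWX : ∀ t ∈ J, W t ⊆ X t := fun t ht => (S.Wsub t ht).trans (C.W0sub t (S.JJ0 ht))
  have hXpos : ∀ t ∈ J, 0 < sz (X t) := fun t ht => sz_pos (C.Xne t (S.JJ0 ht))
  have hXn : ∀ t, sz (X t) ≤ (Fintype.card V : ℝ) := fun t => sz_le_card _
  set n : ℝ := (Fintype.card V : ℝ) with hndef
  set g : ℕ → ℝ := fun t => sz (nbhd G (M i) ∩ X t) with hg
  have hgpos : ∀ t ∈ J, 1 ≤ g t := by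
    intro t ht
    apply sz_one_le
    apply nonempty_of_sz
    refine lt_of_lt_of_le ?_ (hf t ht).1
    have := hXpos t ht
    positivity
  -- half bound
  have hhalf : ∀ t ∈ J, sz (nbhd G (Mlt M i) ∩ X t) ≤ 1/2 * g t := by
    intro t ht
    obtain ⟨h1, h2⟩ := hf t ht
    have hx := hXpos t ht
    have e : 2 * i * Λ * f ≤ 1/2 * min (τ * f) (1/4) := by
      rcases min_cases (τ * f) (1/4) with ⟨e1, _⟩ | ⟨e1, _⟩
      · rw [e1]
        have : 4 * i * Λ ≤ τ := by nlinarith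
        nlinarith
      · rw [e1]
        have q1 : 2 * (i:ℝ) ≤ 1/8 * Λ ^ 2 := by nlinarith
        have q2 : 2 * i * Λ * f ≤ 1/8 * Λ^2 * Λ * f := by gcongr
        have q3 : 1/8 * Λ^2 * Λ * f = 1/8 * (f * Λ^3) := by ring
        linarith
    calc sz (nbhd G (Mlt M i) ∩ X t) ≤ 2 * i * Λ * f * sz (X t) := h2
      _ ≤ 1/2 * min (τ * f) (1/4) * sz (X t) := by gcongr
      _ ≤ 1/2 * g t := by show _ ≤ 1/2 * sz (nbhd G (M i) ∩ X t); linarith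
  have hMnsz : ∀ t ∈ J, 1/2 * g t ≤ sz ((nbhd G (M i) ∩ X t) \ nbhd G (Mlt M i)) := by
    intro t ht
    have h1 := sz_inter_add_diff (nbhd G (M i) ∩ X t) (nbhd G (Mlt M i))
    have h2 : sz (nbhd G (Mlt M i) ∩ (nbhd G (M i) ∩ X t)) ≤ sz (nbhd G (Mlt M i) ∩ X t) :=
      sz_mono (Set.inter_subset_inter_right _ Set.inter_subset_right)
    have h3 := hhalf t ht
    have h4 : g t = sz (nbhd G (M i) ∩ X t) := rfl
    linarith
  -- scales
  have hn0 : 0 < n := by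
    have hJne : J.Nonempty := by
      rw [← Finset.card_pos]
      have : 0 < 2 * r ^ 2 * (k' + 1) := by have := C.hr; positivity
      omega
    obtain ⟨t, ht⟩ := hJne
    exact lt_of_lt_of_le (hXpos t ht) (hXn t)
  have hsc : ∀ t, ∃ k, t ∈ J → k ∈ Finset.range r ∧ Λ ^ k ≤ n * (g t / sz (X t)) ∧
      n * (g t / sz (X t)) ≤ Λ ^ (k+1) := by
    intro t
    by_cases ht : t ∈ J
    · have hx := hXpos t ht
      have h1 : 1 ≤ n * (g t / sz (X t)) := by
        rw [← mul_div_assoc, le_div_iff₀ hx]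
        have := hgpos t ht
        have := hXn t
        nlinarith
      have h2 : n * (g t / sz (X t)) ≤ Λ ^ r := by
        refine le_trans ?_ C.hn
        have : g t / sz (X t) ≤ 1 := by
          rw [div_le_one hx]; exact sz_mono Set.inter_subset_right
        nlinarith
      obtain ⟨k, hk, h3, h4⟩ := scale_exists Λ _ r h1 C.hr h2
      exact ⟨k, fun _ => ⟨Finset.mem_range.2 hk, h3, h4⟩⟩
    · exact ⟨0, fun h => absurd h ht⟩
  choose kk hkk using hsc
  obtain ⟨k, hk, hc⟩ := pigeon_fin J (Finset.range r) kk
    (Finset.nonempty_range_iff.2 (by have := C.hr; omega)) (fun t ht => (hkk t ht).1)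
  set R := J.filter (fun t => kk t = k) with hR
  have hRJ : R ⊆ J := Finset.filter_subset _ _
  rw [Finset.card_range] at hc
  have hRc : 2 * r * (k' + 1) ≤ R.card := by
    have : r * (2 * r * (k'+1)) ≤ r * R.card := by
      refine le_trans (le_of_eq ?_) (hJc.trans hc)
      ring
    exact Nat.le_of_mul_le_mul_left this (by have := C.hr; omega)
  set gg : ℝ := Λ ^ k / n with hgg
  have hgg0 : 0 < gg := by positivity
  have hgl : ∀ t ∈ R, gg * sz (X t) ≤ g t := by
    intro t ht
    obtain ⟨h1, h2⟩ := Finset.mem_filter.1 ht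
    have hx := hXpos t h1
    have := (hkk t h1).2.1
    rw [h2] at this
    rw [hgg, div_mul_eq_mul_div, div_le_iff₀ hn0]
    rw [← mul_div_assoc, le_div_iff₀ hx] at this
    linarith
  have hgu : ∀ t ∈ R, g t ≤ Λ * gg * sz (X t) := by
    intro t ht
    obtain ⟨h1, h2⟩ := Finset.mem_filter.1 ht
    have hx := hXpos t h1
    have := (hkk t h1).2.2
    rw [h2] at this
    rw [← mul_div_assoc, div_le_iff₀ hx] at this
    have e : Λ * gg * sz (X t) = Λ ^ (k+1) * sz (X t) / n := by rw [hgg]; field_simp; ring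
    rw [e, le_div_iff₀ hn0]
    linarith
  by_cases hA : gg * Λ ^ 4 < 1
  · -- Case A
    have hsm : ∀ t ∈ R, sz (nbhd G (M i) ∩ W t) ≤ 1/2 * sz (W t) := by
      intro t ht
      have htJ := hRJ ht
      have h1 : sz (nbhd G (M i) ∩ W t) ≤ g t :=
        sz_mono (Set.inter_subset_inter_right _ (hWX t htJ))
      have h2 := hgu t ht
      have h3 := S.Wsz t htJ
      have hx := hXpos t htJ
      have h4 : Λ * gg ≤ 1/2 * (κ * dl ^ i) := by
        refine le_trans ?_ (mul_le_mul_of_nonneg_left (C.dlpow hi.le) (by norm_num))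
        have e1 : (2:ℝ) ≤ Λ * (κ * dl ^ b) := by linarith [C.Λb]
        have e2 : gg * Λ ^ 2 ≤ 1 := by
          have : gg * Λ ^ 2 ≤ gg * Λ ^ 4 := by
            have : Λ ^ 2 ≤ Λ ^ 4 := pow_le_pow_right₀ hΛ1 (by norm_num)
            gcongr
          linarith
        have e3 := C.kd0 b
        calc Λ * gg = 1/2 * (2 * (Λ * gg)) := by ring
          _ ≤ 1/2 * ((Λ * (κ * dl ^ b)) * (Λ * gg)) := by gcongr
          _ = 1/2 * ((gg * Λ ^ 2) * (κ * dl ^ b)) := by ring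
          _ ≤ 1/2 * (1 * (κ * dl ^ b)) := by gcongr
          _ = _ := by ring
      have h5 : Λ * gg * sz (X t) ≤ 1/2 * (κ * dl ^ i) * sz (X t) := by gcongr
      linarith
    obtain ⟨q0, hq0, J', hJ', hJ'c, hlt, q', S'⟩ := C.direct S R hRJ k'
      (by
        have h1 := C.hr
        nlinarith) hsm
    refine ⟨_, q', J', _, S', hJ'c, Or.inl ?_⟩
    set Mn := (nbhd G (M i) ∩ X q0) \ nbhd G (Mlt M i) with hMn
    have hq0J := hRJ hq0
    have hx0 := hXpos q0 hq0J
    have hfl : 1/2 * gg ≤ sz Mn / sz (X q0) := by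
      rw [le_div_iff₀ hx0]
      have h1 := hMnsz q0 hq0J
      have h2 := hgl q0 hq0
      linarith
    have hfu : sz Mn / sz (X q0) ≤ Λ * gg := by
      rw [div_le_iff₀ hx0]
      exact (sz_mono Set.sdiff_subset).trans (hgu q0 hq0)
    have hΛgg : Λ * gg * Λ ^ 3 ≤ 1 := by
      have : Λ * gg * Λ ^ 3 = gg * Λ ^ 4 := by ring
      linarith
    have hτf : τ / 2 * f ≤ sz Mn / sz (X q0) := by
      rw [le_div_iff₀ hx0]
      have h1 := hMnsz q0 hq0J
      have h2 := (hf q0 hq0J).1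
      have h3 := hgu q0 hq0
      have hmin : min (τ * f) (1/4) = τ * f := by
        rcases min_cases (τ * f) (1/4) with ⟨e1, _⟩ | ⟨e1, _⟩
        · exact e1
        · exfalso
          rw [e1] at h2
          have e2 : 1/4 * sz (X q0) ≤ Λ * gg * sz (X q0) := h2.trans h3
          have e3 := le_of_mul_le_mul_right e2 hx0
          have e4 : (64:ℝ) ≤ Λ ^ 3 := by
            have : Λ ≤ Λ ^ 3 := le_self_pow₀ hΛ1 (by norm_num)
            linarith
          nlinarith
      rw [hmin] at h2
      have h4 : g q0 = sz (nbhd G (M i) ∩ X q0) := rfl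
      linarith
    refine ⟨sz Mn / sz (X q0), ?_, ?_, ?_, ?_⟩
    · calc (τ/2) ^ (i+1) = τ/2 * (τ/2)^i := by ring
        _ ≤ τ/2 * (f * n) := by gcongr
        _ = (τ/2 * f) * n := by ring
        _ ≤ _ := by gcongr
    · refine le_trans ?_ hΛgg
      gcongr
    · refine lt_of_lt_of_le ?_ hfl
      positivity
    · intro t ht
      have htR := hJ' ht
      have htJ := hRJ htR
      have hx := hXpos t htJ
      constructor
      · rw [pushM_succ]
        have := C.exp q0 (S.JJ0 hq0J) t (S.JJ0 htJ) (hlt t ht).ne Mn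
          (Set.sdiff_subset.trans Set.inter_subset_right)
        rwa [mul_div_assoc] at this
      · rw [Mlt_succ, pushM_self]
        have hMltsame : Mlt (pushM M i (M i) Mn) i = Mlt M i := by
          unfold Mlt
          refine Set.iUnion₂_congr fun h hh => ?_
          exact pushM_lt _ _ _ _ _ (Finset.mem_range.1 hh)
        rw [hMltsame, nbhd_union, Set.union_inter_distrib_right]
        refine (sz_union_le _ _).trans ?_
        have h1 := (hf t htJ).2
        have h2 := hgu t htR
        have h3 : g t = sz (nbhd G (M i) ∩ X t) := rfl
        have hff : f ≤ sz Mn / sz (X q0) := by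
          have : f ≤ τ/2 * f := by nlinarith
          linarith
        set f' := sz Mn / sz (X q0) with hf'
        have e1 : 2 * i * Λ * f ≤ 2 * i * Λ * f' := by gcongr
        have e2 : Λ * gg ≤ 2 * Λ * f' := by nlinarith
        have e3 : 2 * i * Λ * f * sz (X t) ≤ 2 * i * Λ * f' * sz (X t) := by gcongr
        have e4 : Λ * gg * sz (X t) ≤ 2 * Λ * f' * sz (X t) := by gcongr
        push_cast
        have e5 : 2 * ((i:ℝ) + 1) * Λ * f' * sz (X t) =
          2 * i * Λ * f' * sz (X t) + 2 * Λ * f' * sz (X t) := by ring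
        rw [e5]
        linarith
  · -- Case B
    push Not at hA
    set Jbig := R.filter (fun t => 1/2 * sz (W t) ≤ sz (nbhd G (M i) ∩ W t)) with hJbig
    set Jsm := R.filter (fun t => ¬ (1/2 * sz (W t) ≤ sz (nbhd G (M i) ∩ W t))) with hJsm
    have hsum : Jbig.card + Jsm.card = R.card := Finset.card_filter_add_card_filter_not _
    by_cases hbig : r * (k'+1) ≤ Jbig.card
    · obtain ⟨M', q', J', W', S', hc', hp'⟩ := C.post_step S hi Jbig
        ((Finset.filter_subset _ _).trans hRJ) k' hk' hbig
        (fun t ht => (Finset.mem_filter.1 ht).2)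
      exact ⟨M', q', J', W', S', hc', Or.inr hp'⟩
    · have hsmc : k' + 1 ≤ Jsm.card := by
        have h1 := C.hr
        have : 2 * (r * (k'+1)) ≤ R.card := by linarith [hRc, mul_assoc 2 r (k'+1)]
        have h3 : 1 * (k'+1) ≤ r * (k'+1) := Nat.mul_le_mul_right _ h1
        omega
      have hJsmR : Jsm ⊆ R := Finset.filter_subset _ _
      obtain ⟨q0, hq0, J', hJ', hJ'c, hlt, q', S'⟩ := C.direct S Jsm (hJsmR.trans hRJ) k' hsmc
        (fun t ht => (not_le.1 (Finset.mem_filter.1 ht).2).le)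
      refine ⟨_, q', J', _, S', hJ'c, Or.inr ?_⟩
      set Mn := (nbhd G (M i) ∩ X q0) \ nbhd G (Mlt M i) with hMn
      have hq0J := hRJ (hJsmR hq0)
      have hx0 := hXpos q0 hq0J
      have hν : ν * sz (X q0) ≤ sz Mn := by
        have h1 := hMnsz q0 hq0J
        have h2 := hgl q0 (hJsmR hq0)
        have h3 : ν ≤ 1/2 * gg := by
          have e0 : (0:ℝ) < Λ ^ 5 := by positivity
          have e1 : 1 ≤ 1/2 * gg * Λ ^ 5 := by
            have : 1/2 * gg * Λ ^ 5 = 1/2 * Λ * (gg * Λ^4) := by ring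
            rw [this]
            nlinarith
          have e2 : ν * Λ ^ 5 ≤ 1/2 * gg * Λ ^ 5 := C.hνΛ.trans e1
          exact le_of_mul_le_mul_right e2 e0
        have h4 : ν * sz (X q0) ≤ 1/2 * gg * sz (X q0) := by gcongr
        linarith
      intro t ht
      have htJ := hRJ (hJsmR (hJ' ht))
      rw [pushM_succ]
      exact C.post_of_nd (S.JJ0 hq0J) (S.JJ0 htJ) (hlt t ht).ne
        (Set.sdiff_subset.trans Set.inter_subset_right) hν (i := i+1) (by omega)
        (Set.sdiff_subset.trans (hWX t htJ)) (S'.Wsz t ht)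

lemma GCtx.start (C : GCtx G X0 z X W0 J0 r b K Λ κ τ ν lam dl) :
    GState G z X W0 J0 κ lam dl 0 (fun _ => {z}) (fun _ => 0) J0 W0 ∧
      GPre G X Λ τ (fun _ => {z}) J0 0 := by
  have hΛ := C.Λ64
  have hΛ0 := C.Λpos
  have hb0 : (0:ℝ) ≤ b := Nat.cast_nonneg _
  refine ⟨⟨rfl, by intro h h1 h2; omega, by intro h h' h1 h2 h3; omega, by intro h hh; omega,
    by intro h h' h1 h2; omega, subset_rfl, by intro t ht h h1 h2; omega, fun t _ => subset_rfl,
    ?_, by intro t ht h hh; omega, ?_⟩, ?_⟩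
  · intro t ht; simpa using C.W0sz t ht
  · intro t ht v hv
    rw [Set.mem_singleton_iff] at hv
    subst hv
    exact C.lk0 t ht v C.hz
  · have hX0 : 0 < sz X0 := sz_pos ⟨z, C.hz⟩
    have hJ0ne : J0.Nonempty := by
      rw [← Finset.card_pos]
      refine lt_of_lt_of_le ?_ C.hJ0
      obtain ⟨b', rfl⟩ : ∃ b', b = b' + 1 := ⟨b - 1, by have := C.hb; omega⟩
      show 0 < 2 * r ^ 2 * (Kf r K b' + 1)
      have := C.hr
      positivity
    refine ⟨1 / sz X0, ?_, ?_, by positivity, ?_⟩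
    · rw [pow_zero, div_mul_eq_mul_div, one_mul, le_div_iff₀ hX0, one_mul]
      exact sz_le_card _
    · by_contra hcon
      push Not at hcon
      rw [div_mul_eq_mul_div, one_mul, lt_div_iff₀ hX0, one_mul] at hcon
      obtain ⟨t, ht⟩ := hJ0ne
      have hx := sz_pos (C.Xne t ht)
      have hν1 : ν * Λ ^ 3 ≤ 1 := by
        have : ν * Λ ^ 3 ≤ ν * Λ ^ 5 := by
          have := C.hν
          have : Λ ^ 3 ≤ Λ ^ 5 := pow_le_pow_right₀ (by linarith) (by norm_num)
          gcongr
        linarith [C.hνΛ]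
      have h1 := C.nd0 t ht {z} (by simpa using C.hz) (by
        rw [sz_singleton]
        refine le_trans ?_ hν1
        have := C.hν
        gcongr)
      have h2 := C.lk0 t ht z C.hz
      have h3 := sz_inter_add_diff (X t) (nbhd G {z})
      have h4 : lam ≤ 1/8 := by
        have := C.hlamκ
        have := C.kd1
        have hr1 : (1:ℝ) ≤ r := by exact_mod_cast C.hr
        have := C.hlam
        nlinarith
      have h5 : ν ≤ 1/2 := by
        have e : (64:ℝ) ≤ Λ ^ 3 := by
          have : Λ ≤ Λ ^ 3 := le_self_pow₀ (by linarith) (by norm_num)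
          linarith
        have := C.hν
        nlinarith
      have h6 : lam * sz (X t) ≤ 1/8 * sz (X t) := by gcongr
      have h7 : ν * sz (X t) ≤ 1/2 * sz (X t) := by gcongr
      linarith
    · intro t ht
      constructor
      · have := C.exp0 t ht {z} (by simpa using C.hz)
        rw [sz_singleton, mul_div_assoc] at this
        exact this
      · have : Mlt (fun _ => ({z} : Set V)) 0 = ∅ := by simp [Mlt]
        rw [this, nbhd_empty, Set.empty_inter, sz_empty]
        simp

/-- The growth lemma. -/
lemma growth (C : GCtx G X0 z X W0 J0 r b K Λ κ τ ν lam dl) :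
    ∃ M q J W, GState G z X W0 J0 κ lam dl b M q J W ∧ J.card = K ∧ GPost G M J W b := by
  have hall : ∀ i ≤ b, ∃ M q J W, GState G z X W0 J0 κ lam dl i M q J W ∧
      Kf r K (b - i) ≤ J.card ∧ (GPre G X Λ τ M J i ∨ GPost G M J W i) := by
    intro i
    induction i with
    | zero =>
      intro _
      obtain ⟨h1, h2⟩ := C.start
      exact ⟨_, _, _, _, h1, by simpa using C.hJ0, Or.inl h2⟩
    | succ i ih =>
      intro hi
      obtain ⟨M, q, J, W, S, hJc, hpp⟩ := ih (by omega)
      have e : b - i = (b - (i+1)) + 1 := by omega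
      have hJc' : 2 * r ^ 2 * (Kf r K (b - (i+1)) + 1) ≤ J.card := by
        rw [e] at hJc; exact hJc
      have hk' : Kf r K (b - (i+1)) ≤ Kf r K b := Kf_mono_b r K C.hr (by omega)
      rcases hpp with hpre | hpost
      · obtain ⟨M', q', J', W', S', hc, hp⟩ := C.pre_step S (by omega) _ hk' hJc' hpre
        exact ⟨M', q', J', W', S', hc.ge, hp⟩
      · obtain ⟨M', q', J', W', S', hc, hp⟩ := C.post_step S (by omega) J subset_rfl _ hk'
          (by
            refine le_trans ?_ hJc'
            have h1 : r ≤ 2 * r ^ 2 := by have := C.hr; nlinarith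
            exact Nat.mul_le_mul_right _ h1) hpost
        exact ⟨M', q', J', W', S', hc.ge, Or.inr hp⟩
  obtain ⟨M, q, J, W, S, hJc, hpp⟩ := hall b le_rfl
  have hpost : GPost G M J W b := by
    rcases hpp with ⟨f, hf1, hf2, hf0, _⟩ | h
    · exfalso
      have h1 := C.hτn
      have hΛ := C.Λ64
      have hb0 : (0:ℝ) ≤ b := Nat.cast_nonneg _
      have e : (1:ℝ) ≤ Λ ^ 3 := one_le_pow₀ (by linarith)
      have hf1' : f ≤ 1 := by nlinarith
      have hn : (0:ℝ) ≤ Fintype.card V := Nat.cast_nonneg _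
      nlinarith
    · exact h
  simp only [Nat.sub_self, Kf] at hJc
  obtain ⟨J', hJ', hJ'c⟩ := Finset.exists_subset_card_eq hJc
  refine ⟨M, q, J', W, ?_, hJ'c, fun t ht => hpost t (hJ' ht)⟩
  exact ⟨S.M0, S.Mq, S.qlt, S.cov, S.anti, hJ'.trans S.JJ0, fun t ht => S.qJ t (hJ' ht),
    fun t ht => S.Wsub t (hJ' ht), fun t ht => S.Wsz t (hJ' ht), fun t ht => S.Wanti t (hJ' ht),
    fun t ht => S.lkM t (hJ' ht)⟩

end growth2

section gradesec
variable {V : Type} [Fintype V] {G : SimpleGraph V}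

/-- forward grading with respect to some enumeration of the blocks -/
lemma grade (T : Set V) (m : ℕ) : ∀ (R : Finset ℕ) (D : ℕ → Set V) (μ : ℝ), R.card = m →
    (∀ t ∈ R, (D t).Nonempty) → (∀ t ∈ R, D t ⊆ nbhd G T) → 0 ≤ μ → μ * 4 ^ m ≤ 1 →
    (∀ t ∈ R, Lk G μ T (D t)) →
    ∃ (e : ℕ → ℕ) (Z D' : ℕ → Set V), (∀ a < m, e a ∈ R) ∧
      (∀ a < m, ∀ a' < m, e a = e a' → a = a') ∧
      ∀ a < m, Z a ⊆ T ∧ D' a ⊆ D (e a) ∧ sz (D (e a)) ≤ 4 ^ m * sz (D' a) ∧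
        D' a ⊆ nbhd G (Z a) ∧ ∀ a' < a, Disjoint (nbhd G (Z a)) (D' a') := by
  classical
  induction m with
  | zero =>
    intro R D μ _ _ _ _ _ _
    exact ⟨fun _ => 0, fun _ => ∅, fun _ => ∅, by intro a ha; omega, by intro a ha; omega,
      by intro a ha; omega⟩
  | succ m ih =>
    intro R D μ hR hne hcov hμ0 hμ hlk
    have h4m : (1:ℝ) ≤ 4 ^ m := one_le_pow₀ (by norm_num)
    have hμ4 : μ ≤ 1/4 := by
      rw [pow_succ] at hμ
      nlinarith
    let P : Set V → Prop := fun Z => Z ⊆ T ∧ ∃ t ∈ R, 1/2 * sz (D t) ≤ sz (nbhd G Z ∩ D t)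
    obtain ⟨t1, ht1⟩ : R.Nonempty := Finset.card_pos.1 (by omega)
    have hPT : P T := ⟨subset_rfl, t1, ht1, by
      rw [Set.inter_eq_right.2 (hcov t1 ht1)]; linarith [sz_nonneg (D t1)]⟩
    obtain ⟨Z, ⟨hZT, t0, ht0, hZt0⟩, hmin⟩ := exists_max_nat P (fun Z => Fintype.card V - Z.ncard)
      (Fintype.card V) (fun _ _ => Nat.sub_le _ _) ⟨T, hPT⟩
    have hZc : ∀ S : Set V, S.ncard ≤ Fintype.card V := by
      intro S; have := sz_le_card S; unfold sz at this; exact_mod_cast this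
    have hZne : Z.Nonempty := by
      by_contra hh
      rw [Set.not_nonempty_iff_eq_empty] at hh
      rw [hh, nbhd_empty, Set.empty_inter, sz_empty] at hZt0
      linarith [sz_pos (hne t0 ht0)]
    obtain ⟨v, hv⟩ := hZne
    have hquart : ∀ t ∈ R, sz (D t) ≤ 4 * sz (D t \ nbhd G Z) := by
      intro t ht
      have h1 : ¬ P (Z \ {v}) := by
        intro hP
        have := hmin _ hP
        have h2 : (Z \ {v}).ncard < Z.ncard := Set.ncard_diff_singleton_lt_of_mem hv (Set.toFinite _)
        have := hZc Z
        omega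
      have h2 : sz (nbhd G (Z \ {v}) ∩ D t) < 1/2 * sz (D t) := by
        by_contra hcon
        exact h1 ⟨Set.sdiff_subset.trans hZT, t, ht, not_lt.1 hcon⟩
      have h3 : Z = (Z \ {v}) ∪ {v} := by
        rw [Set.diff_union_self, Set.union_eq_self_of_subset_right (by simpa using hv)]
      have h4 : sz (nbhd G Z ∩ D t) ≤ sz (nbhd G (Z \ {v}) ∩ D t) + sz (nbhd G {v} ∩ D t) := by
        conv_lhs => rw [h3]
        rw [nbhd_union, Set.union_inter_distrib_right]
        exact sz_union_le _ _
      have h5 := hlk t ht v (hZT hv)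
      have h6 : μ * sz (D t) ≤ 1/4 * sz (D t) := by have := sz_nonneg (D t); gcongr
      have h7 := sz_inter_add_diff (D t) (nbhd G Z)
      linarith
    have hRe : (R.erase t0).card = m := by rw [Finset.card_erase_of_mem ht0, hR]; rfl
    obtain ⟨e, Z', D', he1, he2, hall⟩ := ih (R.erase t0) (fun t => D t \ nbhd G Z) (4 * μ) hRe
      (by
        intro t ht
        have ht' := Finset.mem_of_mem_erase ht
        apply nonempty_of_sz
        have := hquart t ht'
        have := sz_pos (hne t ht')
        linarith)
      (fun t ht => Set.sdiff_subset.trans (hcov t (Finset.mem_of_mem_erase ht)))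
      (by positivity) (by rw [pow_succ] at hμ; linarith)
      (by
        intro t ht
        have ht' := Finset.mem_of_mem_erase ht
        have := (hlk t ht').sub (κ := 1/4) hμ0 (by norm_num) subset_rfl
          (Set.sdiff_subset (t := nbhd G Z)) (by linarith [hquart t ht'])
        have e : μ / (1/4) = 4 * μ := by ring
        rwa [e] at this)
    refine ⟨fun a => if a = m then t0 else e a, fun a => if a = m then Z else Z' a,
      fun a => if a = m then nbhd G Z ∩ D t0 else D' a, ?_, ?_, ?_⟩
    · intro a ha
      by_cases h : a = m
      · simp only [h, if_true]; exact ht0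
      · simp only [h, if_false]; exact Finset.mem_of_mem_erase (he1 a (by omega))
    · intro a ha a' ha'
      by_cases h : a = m <;> by_cases h' : a' = m
      · intro _; omega
      · simp only [h, h', if_true, if_false]
        intro hh
        exact absurd hh.symm (Finset.ne_of_mem_erase (he1 a' (by omega)))
      · simp only [h, h', if_true, if_false]
        intro hh
        exact absurd hh (Finset.ne_of_mem_erase (he1 a (by omega)))
      · simp only [h, h', if_false]
        exact he2 a (by omega) a' (by omega)
    · intro a ha
      by_cases h : a = m
      · simp only [h, if_true]
        refine ⟨hZT, Set.inter_subset_right, ?_, Set.inter_subset_left, ?_⟩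
        · have e1 : (2:ℝ) ≤ 4 ^ (m+1) := by rw [pow_succ]; linarith
          have e2 := sz_nonneg (nbhd G Z ∩ D t0)
          nlinarith
        · intro a' ha'
          have : a' ≠ m := by omega
          simp only [this, if_false]
          rw [Set.disjoint_left]
          intro u hu hu'
          exact ((hall a' ha').2.1 hu').2 hu
      · simp only [h, if_false]
        have ham : a < m := by omega
        obtain ⟨g1, g2, g3, g4, g5⟩ := hall a ham
        refine ⟨g1, g2.trans Set.sdiff_subset, ?_, g4, ?_⟩
        · have := hquart (e a) (Finset.mem_of_mem_erase (he1 a ham))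
          rw [pow_succ]
          linarith
        · intro a' ha'
          have : a' ≠ m := by omega
          simp only [this, if_false]
          exact g5 a' ha'

/-- forbidden part in the descent -/
def Fb (G : SimpleGraph V) (L : ℕ → Set V) (p : ℕ → V) (s i j : ℕ) : Set V :=
  {v | ∃ i' j', i' ≤ s ∧ 1 ≤ j' ∧ j' ≤ s ∧ (i < i' ∨ (i' = i ∧ j < j')) ∧ v ∈ L j' ∧ G.Adj (p i') v}

/-- the levels obtained by descending from `p i` into `L` -/
def Rd (G : SimpleGraph V) (L : ℕ → Set V) (p : ℕ → V) (s i j : ℕ) : ℕ → Set V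
  | 0 => (nbhd G {p i} ∩ L j) \ Fb G L p s i j
  | (m+1) => (nbhd G (Rd G L p s i j m) ∩ L (j + m + 1)) \ Fb G L p s i j

lemma Rd_sub (L : ℕ → Set V) (p : ℕ → V) (s i j m : ℕ) : Rd G L p s i j m ⊆ L (j + m) := by
  cases m with
  | zero => exact fun v hv => hv.1.2
  | succ m => exact fun v hv => hv.1.2

lemma Rd_not_Fb (L : ℕ → Set V) (p : ℕ → V) (s i j m : ℕ) :
    Disjoint (Rd G L p s i j m) (Fb G L p s i j) := by
  cases m with
  | zero => exact Set.disjoint_sdiff_left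
  | succ m => exact Set.disjoint_sdiff_left

lemma level_path (L : ℕ → Set V) (s : ℕ) (hcov : ∀ h < s, L (h+1) ⊆ nbhd G (L h)) :
    ∀ k ≤ s, ∀ x ∈ L k, ∃ l : ℕ → V, l k = x ∧ (∀ h ≤ k, l h ∈ L h) ∧
      ∀ h < k, G.Adj (l h) (l (h+1)) := by
  intro k
  induction k with
  | zero =>
    intro _ x hx
    exact ⟨fun _ => x, rfl, by intro h hh; obtain rfl : h = 0 := by omega
                               exact hx, by intro h hh; omega⟩
  | succ k ih =>
    intro hk x hx
    obtain ⟨y, hy, hyx⟩ := hcov k (by omega) hx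
    obtain ⟨l, hl1, hl2, hl3⟩ := ih (by omega) y hy
    refine ⟨fun h => if h = k + 1 then x else l h, by simp, ?_, ?_⟩
    · intro h hh
      by_cases e : h = k + 1
      · subst e; simpa using hx
      · simp only [e, if_false]; exact hl2 h (by omega)
    · intro h hh
      have e : h ≠ k + 1 := by omega
      simp only [e, if_false]
      by_cases e' : h = k
      · subst e'; simp only [if_true]; rw [hl1]; exact hyx
      · have : h + 1 ≠ k + 1 := by omega
        simp only [this, if_false]
        exact hl3 h (by omega)

lemma desc (L : ℕ → Set V) (p : ℕ → V) (s : ℕ) (hs : 1 ≤ s) (hL0 : L 0 = {p 0})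
    (hcov : ∀ h < s, L (h+1) ⊆ nbhd G (L h))
    (hdisj : ∀ h ≤ s, ∀ h' ≤ s, h ≠ h' → Disjoint (L h) (L h')) (x : V) (hx : x ∈ L s) :
    ∃ i ≤ s, ∃ j, 1 ≤ j ∧ j ≤ s ∧ x ∈ Rd G L p s i j (s - j) := by
  obtain ⟨l, hl1, hl2, hl3⟩ := level_path (G := G) L s hcov s le_rfl x hx
  have hl0 : l 0 = p 0 := by
    have := hl2 0 (by omega); rw [hL0] at this; exact this
  obtain ⟨⟨i, j⟩, ⟨hi, hj1, hj2, hadj⟩, hmax⟩ := exists_max_nat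
    (fun a : ℕ × ℕ => a.1 ≤ s ∧ 1 ≤ a.2 ∧ a.2 ≤ s ∧ G.Adj (p a.1) (l a.2))
    (fun a => a.1 * (s+1) + a.2) (s * (s+1) + s)
    (by
      rintro ⟨i, j⟩ ⟨h1, h2, h3, h4⟩
      have : i * (s+1) ≤ s * (s+1) := Nat.mul_le_mul_right _ h1
      simp only at h3 ⊢
      omega)
    ⟨(0, 1), by simp, le_rfl, hs, by
      have := hl3 0 (by omega); rw [hl0] at this; exact this⟩
  simp only at hi hj1 hj2 hadj hmax
  have hnF : ∀ k ≤ s, l k ∉ Fb G L p s i j := by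
    rintro k hk ⟨i', j', h1, h2, h3, h4, h5, h6⟩
    have hkj : k = j' := by
      by_contra hne
      exact Set.disjoint_left.1 (hdisj k hk j' h3 hne) (hl2 k hk) h5
    subst hkj
    have h7 := hmax (i', k) ⟨h1, h2, h3, h6⟩
    simp only at h7
    rcases h4 with h4 | ⟨rfl, h4⟩
    · have : (i+1) * (s+1) ≤ i' * (s+1) := Nat.mul_le_mul_right _ h4
      rw [Nat.succ_mul] at this
      omega
    · omega
  refine ⟨i, hi, j, hj1, hj2, ?_⟩
  have hall : ∀ m, j + m ≤ s → l (j + m) ∈ Rd G L p s i j m := by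
    intro m
    induction m with
    | zero =>
      intro h
      refine ⟨⟨?_, hl2 _ h⟩, hnF _ h⟩
      rw [nbhd_singleton]; exact hadj
    | succ m ih =>
      intro h
      refine ⟨⟨⟨l (j+m), ih (by omega), hl3 (j+m) (by omega)⟩, hl2 _ h⟩, hnF _ h⟩
  have := hall (s - j) (by omega)
  rwa [Nat.add_sub_cancel' hj2, hl1] at this

lemma repair (R : Finset ℕ) (Y : ℕ → Set V) (η : ℝ) (hη : 0 ≤ η)
    (hlk : ∀ t ∈ R, ∀ t' ∈ R, t ≠ t' → Lk G η (Y t) (Y t')) (t0 : ℕ) (ht0 : t0 ∈ R)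
    (B : Set V) (hB : B ⊆ Y t0) (hBne : B.Nonempty) :
    ∃ Y' : ℕ → Set V, Y' t0 = B ∧ (∀ t ∈ R, t ≠ t0 → Y' t ⊆ Y t ∧ sz (Y t) ≤ 2 * sz (Y' t)) ∧
      ∀ t ∈ R, ∀ t' ∈ R, t ≠ t' → Lk G (2 * η) (Y' t) (Y' t') := by
  classical
  have hBpos := sz_pos hBne
  let Q : Set V := {v | sz (nbhd G {v} ∩ B) ≤ 2 * η * sz B}
  have hhalf : ∀ t ∈ R, t ≠ t0 → sz (Y t) ≤ 2 * sz (Q ∩ Y t) := by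
    intro t ht htt
    have h1 := double_count (G := G) B (Y t \ Q)
    have h2 : ∑ z ∈ fs B, sz (nbhd G {z} ∩ (Y t \ Q)) ≤ sz B * (η * sz (Y t)) := by
      rw [← card_fs, ← nsmul_eq_mul, ← Finset.sum_const]
      refine Finset.sum_le_sum fun z hz => ?_
      rw [mem_fs] at hz
      exact (sz_mono (Set.inter_subset_inter_right _ Set.sdiff_subset)).trans
        (hlk t0 ht0 t ht (Ne.symm htt) z (hB hz))
    have h3 := sz_inter_add_diff (Y t) Q
    by_contra hcon
    push Not at hcon
    have hbad : 0 < sz (Y t \ Q) := by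
      have := sz_nonneg (Q ∩ Y t)
      linarith
    have h4 : sz (Y t \ Q) * (2 * η * sz B) < ∑ u ∈ fs (Y t \ Q), sz (nbhd G {u} ∩ B) := by
      rw [← card_fs, ← nsmul_eq_mul, ← Finset.sum_const]
      refine Finset.sum_lt_sum_of_nonempty ?_ fun u hu => ?_
      · obtain ⟨u, hu⟩ := nonempty_of_sz hbad
        exact ⟨u, (mem_fs _ _).2 hu⟩
      · rw [mem_fs] at hu
        exact not_le.1 hu.2
    have h5 : sz (Y t) ≤ 2 * sz (Y t \ Q) := by linarith
    have h6 : sz B * (η * sz (Y t)) ≤ sz B * (η * (2 * sz (Y t \ Q))) := by gcongr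
    nlinarith
  refine ⟨fun t => if t = t0 then B else Q ∩ Y t, by simp, ?_, ?_⟩
  · intro t ht htt
    simp only [htt, if_false]
    exact ⟨Set.inter_subset_right, hhalf t ht htt⟩
  · intro t ht t' ht' htt' v hv
    have hsub : ∀ a, (if a = t0 then B else Q ∩ Y a) ⊆ Y a := by
      intro a
      by_cases h : a = t0
      · subst h; simpa using hB
      · simp only [h, if_false]; exact Set.inter_subset_right
    by_cases h' : t' = t0
    · have h : t ≠ t0 := fun e => htt' (e.trans h'.symm)
      simp only [h, if_false] at hv
      simp only [h', if_true]
      exact hv.1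
    · simp only [h', if_false]
      have h1 := hlk t ht t' ht' htt' v (hsub t hv)
      have h2 : sz (nbhd G {v} ∩ (Q ∩ Y t')) ≤ sz (nbhd G {v} ∩ Y t') :=
        sz_mono (Set.inter_subset_inter_right _ Set.inter_subset_right)
      have h3 := hhalf t' ht' h'
      have h4 : η * sz (Y t') ≤ η * (2 * sz (Q ∩ Y t')) := by gcongr
      linarith

lemma backgrade (T : Set V) (R : Finset ℕ) (D : ℕ → Set V) (Λ : ℝ) (hΛ : 1 ≤ Λ) (k : ℕ)
    (hu : ∀ t ∈ R, ∀ u ∈ D t, Λ ^ k ≤ sz (nbhd G {u} ∩ T) ∧ sz (nbhd G {u} ∩ T) ≤ Λ ^ (k+1))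
    (hne : ∀ t ∈ R, (D t).Nonempty) (μ η : ℝ) (hμ0 : 0 ≤ μ) (hη0 : 0 ≤ η)
    (hμ : μ * 4 ^ (R.card) ≤ 1/4)
    (hlkT : ∀ t ∈ R, Lk G μ T (D t))
    (hlk : ∀ t ∈ R, ∀ t' ∈ R, t ≠ t' → Lk G η (D t) (D t')) :
    ∃ Z B : ℕ → Set V, (∀ t ∈ R, Z t ⊆ T ∧ B t ⊆ D t ∧
        sz (D t) ≤ 8 * R.card * Λ * 4 ^ R.card * sz (B t) ∧ B t ⊆ nbhd G (Z t) ∧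
        ∀ t' ∈ R, t < t' → Disjoint (nbhd G (Z t)) (B t')) ∧
      ∀ t ∈ R, ∀ t' ∈ R, t ≠ t' → Lk G (4 ^ R.card * η) (B t) (B t') := by
  classical
  set m := R.card with hm
  have main : ∀ j ≤ m, ∃ P ⊆ R, P.card = j ∧ (∀ a ∈ P, ∀ b ∈ R, b ∉ P → a < b) ∧
      ∃ Z Y : ℕ → Set V, (∀ t ∈ R, Y t ⊆ D t) ∧
        (∀ t ∈ P, Z t ⊆ T ∧ sz (D t) ≤ 8 * m * Λ * 4 ^ j * sz (Y t) ∧ Y t ⊆ nbhd G (Z t) ∧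
          ∀ t' ∈ R, t < t' → Disjoint (nbhd G (Z t)) (Y t')) ∧
        (∀ t ∈ R, t ∉ P → sz (D t) ≤ 4 ^ j * sz (Y t)) ∧
        ∀ t ∈ R, ∀ t' ∈ R, t ≠ t' → Lk G (4 ^ j * η) (Y t) (Y t') := by
    intro j
    induction j with
    | zero =>
      intro _
      refine ⟨∅, Finset.empty_subset _, rfl, by simp, fun _ => ∅, D, fun t _ => subset_rfl,
        by simp, ?_, ?_⟩
      · intro t ht _; simp
      · intro t ht t' ht' h; simpa using hlk t ht t' ht' h
    | succ j ih =>
      intro hj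
      obtain ⟨P, hPR, hPc, hPlow, Z, Y, hYD, hP, hnP, hYlk⟩ := ih (by omega)
      have hQc : (R \ P).card = m - j := by rw [Finset.card_sdiff_of_subset hPR, hPc]
      have hQne : (R \ P).Nonempty := Finset.card_pos.1 (by omega)
      set t0 := (R \ P).min' hQne with ht0
      have ht0Q : t0 ∈ R \ P := Finset.min'_mem _ _
      obtain ⟨ht0R, ht0P⟩ := Finset.mem_sdiff.1 ht0Q
      have h4j : (0:ℝ) < 4 ^ j := by positivity
      have hmR : (1:ℝ) ≤ m := by exact_mod_cast (by omega : 1 ≤ m)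
      have hYpos : ∀ t ∈ R, 0 < sz (Y t) := by
        intro t ht
        have hd := sz_pos (hne t ht)
        by_contra hcon
        have h0 : sz (Y t) = 0 := le_antisymm (not_lt.1 hcon) (sz_nonneg _)
        by_cases htP : t ∈ P
        · have := (hP t htP).2.1
          rw [h0, mul_zero] at this; linarith
        · have := hnP t ht htP
          rw [h0, mul_zero] at this; linarith
      obtain ⟨Z0, hZ0T, hZ01, hZ02⟩ := select (G := G) T (R \ P) Y Λ hΛ k
        (fun t ht u hu' => hu t (Finset.mem_sdiff.1 ht).1 u (hYD t (Finset.mem_sdiff.1 ht).1 hu'))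
        (fun t ht => nonempty_of_sz (hYpos t (Finset.mem_sdiff.1 ht).1))
        (by
          intro t ht z hz
          obtain ⟨htR, htP⟩ := Finset.mem_sdiff.1 ht
          have h1 := hlkT t htR z hz
          have h2 : sz (nbhd G {z} ∩ Y t) ≤ sz (nbhd G {z} ∩ D t) :=
            sz_mono (Set.inter_subset_inter_right _ (hYD t htR))
          have h3 := hnP t htR htP
          have h4 : μ * sz (D t) ≤ μ * (4 ^ j * sz (Y t)) := by gcongr
          have h5 : (4:ℝ) ^ j ≤ 4 ^ m := pow_le_pow_right₀ (by norm_num) (by omega)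
          have h6 : μ * 4 ^ j ≤ 1/4 := le_trans (by gcongr) hμ
          have h7 : μ * 4 ^ j * sz (Y t) ≤ 1/4 * sz (Y t) := by
            have := sz_nonneg (Y t); gcongr
          linarith) t0 ht0Q
      -- the intermediate family
      let Y1 : ℕ → Set V := fun t => if t ∈ P then Y t else if t = t0 then Y t else Y t \ nbhd G Z0
      have hY1Y : ∀ t, Y1 t ⊆ Y t := by
        intro t
        by_cases h1 : t ∈ P
        · simp [Y1, h1]
        · by_cases h2 : t = t0
          · simp [Y1, h2]
          · simp only [Y1, h1, h2, if_false]; exact Set.sdiff_subset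
      have hY1half : ∀ t ∈ R, sz (Y t) ≤ 2 * sz (Y1 t) := by
        intro t ht
        have hnn := sz_nonneg (Y t)
        by_cases h1 : t ∈ P
        · simp only [Y1, h1, if_true]; linarith
        · by_cases h2 : t = t0
          · have e : Y1 t = Y t := by simp [Y1, h2]
            rw [e]; linarith
          · have e : Y1 t = Y t \ nbhd G Z0 := by simp [Y1, h1, h2]
            rw [e]
            have h3 := hZ02 t (Finset.mem_sdiff.2 ⟨ht, h1⟩)
            have h4 := sz_inter_add_diff (Y t) (nbhd G Z0)
            linarith
      have hY1lk : ∀ t ∈ R, ∀ t' ∈ R, t ≠ t' → Lk G (4 ^ j * η / (1/2)) (Y1 t) (Y1 t') := by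
        intro t ht t' ht' htt'
        exact (hYlk t ht t' ht' htt').sub (by positivity) (by norm_num) (hY1Y t) (hY1Y t')
          (by linarith [hY1half t' ht'])
      have ht0Y1 : Y1 t0 = Y t0 := by simp [Y1]
      have hBpos : 0 < sz (nbhd G Z0 ∩ Y t0) := by
        by_contra hcon
        have h0 : sz (nbhd G Z0 ∩ Y t0) = 0 := le_antisymm (not_lt.1 hcon) (sz_nonneg _)
        rw [h0, mul_zero] at hZ01
        linarith [hYpos t0 ht0R]
      obtain ⟨Y', hY'0, hY'1, hY'lk⟩ := repair (G := G) R Y1 (4 ^ j * η / (1/2)) (by positivity)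
        hY1lk t0 ht0R (nbhd G Z0 ∩ Y t0) (by rw [ht0Y1]; exact Set.inter_subset_right)
        (nonempty_of_sz hBpos)
      have hY'Y1 : ∀ t ∈ R, Y' t ⊆ Y1 t := by
        intro t ht
        by_cases h : t = t0
        · subst h; rw [hY'0, ht0Y1]; exact Set.inter_subset_right
        · exact (hY'1 t ht h).1
      have hquarter : ∀ t ∈ R, t ≠ t0 → sz (Y t) ≤ 4 * sz (Y' t) := by
        intro t ht h
        have := (hY'1 t ht h).2
        have := hY1half t ht
        linarith
      refine ⟨insert t0 P, Finset.insert_subset ht0R hPR, ?_, ?_,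
        fun t => if t = t0 then Z0 else Z t, Y', ?_, ?_, ?_, ?_⟩
      · rw [Finset.card_insert_of_notMem ht0P, hPc]
      · intro a ha b hb hbP
        rw [Finset.mem_insert, not_or] at hbP
        rcases Finset.mem_insert.1 ha with rfl | ha
        · exact lt_of_le_of_ne (Finset.min'_le _ _ (Finset.mem_sdiff.2 ⟨hb, hbP.2⟩)) (Ne.symm hbP.1)
        · exact hPlow a ha b hb hbP.2
      · intro t ht
        exact ((hY'Y1 t ht).trans (hY1Y t)).trans (hYD t ht)
      · intro t ht
        by_cases h : t = t0
        · subst h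
          simp only [if_true]
          refine ⟨hZ0T, ?_, by rw [hY'0]; exact Set.inter_subset_left, ?_⟩
          · rw [hY'0]
            have h1 := hnP _ ht0R ht0P
            have h2 : ((R \ P).card : ℝ) ≤ m := by rw [hQc]; exact_mod_cast Nat.sub_le _ _
            have h3 := hBpos.le
            calc sz (D t0) ≤ 4 ^ j * sz (Y t0) := h1
              _ ≤ 4 ^ j * (8 * (R \ P).card * Λ * sz (nbhd G Z0 ∩ Y t0)) := by gcongr
              _ ≤ 4 ^ j * (8 * m * Λ * sz (nbhd G Z0 ∩ Y t0)) := by gcongr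
              _ = 8 * m * Λ * 4 ^ j * sz (nbhd G Z0 ∩ Y t0) := by ring
              _ ≤ 8 * m * Λ * 4 ^ (j+1) * sz (nbhd G Z0 ∩ Y t0) := by
                have : (4:ℝ) ^ j ≤ 4 ^ (j+1) := pow_le_pow_right₀ (by norm_num) (by omega)
                gcongr
          · intro t' ht' htt'
            have h1 : t' ∉ P := fun hh => absurd (hPlow t' hh t0 ht0R ht0P) (by omega)
            have h2 : t' ≠ t0 := by omega
            have e : Y1 t' = Y t' \ nbhd G Z0 := by simp [Y1, h1, h2]
            rw [Set.disjoint_left]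
            intro v hv hv'
            have := hY'Y1 t' ht' hv'
            rw [e] at this
            exact this.2 hv
        · have htP : t ∈ P := (Finset.mem_insert.1 ht).resolve_left h
          simp only [h, if_false]
          obtain ⟨g1, g2, g3, g4⟩ := hP t htP
          refine ⟨g1, ?_, ((hY'Y1 t (hPR htP)).trans (hY1Y t)).trans g3, ?_⟩
          · have h1 := hquarter t (hPR htP) h
            calc sz (D t) ≤ 8 * m * Λ * 4 ^ j * sz (Y t) := g2
              _ ≤ 8 * m * Λ * 4 ^ j * (4 * sz (Y' t)) := by gcongr
              _ = _ := by ring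
          · intro t' ht' htt'
            exact (g4 t' ht' htt').mono_right ((hY'Y1 t' ht').trans (hY1Y t'))
      · intro t ht htP
        rw [Finset.mem_insert, not_or] at htP
        have h1 := hnP t ht htP.2
        have h2 := hquarter t ht htP.1
        calc sz (D t) ≤ 4 ^ j * sz (Y t) := h1
          _ ≤ 4 ^ j * (4 * sz (Y' t)) := by gcongr
          _ = _ := by ring
      · intro t ht t' ht' htt'
        have := hY'lk t ht t' ht' htt'
        have e : 2 * (4 ^ j * η / (1/2)) = 4 ^ (j+1) * η := by ring
        rwa [e] at this
  obtain ⟨P, hPR, hPc, hPlow, Z, Y, hYD, hP, hnP, hYlk⟩ := main m le_rfl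
  have hPeq : P = R := Finset.eq_of_subset_of_card_le hPR (by omega)
  subst hPeq
  exact ⟨Z, Y, fun t ht => ⟨(hP t ht).1, hYD t ht, (hP t ht).2⟩, hYlk⟩

end gradesec

section verify
variable {V : Type} [Fintype V] {G : SimpleGraph V}

lemma mkReaches (L : ℕ → Set V) (k : ℕ) (C : Set V) (h0 : (L 0).ncard = 1)
    (hd : ∀ i ≤ k, ∀ j ≤ k, i ≠ j → Disjoint (L i) (L j)) (hdC : ∀ i ≤ k, Disjoint (L i) C)
    (hc : ∀ i < k, Covers G (L i) (L (i+1))) (hcC : Covers G (L k) C)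
    (ha : ∀ h i, h + 2 ≤ i → i ≤ k → Anticomplete G (L h) (L i))
    (haC : ∀ h < k, Anticomplete G (L h) C) : Reaches G L k C := by
  refine ⟨by omega, by simpa using h0, ?_, ?_, ?_⟩
  · intro i hi j hj hij
    by_cases e1 : i = k + 1
    · have e2 : j ≠ k + 1 := by omega
      simp only [e1, e2, if_true, if_false]
      exact (hdC j (by omega)).symm
    · by_cases e2 : j = k + 1
      · simp only [e1, e2, if_true, if_false]
        exact hdC i (by omega)
      · simp only [e1, e2, if_false]
        exact hd i (by omega) j (by omega) hij
  · intro i hi1 hi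
    have e0 : i - 1 ≠ k + 1 := by omega
    by_cases e1 : i = k + 1
    · subst e1
      simpa using hcC
    · simp only [e0, e1, if_false]
      have := hc (i-1) (by omega)
      rwa [Nat.sub_add_cancel hi1] at this
  · intro i hi2 hi h hh
    have e0 : h ≠ k + 1 := by omega
    by_cases e1 : i = k + 1
    · simp only [e0, e1, if_false, if_true]
      exact haC h (by omega)
    · simp only [e0, e1, if_false]
      exact ha h i hh (by omega)

lemma lev_of_reaches {L : ℕ → Set V} {k : ℕ} {C : Set V} (hk : 1 ≤ k) (h : Reaches G L k C) :
    IsLevelling G L k := by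
  obtain ⟨_, h0, hd, hc, ha⟩ := h
  have e : ∀ i, i ≤ k → (if i = k + 1 then C else L i) = L i := by
    intro i hi; rw [if_neg (by omega)]
  refine ⟨hk, by simpa using h0, ?_, ?_, ?_⟩
  · intro i hi j hj hij
    have := hd i (by omega) j (by omega) hij
    simpa only [e i hi, e j hj] using this
  · intro i hi1 hi
    have := hc i hi1 (by omega)
    simpa only [e i hi, e (i-1) (by omega)] using this
  · intro i hi1 hi h hh
    have := ha i hi1 (by omega) h hh
    simpa only [e i hi, e h (by omega)] using this

lemma anti_of_disj {S T : Set V} (h : Disjoint (nbhd G S) T) : Anticomplete G S T := by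
  intro a ha b hb hab
  exact Set.disjoint_left.1 h ⟨a, ha, hab⟩ hb

lemma anti_symm {S T : Set V} (h : Anticomplete G S T) : Anticomplete G T S := by
  intro a ha b hb hab
  exact h b hb a ha hab.symm

lemma anti_mono {S T S' T' : Set V} (h : Anticomplete G S T) (hS : S' ⊆ S) (hT : T' ⊆ T) :
    Anticomplete G S' T' := fun a ha b hb => h a (hS ha) b (hT hb)

/-- all the data from which the bi-grading is assembled -/
structure BiData (G : SimpleGraph V) (s i j b NA : ℕ) (A : ℕ → Set V) (L : ℕ → Set V)
    (qL : ℕ → ℕ) (p : ℕ → V) (qp : ℕ → ℕ) (M : ℕ → Set V) (qM : ℕ → ℕ) (J : Finset ℕ)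
    (B : ℕ → Set V) (qB : ℕ → ℕ) (Z Zb : ℕ → Set V) : Prop where
  hi : i ≤ s
  hj1 : 1 ≤ j
  hj2 : j ≤ s
  hb : 1 ≤ b
  Adisj : ∀ x < NA, ∀ y < NA, x ≠ y → Disjoint (A x) (A y)
  Lq : ∀ h, 1 ≤ h → h ≤ s → qL h < NA ∧ L h ⊆ A (qL h)
  pq : ∀ h, h ≤ s + 1 → qp h < NA ∧ p h ∈ A (qp h)
  Mq : ∀ h, 1 ≤ h → h ≤ b → qM h < NA ∧ M h ⊆ A (qM h)
  Bq : ∀ t ∈ J, qB t < NA ∧ B t ⊆ A (qB t)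
  Bne : ∀ t ∈ J, (B t).Nonempty
  LL : ∀ h h', 1 ≤ h → h ≤ s → 1 ≤ h' → h' ≤ s → qL h = qL h' → h = h'
  pp : ∀ h h', h ≤ s + 1 → h' ≤ s + 1 → qp h = qp h' → h = h'
  MM : ∀ h h', 1 ≤ h → h ≤ b → 1 ≤ h' → h' ≤ b → qM h = qM h' → h = h'
  BB : ∀ t ∈ J, ∀ t' ∈ J, qB t = qB t' → t = t'
  Lp : ∀ h h', 1 ≤ h → h ≤ s → h' ≤ s + 1 → qL h ≠ qp h'
  LM : ∀ h h', 1 ≤ h → h ≤ s → 1 ≤ h' → h' ≤ b → qL h ≠ qM h'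
  LB : ∀ h, 1 ≤ h → h ≤ s → ∀ t ∈ J, qL h ≠ qB t
  pM : ∀ h h', h ≤ s + 1 → 1 ≤ h' → h' ≤ b → qp h ≠ qM h'
  pB : ∀ h, h ≤ s + 1 → ∀ t ∈ J, qp h ≠ qB t
  MB : ∀ h, 1 ≤ h → h ≤ b → ∀ t ∈ J, qM h ≠ qB t
  Lanti : ∀ h h', h + 2 ≤ h' → h' ≤ s → Anticomplete G (L h) (L h')
  padj : ∀ h, h ≤ s → G.Adj (p h) (p (h+1))
  panti : ∀ h h', h + 2 ≤ h' → h' ≤ s + 1 → ¬ G.Adj (p h) (p h')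
  M0 : M 0 = {p (s+1)}
  Mcov : ∀ h, h < b → Covers G (M h) (M (h+1))
  Manti : ∀ h h', h + 2 ≤ h' → h' ≤ b → Anticomplete G (M h) (M h')
  pM_anti : ∀ h, h ≤ s → ∀ h', 1 ≤ h' → h' ≤ b → Anticomplete G {p h} (M h')
  pB_anti : ∀ h, h ≤ s → ∀ t ∈ J, Anticomplete G {p h} (B t)
  LM_anti : ∀ h, h < s → ∀ h', h' ≤ b → Anticomplete G (L h) (M h')
  LB_anti : ∀ h, h < s → ∀ t ∈ J, Anticomplete G (L h) (B t)
  Zsub : ∀ t ∈ J, Z t ⊆ L s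
  ZM_anti : ∀ t ∈ J, ∀ h', h' ≤ b → Anticomplete G (Z t) (M h')
  ZB_anti : ∀ t ∈ J, ∀ t' ∈ J, t' < t → Anticomplete G (Z t) (B t')
  ZB : ∀ t ∈ J, Covers G (Z t ∩ Rd G L p s i j (s - j)) (B t)
  MB_anti : ∀ h, h < b → ∀ t ∈ J, Anticomplete G (M h) (B t)
  Zbsub : ∀ t ∈ J, Zb t ⊆ M b
  ZbB : ∀ t ∈ J, Covers G (Zb t) (B t)
  ZbB_anti : ∀ t ∈ J, ∀ t' ∈ J, t < t' → Anticomplete G (Zb t) (B t')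

/-- the levels of the first levelling -/
def Ls (G : SimpleGraph V) (L : ℕ → Set V) (p : ℕ → V) (s i j : ℕ) (J : Finset ℕ)
    (Z : ℕ → Set V) (m : ℕ) : Set V :=
  if m ≤ s + 1 - i then {p (s + 1 - m)}
  else if m < (s + 1 - i) + (s - j + 1) then Rd G L p s i j (m - (s + 2 - i))
  else ⋃ t ∈ J, Z t ∩ Rd G L p s i j (s - j)

variable {s i j b NA : ℕ} {A : ℕ → Set V} {L : ℕ → Set V}
    {qL : ℕ → ℕ} {p : ℕ → V} {qp : ℕ → ℕ} {M : ℕ → Set V} {qM : ℕ → ℕ} {J : Finset ℕ}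
    {B : ℕ → Set V} {qB : ℕ → ℕ} {Z Zb : ℕ → Set V}

lemma Ls_p {h : ℕ} (hi : i ≤ h) (hh : h ≤ s + 1) : Ls G L p s i j J Z (s + 1 - h) = {p h} := by
  rw [Ls, if_pos (by omega)]
  congr 2; omega

lemma Ls_R {m : ℕ} (hi : i ≤ s) (hm : m < s - j) :
    Ls G L p s i j J Z (s + 2 - i + m) = Rd G L p s i j m := by
  rw [Ls, if_neg (by omega), if_pos (by omega)]
  congr 1; omega

lemma Ls_last (hi : i ≤ s) : Ls G L p s i j J Z (s + 2 - i + (s - j)) =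
    ⋃ t ∈ J, Z t ∩ Rd G L p s i j (s - j) := by
  rw [Ls, if_neg (by omega), if_neg (by omega)]

lemma Ls_R_sub {m : ℕ} (hi : i ≤ s) (hm : m ≤ s - j) :
    Ls G L p s i j J Z (s + 2 - i + m) ⊆ Rd G L p s i j m := by
  rcases hm.lt_or_eq with h | h
  · rw [Ls_R hi h]
  · subst h; rw [Ls_last hi]
    intro v hv
    simp only [Set.mem_iUnion] at hv
    obtain ⟨t, _, hv⟩ := hv
    exact hv.2

lemma Ls_cases (hi : i ≤ s) (hj : j ≤ s) (m : ℕ) (hm : m ≤ (s + 1 - i) + (s - j + 1)) :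
    (∃ h, i ≤ h ∧ h ≤ s + 1 ∧ m = s + 1 - h) ∨ ∃ m', m' ≤ s - j ∧ m = s + 2 - i + m' := by
  by_cases h : m ≤ s + 1 - i
  · exact Or.inl ⟨s + 1 - m, by omega, by omega, by omega⟩
  · exact Or.inr ⟨m - (s + 2 - i), by omega, by omega⟩

/-- index of the block containing the `m`-th level -/
def qs (qL qp : ℕ → ℕ) (s i j m : ℕ) : ℕ :=
  if m ≤ s + 1 - i then qp (s + 1 - m) else qL (j + (m - (s + 2 - i)))

lemma qs_p {h : ℕ} (hi : i ≤ h) (hh : h ≤ s + 1) : qs qL qp s i j (s + 1 - h) = qp h := by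
  rw [qs, if_pos (by omega)]; congr 1; omega

lemma qs_R {m : ℕ} (hi : i ≤ s) : qs qL qp s i j (s + 2 - i + m) = qL (j + m) := by
  rw [qs, if_neg (by omega)]; congr 2; omega

lemma BiData.pR_anti (D : BiData G s i j b NA A L qL p qp M qM J B qB Z Zb) {h m : ℕ}
    (hh : h ≤ s) (hm : m ≤ s - j) (hlt : i < h ∨ (h = i ∧ 0 < m)) :
    Anticomplete G {p h} (Rd G L p s i j m) := by
  intro u hu v hv huv
  rw [Set.mem_singleton_iff] at hu
  subst hu
  have hj1 := D.hj1
  have hj2 := D.hj2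
  refine Set.disjoint_left.1 (Rd_not_Fb (G := G) L p s i j m) hv ?_
  refine ⟨h, j + m, hh, by omega, by omega, ?_, Rd_sub L p s i j m hv, huv⟩
  omega

lemma Rd_cov0 : Covers G {p i} (Rd G L p s i j 0) := by
  intro v hv
  obtain ⟨⟨⟨x, hx, h⟩, _⟩, _⟩ := hv
  exact ⟨x, hx, h⟩

lemma Rd_cov (m : ℕ) : Covers G (Rd G L p s i j m) (Rd G L p s i j (m+1)) := by
  intro v hv
  obtain ⟨⟨⟨x, hx, h⟩, _⟩, _⟩ := hv
  exact ⟨x, hx, h⟩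

lemma BiData.Ls_q (D : BiData G s i j b NA A L qL p qp M qM J B qB Z Zb) (m : ℕ)
    (hm : m ≤ (s + 1 - i) + (s - j + 1)) :
    qs qL qp s i j m < NA ∧ Ls G L p s i j J Z m ⊆ A (qs qL qp s i j m) := by
  have hi := D.hi
  have hj1 := D.hj1
  have hj2 := D.hj2
  rcases Ls_cases D.hi D.hj2 m hm with ⟨h, h1, h2, rfl⟩ | ⟨m', h1, rfl⟩
  · rw [Ls_p h1 h2, qs_p h1 h2]
    exact ⟨(D.pq h h2).1, Set.singleton_subset_iff.2 (D.pq h h2).2⟩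
  · rw [qs_R D.hi]
    have := D.Lq (j + m') (by omega) (by omega)
    exact ⟨this.1, (Ls_R_sub D.hi h1).trans ((Rd_sub L p s i j m').trans this.2)⟩

lemma BiData.qs_inj (D : BiData G s i j b NA A L qL p qp M qM J B qB Z Zb) (m m' : ℕ)
    (hm : m ≤ (s + 1 - i) + (s - j + 1)) (hm' : m' ≤ (s + 1 - i) + (s - j + 1))
    (h : qs qL qp s i j m = qs qL qp s i j m') : m = m' := by
  have hi := D.hi
  have hj1 := D.hj1
  have hj2 := D.hj2
  rcases Ls_cases D.hi D.hj2 m hm with ⟨h, h1, h2, rfl⟩ | ⟨k, h1, rfl⟩ <;>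
  rcases Ls_cases D.hi D.hj2 m' hm' with ⟨h', h1', h2', rfl⟩ | ⟨k', h1', rfl⟩
  · rw [qs_p h1 h2, qs_p h1' h2'] at h
    rw [D.pp _ _ h2 h2' h]
  · rw [qs_p h1 h2, qs_R D.hi] at h
    exact absurd h.symm (D.Lp _ _ (by omega) (by omega) h2)
  · rw [qs_p h1' h2', qs_R D.hi] at h
    exact absurd h (D.Lp _ _ (by omega) (by omega) h2')
  · rw [qs_R D.hi, qs_R D.hi] at h
    have := D.LL _ _ (by omega) (by omega) (by omega) (by omega) h
    omega

lemma BiData.qs_M (D : BiData G s i j b NA A L qL p qp M qM J B qB Z Zb) (m m' : ℕ)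
    (hm : m ≤ (s + 1 - i) + (s - j + 1)) (h1' : 1 ≤ m') (h2' : m' ≤ b) :
    qs qL qp s i j m ≠ qM m' := by
  have hi := D.hi
  have hj1 := D.hj1
  have hj2 := D.hj2
  rcases Ls_cases D.hi D.hj2 m hm with ⟨h, h1, h2, rfl⟩ | ⟨k, h1, rfl⟩
  · rw [qs_p h1 h2]; exact D.pM _ _ h2 h1' h2'
  · rw [qs_R D.hi]; exact D.LM _ _ (by omega) (by omega) h1' h2'

lemma BiData.qs_B (D : BiData G s i j b NA A L qL p qp M qM J B qB Z Zb) (m : ℕ)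
    (hm : m ≤ (s + 1 - i) + (s - j + 1)) (t : ℕ) (ht : t ∈ J) :
    qs qL qp s i j m ≠ qB t := by
  have hi := D.hi
  have hj1 := D.hj1
  have hj2 := D.hj2
  rcases Ls_cases D.hi D.hj2 m hm with ⟨h, h1, h2, rfl⟩ | ⟨k, h1, rfl⟩
  · rw [qs_p h1 h2]; exact D.pB _ h2 t ht
  · rw [qs_R D.hi]; exact D.LB _ (by omega) (by omega) t ht

/-- the union of the blocks -/
def UB (J : Finset ℕ) (B : ℕ → Set V) : Set V := ⋃ t ∈ J, B t

lemma mem_UB (v : V) : v ∈ UB J B ↔ ∃ t ∈ J, v ∈ B t := by simp [UB]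

lemma anti_UB {S : Set V} (h : ∀ t ∈ J, Anticomplete G S (B t)) : Anticomplete G S (UB J B) := by
  intro a ha v hv
  obtain ⟨t, ht, hv⟩ := (mem_UB v).1 hv
  exact h t ht a ha v hv

lemma disj_UB {S : Set V} (h : ∀ t ∈ J, Disjoint S (B t)) : Disjoint S (UB J B) := by
  rw [Set.disjoint_left]
  intro v hv hv'
  obtain ⟨t, ht, hv'⟩ := (mem_UB v).1 hv'
  exact Set.disjoint_left.1 (h t ht) hv hv'

/-- anticompleteness of the first levelling with a set, piecewise -/
lemma Ls_anti (hi : i ≤ s) (hj : j ≤ s) (T : Set V) (lo hiB : ℕ)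
    (hhi : hiB ≤ (s + 1 - i) + (s - j + 1))
    (h1 : ∀ h, i ≤ h → h ≤ s + 1 → lo ≤ s + 1 - h → s + 1 - h ≤ hiB → Anticomplete G {p h} T)
    (h2 : ∀ m, m < s - j → s + 2 - i + m ≤ hiB → Anticomplete G (L (j + m)) T)
    (h3 : hiB = s + 2 - i + (s - j) → ∀ t ∈ J, Anticomplete G (Z t) T) :
    ∀ m, lo ≤ m → m ≤ hiB → Anticomplete G (Ls G L p s i j J Z m) T := by
  intro m hm1 hm2
  rcases Ls_cases hi hj m (by omega) with ⟨h, g1, g2, rfl⟩ | ⟨k, g1, rfl⟩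
  · rw [Ls_p g1 g2]; exact h1 h g1 g2 hm1 hm2
  · rcases g1.lt_or_eq with h | h
    · exact anti_mono (h2 k h hm2) ((Ls_R_sub hi g1).trans (Rd_sub L p s i j k)) subset_rfl
    · subst h
      rw [Ls_last hi]
      intro a ha v hv
      simp only [Set.mem_iUnion] at ha
      obtain ⟨t, ht, ha⟩ := ha
      exact h3 (by omega) t ht a ha.1 v hv

lemma BiData.Ls_self_anti (D : BiData G s i j b NA A L qL p qp M qM J B qB Z Zb) (m m' : ℕ)
    (hmm : m + 2 ≤ m') (hm' : m' ≤ (s + 1 - i) + (s - j + 1)) :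
    Anticomplete G (Ls G L p s i j J Z m) (Ls G L p s i j J Z m') := by
  have hi := D.hi
  have hj1 := D.hj1
  have hj2 := D.hj2
  rcases Ls_cases D.hi D.hj2 m (by omega) with ⟨h, h1, h2, rfl⟩ | ⟨k, h1, rfl⟩ <;>
  rcases Ls_cases D.hi D.hj2 m' hm' with ⟨h', h1', h2', rfl⟩ | ⟨k', h1', rfl⟩
  · rw [Ls_p h1 h2, Ls_p h1' h2']
    intro a ha v hv hav
    rw [Set.mem_singleton_iff] at ha hv
    subst ha hv
    exact D.panti h' h (by omega) h2 hav.symm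
  · rw [Ls_p h1 h2]
    rcases h2.lt_or_eq with e | e
    · exact anti_mono (D.pR_anti (by omega) h1' (by omega)) subset_rfl (Ls_R_sub D.hi h1')
    · subst e
      rw [← D.M0]
      rcases h1'.lt_or_eq with e' | e'
      · exact anti_mono (anti_symm (D.LM_anti (j + k') (by omega) 0 (by omega))) subset_rfl
          ((Ls_R_sub D.hi h1').trans (Rd_sub L p s i j k'))
      · subst e'
        rw [Ls_last D.hi]
        intro a ha v hv hav
        simp only [Set.mem_iUnion] at hv
        obtain ⟨t, ht, hv⟩ := hv
        exact D.ZM_anti t ht 0 (by omega) v hv.1 a ha hav.symm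
  · omega
  · exact anti_mono (D.Lanti (j + k) (j + k') (by omega) (by omega))
      ((Ls_R_sub D.hi h1).trans (Rd_sub L p s i j k))
      ((Ls_R_sub D.hi h1').trans (Rd_sub L p s i j k'))

lemma BiData.Ls_cov (D : BiData G s i j b NA A L qL p qp M qM J B qB Z Zb) (m : ℕ)
    (hm' : m < (s + 1 - i) + (s - j + 1)) :
    Covers G (Ls G L p s i j J Z m) (Ls G L p s i j J Z (m+1)) := by
  have hi := D.hi
  have hj1 := D.hj1
  have hj2 := D.hj2
  rcases Ls_cases D.hi D.hj2 m (by omega) with ⟨h, h1, h2, rfl⟩ | ⟨k, h1, rfl⟩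
  · rcases h1.lt_or_eq with e | e
    · rw [Ls_p h1 h2]
      have : s + 1 - h + 1 = s + 1 - (h - 1) := by omega
      rw [this, Ls_p (by omega) (by omega)]
      intro v hv
      rw [Set.mem_singleton_iff] at hv
      subst hv
      refine ⟨p h, rfl, ?_⟩
      have := D.padj (h-1) (by omega)
      rw [Nat.sub_add_cancel (by omega)] at this
      exact this.symm
    · subst e
      rw [Ls_p h1 h2]
      have : s + 1 - i + 1 = s + 2 - i + 0 := by omega
      rw [this]
      intro v hv
      exact Rd_cov0 v (Ls_R_sub D.hi (Nat.zero_le _) hv)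
  · rw [Ls_R D.hi (by omega)]
    intro v hv
    exact Rd_cov k v (Ls_R_sub (m := k + 1) D.hi (by omega) hv)

lemma BiData.reachesL (D : BiData G s i j b NA A L qL p qp M qM J B qB Z Zb) :
    Reaches G (Ls G L p s i j J Z) ((s + 1 - i) + (s - j + 1)) (UB J B) := by
  have hi := D.hi
  have hj1 := D.hj1
  have hj2 := D.hj2
  apply mkReaches
  · have := Ls_p (G := G) (L := L) (p := p) (j := j) (J := J) (Z := Z) (s := s) (i := i) (h := s + 1)
      (by omega) le_rfl
    rw [Nat.sub_self] at this
    rw [this]; simp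
  · intro m hm m' hm' hne
    have h1 := D.Ls_q m hm
    have h2 := D.Ls_q m' hm'
    exact (D.Adisj _ h1.1 _ h2.1 (fun e => hne (D.qs_inj m m' hm hm' e))).mono h1.2 h2.2
  · intro m hm
    have h1 := D.Ls_q m hm
    apply disj_UB
    intro t ht
    have h2 := D.Bq t ht
    exact (D.Adisj _ h1.1 _ h2.1 (D.qs_B m hm t ht)).mono h1.2 h2.2
  · exact fun m hm => D.Ls_cov m hm
  · have e : (s + 1 - i) + (s - j + 1) = s + 2 - i + (s - j) := by omega
    rw [e, Ls_last hi]
    intro v hv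
    obtain ⟨t, ht, hv⟩ := (mem_UB v).1 hv
    obtain ⟨x, hx, hxv⟩ := D.ZB t ht v hv
    refine ⟨x, ?_, hxv⟩
    simp only [Set.mem_iUnion]
    exact ⟨t, ht, hx⟩
  · exact fun m m' h h' => D.Ls_self_anti m m' h h'
  · intro m hm
    apply anti_UB
    intro t ht
    refine Ls_anti hi hj2 (B t) 0 ((s + 1 - i) + (s - j)) (by omega) ?_ ?_ ?_ m (by omega) (by omega)
    · intro h g1 g2 _ _
      rcases g2.lt_or_eq with e | e
      · exact D.pB_anti h (by omega) t ht
      · subst e; rw [← D.M0]; exact D.MB_anti 0 D.hb t ht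
    · intro k hk _
      exact D.LB_anti _ (by omega) t ht
    · intro e; omega

lemma BiData.M_q (D : BiData G s i j b NA A L qL p qp M qM J B qB Z Zb) (m : ℕ) (hm : m ≤ b) :
    ∃ x < NA, M m ⊆ A x ∧ ((m = 0 ∧ x = qp (s+1)) ∨ (1 ≤ m ∧ x = qM m)) := by
  rcases Nat.eq_zero_or_pos m with e | e
  · subst e
    refine ⟨qp (s+1), (D.pq _ le_rfl).1, ?_, Or.inl ⟨rfl, rfl⟩⟩
    rw [D.M0]; exact Set.singleton_subset_iff.2 (D.pq _ le_rfl).2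
  · exact ⟨qM m, (D.Mq m e hm).1, (D.Mq m e hm).2, Or.inr ⟨e, rfl⟩⟩

lemma BiData.reachesM (D : BiData G s i j b NA A L qL p qp M qM J B qB Z Zb) :
    Reaches G M b (UB J B) := by
  apply mkReaches
  · rw [D.M0]; simp
  · intro m hm m' hm' hne
    obtain ⟨x, h1, h2, h3⟩ := D.M_q m hm
    obtain ⟨x', h1', h2', h3'⟩ := D.M_q m' hm'
    refine (D.Adisj _ h1 _ h1' ?_).mono h2 h2'
    rcases h3 with ⟨a1, rfl⟩ | ⟨a1, rfl⟩ <;> rcases h3' with ⟨a2, rfl⟩ | ⟨a2, rfl⟩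
    · omega
    · exact D.pM _ _ le_rfl a2 hm'
    · exact (D.pM _ _ le_rfl a1 hm).symm
    · exact fun e => hne (D.MM _ _ a1 hm a2 hm' e)
  · intro m hm
    obtain ⟨x, h1, h2, h3⟩ := D.M_q m hm
    apply disj_UB
    intro t ht
    obtain ⟨h1', h2'⟩ := D.Bq t ht
    refine (D.Adisj _ h1 _ h1' ?_).mono h2 h2'
    rcases h3 with ⟨a1, rfl⟩ | ⟨a1, rfl⟩
    · exact D.pB _ le_rfl t ht
    · exact D.MB _ a1 hm t ht
  · exact D.Mcov
  · intro v hv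
    obtain ⟨t, ht, hv⟩ := (mem_UB v).1 hv
    obtain ⟨x, hx, hxv⟩ := D.ZbB t ht v hv
    exact ⟨x, D.Zbsub t ht hx, hxv⟩
  · exact D.Manti
  · exact fun m hm => anti_UB (fun t ht => D.MB_anti m hm t ht)

lemma BiData.parallel (D : BiData G s i j b NA A L qL p qp M qM J B qB Z Zb) :
    Parallel G (Ls G L p s i j J Z) ((s + 1 - i) + (s - j + 1)) M b := by
  have hi := D.hi
  have hj1 := D.hj1
  have hj2 := D.hj2
  refine ⟨?_, ?_, ?_⟩
  · have := Ls_p (G := G) (L := L) (p := p) (j := j) (J := J) (Z := Z) (s := s) (i := i) (h := s + 1)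
      (by omega) le_rfl
    rw [Nat.sub_self] at this
    rw [this, D.M0]
  · rw [Set.disjoint_left]
    intro v hv hv'
    simp only [Set.mem_iUnion, Finset.mem_Icc] at hv hv'
    obtain ⟨m, ⟨h1, h2⟩, hv⟩ := hv
    obtain ⟨m', ⟨h1', h2'⟩, hv'⟩ := hv'
    have a1 := D.Mq m h1 h2
    have a2 := D.Ls_q m' h2'
    exact Set.disjoint_left.1 (D.Adisj _ a2.1 _ a1.1 (D.qs_M m' m h2' h1 h2)) (a2.2 hv') (a1.2 hv)
  · intro v hv v' hv'
    simp only [Set.mem_iUnion, Finset.mem_Icc] at hv hv'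
    obtain ⟨m, ⟨h1, h2⟩, hv⟩ := hv
    obtain ⟨m', ⟨h1', h2'⟩, hv'⟩ := hv'
    refine anti_symm ?_ v hv v' hv'
    refine Ls_anti hi hj2 (M m) 1 ((s + 1 - i) + (s - j + 1)) le_rfl ?_ ?_ ?_ m' h1' h2'
    · intro h g1 g2 g3 _
      exact D.pM_anti h (by omega) m h1 h2
    · intro k hk _
      exact D.LM_anti _ (by omega) m h2
    · intro _ t ht
      exact D.ZM_anti t ht m h2

/-- integer version of an index set -/
def JZ (J : Finset ℕ) : Finset ℤ := J.map Nat.castEmbedding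
/-- integer version of a family -/
def BZ (B : ℕ → Set V) : ℤ → Set V := fun x => B x.toNat

lemma mem_JZ (x : ℤ) : x ∈ JZ J ↔ ∃ t ∈ J, (t : ℤ) = x := by
  simp [JZ]

lemma UB_Z : (⋃ x ∈ JZ J, BZ B x) = UB J B := by
  ext v
  simp only [Set.mem_iUnion, mem_UB, mem_JZ]
  constructor
  · rintro ⟨_, ⟨t, ht, rfl⟩, hv⟩
    exact ⟨t, ht, by simpa [BZ] using hv⟩
  · rintro ⟨t, ht, hv⟩
    exact ⟨t, ⟨t, ht, rfl⟩, by simpa [BZ] using hv⟩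

lemma BiData.bigrading (D : BiData G s i j b NA A L qL p qp M qM J B qB Z Zb) :
    IsBiGrading G (Ls G L p s i j J Z) ((s + 1 - i) + (s - j + 1)) M b (JZ J) (BZ B) := by
  have hi := D.hi
  have hj1 := D.hj1
  have hj2 := D.hj2
  have e : (s + 1 - i) + (s - j + 1) = s + 2 - i + (s - j) := by omega
  have rL := D.reachesL
  have rM := D.reachesM
  refine ⟨⟨⟨?_, ?_⟩, lev_of_reaches (by omega) rL, lev_of_reaches D.hb rM, D.parallel, ?_, ?_, ?_⟩,
    ?_, ?_⟩
  · intro x hx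
    obtain ⟨t, ht, rfl⟩ := (mem_JZ x).1 hx
    simpa [BZ] using D.Bne t ht
  · intro x hx y hy hxy
    obtain ⟨t, ht, rfl⟩ := (mem_JZ x).1 hx
    obtain ⟨t', ht', rfl⟩ := (mem_JZ y).1 hy
    have h1 := D.Bq t ht
    have h2 := D.Bq t' ht'
    have : Disjoint (B t) (B t') :=
      (D.Adisj _ h1.1 _ h2.1 (fun e => hxy (by rw [D.BB t ht t' ht' e]))).mono h1.2 h2.2
    simpa [BZ] using this
  · rw [UB_Z]; exact rM
  · rw [UB_Z]; exact rL
  · intro x hx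
    obtain ⟨t, ht, rfl⟩ := (mem_JZ x).1 hx
    refine ⟨⋃ t' ∈ J.filter (fun t' => t ≤ t'), Z t' ∩ Rd G L p s i j (s - j), ?_, ?_, ?_⟩
    · rw [e, Ls_last hi]
      intro v hv
      simp only [Set.mem_iUnion, Finset.mem_filter] at hv ⊢
      obtain ⟨t', ⟨h1, _⟩, h2⟩ := hv
      exact ⟨t', h1, h2⟩
    · intro y hy hty v hv
      obtain ⟨t', ht', rfl⟩ := (mem_JZ y).1 hy
      obtain ⟨x, hx, hxv⟩ := D.ZB t' ht' v (by simpa [BZ] using hv)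
      refine ⟨x, ?_, hxv⟩
      simp only [Set.mem_iUnion, Finset.mem_filter]
      exact ⟨t', ⟨ht', by exact_mod_cast hty⟩, hx⟩
    · intro y hy hty a ha v hv
      obtain ⟨t', ht', rfl⟩ := (mem_JZ y).1 hy
      simp only [Set.mem_iUnion, Finset.mem_filter] at ha
      obtain ⟨t'', ⟨h1, h2⟩, h3⟩ := ha
      have hty' : t' < t := by exact_mod_cast hty
      exact D.ZB_anti t'' h1 t' ht' (by omega) a h3.1 v (by simpa [BZ] using hv)
  · rw [UB_Z]; exact rM
  · intro x hx
    obtain ⟨t, ht, rfl⟩ := (mem_JZ x).1 hx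
    refine ⟨⋃ t' ∈ J.filter (fun t' => t' ≤ t), Zb t', ?_, ?_, ?_⟩
    · intro v hv
      simp only [Set.mem_iUnion, Finset.mem_filter] at hv ⊢
      obtain ⟨t', ⟨h1, _⟩, h2⟩ := hv
      exact D.Zbsub t' h1 h2
    · intro y hy hty v hv
      obtain ⟨t', ht', rfl⟩ := (mem_JZ y).1 hy
      obtain ⟨x, hx, hxv⟩ := D.ZbB t' ht' v (by simpa [BZ] using hv)
      refine ⟨x, ?_, hxv⟩
      simp only [Set.mem_iUnion, Finset.mem_filter]
      exact ⟨t', ⟨ht', by exact_mod_cast hty⟩, hx⟩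
    · intro y hy hty a ha v hv
      obtain ⟨t', ht', rfl⟩ := (mem_JZ y).1 hy
      simp only [Set.mem_iUnion, Finset.mem_filter] at ha
      obtain ⟨t'', ⟨h1, h2⟩, h3⟩ := ha
      have hty' : t < t' := by exact_mod_cast hty
      exact D.ZbB_anti t'' h1 t' ht' (by omega) a h3 v (by simpa [BZ] using hv)

lemma BiData.rainbow (D : BiData G s i j b NA A L qL p qp M qM J B qB Z Zb)
    (I : Finset ℤ) (A0 : ℤ → Set V) (e0 : ℕ → ℤ) (he : ∀ x < NA, e0 x ∈ I ∧ A x ⊆ A0 (e0 x))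
    (he2 : ∀ x < NA, ∀ y < NA, e0 x = e0 y → x = y) :
    RainbowBiLevelling I A0 (Ls G L p s i j J Z) ((s + 1 - i) + (s - j + 1)) M b (JZ J) (BZ B) := by
  refine ⟨fun x => e0 (qB x.toNat), fun m => e0 (qs qL qp s i j m), fun m => e0 (qM m),
    ?_, ?_, ?_, ?_, ?_, ?_, ?_, ?_, ?_⟩
  · intro x hx
    obtain ⟨t, ht, rfl⟩ := (mem_JZ x).1 hx
    have h1 := D.Bq t ht
    have h2 := he _ h1.1
    simpa [BZ] using ⟨h2.1, h1.2.trans h2.2⟩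
  · intro m hm
    have h1 := D.Ls_q m hm
    have h2 := he _ h1.1
    exact ⟨h2.1, h1.2.trans h2.2⟩
  · intro m hm1 hm
    have h1 := D.Mq m hm1 hm
    have h2 := he _ h1.1
    exact ⟨h2.1, h1.2.trans h2.2⟩
  · intro x hx y hy hxy
    obtain ⟨t, ht, rfl⟩ := (mem_JZ x).1 hx
    obtain ⟨t', ht', rfl⟩ := (mem_JZ y).1 hy
    simp only [Int.toNat_natCast] at hxy
    rw [D.BB t ht t' ht' (he2 _ (D.Bq t ht).1 _ (D.Bq t' ht').1 hxy)]
  · intro m hm m' hm' h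
    exact D.qs_inj m m' hm hm' (he2 _ (D.Ls_q m hm).1 _ (D.Ls_q m' hm').1 h)
  · intro m h1 h2 m' h1' h2' h
    exact D.MM m m' h1 h2 h1' h2' (he2 _ (D.Mq m h1 h2).1 _ (D.Mq m' h1' h2').1 h)
  · intro x hx m hm h
    obtain ⟨t, ht, rfl⟩ := (mem_JZ x).1 hx
    simp only [Int.toNat_natCast] at h
    exact D.qs_B m hm t ht (he2 _ (D.Ls_q m hm).1 _ (D.Bq t ht).1 h.symm)
  · intro x hx m h1 h2 h
    obtain ⟨t, ht, rfl⟩ := (mem_JZ x).1 hx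
    simp only [Int.toNat_natCast] at h
    exact D.MB m h1 h2 t ht (he2 _ (D.Mq m h1 h2).1 _ (D.Bq t ht).1 h.symm)
  · intro m hm m' h1 h2 h
    exact D.qs_M m m' hm h1 h2 (he2 _ (D.Ls_q m hm).1 _ (D.Mq m' h1 h2).1 h)

end verify

section stages
variable {V : Type} [Fintype V] {G : SimpleGraph V} {X0 : Set V} {z : V} {X W0 : ℕ → Set V}
  {J0 : Finset ℕ} {r b K : ℕ} {Λ κ τ ν lam dl : ℝ}

/-- outcome of the first stage -/
structure S1 (G : SimpleGraph V) (z : V) (X : ℕ → Set V) (J0 : Finset ℕ) (s K1 : ℕ) (κ2 : ℝ)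
    (L : ℕ → Set V) (q : ℕ → ℕ) (e : ℕ → ℕ) (Z D : ℕ → Set V) : Prop where
  L0 : L 0 = {z}
  Lq : ∀ h, 1 ≤ h → h ≤ s → q h ∈ J0 ∧ L h ⊆ X (q h)
  qlt : ∀ h h', 1 ≤ h → h < h' → h' ≤ s → q h < q h'
  cov : ∀ h, h < s → L (h+1) ⊆ nbhd G (L h)
  anti : ∀ h h', h + 2 ≤ h' → h' ≤ s → Disjoint (nbhd G (L h)) (L h')
  eJ : ∀ a < K1, e a ∈ J0
  einj : ∀ a < K1, ∀ a' < K1, e a = e a' → a = a'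
  qe : ∀ a < K1, ∀ h, 1 ≤ h → h ≤ s → q h < e a
  Zsub : ∀ a < K1, Z a ⊆ L s
  Dsub : ∀ a < K1, D a ⊆ X (e a)
  Dsz : ∀ a < K1, κ2 * sz (X (e a)) ≤ sz (D a)
  DZ : ∀ a < K1, D a ⊆ nbhd G (Z a)
  ZD : ∀ a < K1, ∀ a' < a, Disjoint (nbhd G (Z a)) (D a')
  LD : ∀ h < s, ∀ a < K1, Disjoint (nbhd G (L h)) (D a)

lemma stage1 {s K1 : ℕ} (C : GCtx G X0 z X X J0 r s K1 Λ 1 τ ν lam dl)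
    (hl : lam / (dl ^ s / 2) * 4 ^ K1 ≤ 1) :
    ∃ L q e Z D, S1 G z X J0 s K1 (dl ^ s / 2 / 4 ^ K1) L q e Z D := by
  obtain ⟨L, q, J, W, S, hJ, hP⟩ := growth C
  have hd : 0 < dl ^ s := pow_pos C.dl0 s
  have hDsz : ∀ t ∈ J, dl ^ s / 2 * sz (X t) ≤ sz (nbhd G (L s) ∩ W t) := by
    intro t ht
    have h1 := hP t ht
    have h2 := S.Wsz t ht
    linarith
  have hsub : ∀ t ∈ J, nbhd G (L s) ∩ W t ⊆ X t := fun t ht =>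
    Set.inter_subset_right.trans (S.Wsub t ht)
  obtain ⟨e, Z, D, he, hinj, hD⟩ := grade (G := G) (L s) K1 J (fun t => nbhd G (L s) ∩ W t)
    (lam / (dl ^ s / 2)) hJ
    (by
      intro t ht
      apply nonempty_of_sz
      have := sz_pos (C.Xne t (S.JJ0 ht))
      have h2 := hDsz t ht
      have : 0 < dl ^ s / 2 * sz (X t) := by positivity
      linarith)
    (fun t _ => Set.inter_subset_left) (div_nonneg C.hlam (by positivity)) hl
    (fun t ht => (S.lkM t ht).sub C.hlam (by positivity) subset_rfl (hsub t ht) (hDsz t ht))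
  refine ⟨L, q, e, Z, D, ⟨S.M0, S.Mq, S.qlt, S.cov, S.anti, fun a ha => S.JJ0 (he a ha), hinj,
    fun a ha h h1 h2 => S.qJ _ (he a ha) h h1 h2, fun a ha => (hD a ha).1,
    fun a ha => (hD a ha).2.1.trans (hsub _ (he a ha)), ?_, fun a ha => (hD a ha).2.2.2.1,
    fun a ha => (hD a ha).2.2.2.2, ?_⟩⟩
  · intro a ha
    have h1 := (hD a ha).2.2.1
    have h2 := hDsz _ (he a ha)
    have h4 : (0:ℝ) < 4 ^ K1 := by positivity
    rw [div_mul_eq_mul_div, div_le_iff₀ h4]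
    calc _ ≤ _ := h2
      _ ≤ _ := h1
      _ = _ := by ring
  · intro h hh a ha
    exact (S.Wanti _ (he a ha) h hh).mono_right
      ((hD a ha).2.1.trans Set.inter_subset_right)

lemma stage2 {s K2 : ℕ} (C : GCtx G X0 z X W0 J0 r s (r * (K2 + 1)) Λ κ τ ν lam dl) :
    ∃ U q J W, GState G z X W0 J0 κ lam dl (s+1) U q J W ∧ J.card = K2 ∧
      κ * dl ^ s * sz (X (q (s+1))) ≤ 16 * r * (K2 + 1) * Λ * sz (U (s+1)) ∧
      U (s+1) ⊆ W0 (q (s+1)) ∧ ∀ t ∈ J, ∀ h ≤ s, Disjoint (nbhd G (U h)) (W t) := by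
  obtain ⟨U, q, J, W, S, hJ, hP⟩ := growth C
  have hk := C.kd0 s
  have hΛ1 : 1 ≤ Λ := by
    have := C.Λ64
    have h0 : (0:ℝ) ≤ s := Nat.cast_nonneg _
    linarith
  obtain ⟨q', hq', J', hJ', hJ'c, hqJ, Zs, hZs, hZne, Mn, hMn, hMsz, W', hW'⟩ :=
    step (G := G) (U s) J W Λ (lam / (κ * dl ^ s)) r K2 C.hr hΛ1 C.hn
      (by
        intro t ht
        apply nonempty_of_sz
        have h1 := sz_pos (C.Xne t (S.JJ0 ht))
        have h2 := S.Wsz t ht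
        have : 0 < κ * dl ^ s * sz (X t) := by positivity
        linarith)
      hP
      (fun t ht => (S.lkM t ht).sub C.hlam hk subset_rfl
        ((S.Wsub t ht).trans (C.W0sub t (S.JJ0 ht))) (S.Wsz t ht))
      (div_nonneg C.hlam hk.le)
      (by
        rw [← mul_div_assoc, div_le_one hk]; exact C.hlamκ)
      hJ.ge
  have hMX : Mn ⊆ X q' := (hMn.trans Set.inter_subset_right).trans
    ((S.Wsub q' hq').trans (C.W0sub q' (S.JJ0 hq')))
  have S' := S.push Zs Mn hZs (by have := C.hb; omega) q' hq' J' hJ' hqJ hMX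
    (hMn.trans Set.inter_subset_left)
    (fun h hh => (S.Wanti q' hq' h hh).mono_right (hMn.trans Set.inter_subset_right)) W'
    (fun t ht => (hW' t ht).1)
    (by
      intro t ht
      have h1 := S.Wsz t (hJ' ht)
      have h2 := (hW' t ht).2
      have h3 := C.rdl
      have h0 := C.dl0
      calc κ * dl ^ (s+1) * sz (X t) = dl * (κ * dl ^ s * sz (X t)) := by ring
        _ ≤ dl * (4 * r * sz (W' t)) := mul_le_mul_of_nonneg_left (h1.trans h2) h0.le
        _ = (4 * r * dl) * sz (W' t) := by ring
        _ = sz (W' t) := by rw [h3, one_mul])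
    (by
      intro t ht
      have := C.lk q' (S.JJ0 hq') t (S.JJ0 (hJ' ht)) (hqJ t ht).ne
      exact fun v hv => this v (hMX hv))
  refine ⟨_, _, J', W', S', hJ'c, ?_, ?_, ?_⟩
  · rw [pushM_succ, if_pos rfl]
    exact (S.Wsz q' hq').trans hMsz
  · rw [pushM_succ, if_pos rfl]
    exact (hMn.trans Set.inter_subset_right).trans (S.Wsub q' hq')
  · intro t ht h hh
    exact S'.Wanti t ht h (by omega)

end stages

section stages3
variable {V : Type} [Fintype V] {G : SimpleGraph V} {X0 : Set V} {z : V} {X W0 : ℕ → Set V}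
  {J0 : Finset ℕ} {r b K : ℕ} {Λ κ τ ν lam dl : ℝ}

/-- outcome of the third stage -/
structure S3 (G : SimpleGraph V) (s qs : ℕ) (γ : ℝ) (L U W Z : ℕ → Set V) (J : Finset ℕ)
    (P : ℕ → Set V) (p : ℕ → V) (i j : ℕ) (J3 : Finset ℕ) (W4 : ℕ → Set V) : Prop where
  PU : P qs ⊆ U (s+1)
  PW : ∀ t ∈ J, P t ⊆ W t
  Psz : ∀ t ∈ J, 1/2 * sz (W t) ≤ sz (P t)
  pP : p (s+1) ∈ P qs
  pU : ∀ h ≤ s + 1, p h ∈ U h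
  padj : ∀ h ≤ s, G.Adj (p h) (p (h+1))
  exp0 : ∀ t ∈ J, Exq G (1/(16*γ)) (P qs) (P t)
  exp : ∀ q ∈ J, ∀ t ∈ J, q ≠ t → Exq G (1/(16*γ)) (P q) (P t)
  nd0 : ∀ t ∈ J, NDp G (2*γ) (P qs) (P t)
  nd : ∀ q ∈ J, ∀ t ∈ J, q ≠ t → NDp G (2*γ) (P q) (P t)
  hi : i ≤ s
  hj1 : 1 ≤ j
  hj2 : j ≤ s
  J3J : J3 ⊆ J
  J3c : J.card ≤ (s+1)*s*J3.card
  W4P : ∀ t ∈ J3, W4 t ⊆ P t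
  W4sz : ∀ t ∈ J3, sz (P t) ≤ (s+1)*s*sz (W4 t)
  W4Z : ∀ t ∈ J3, W4 t ⊆ nbhd G (Z t ∩ Rd G L p s i j (s-j))

lemma stage3 {s : ℕ} (hs : 1 ≤ s) {L U W Z : ℕ → Set V} {q : ℕ → ℕ} {J : Finset ℕ} {κ3 γ : ℝ}
    (S : GState G z X W0 J0 κ lam dl (s+1) U q J W)
    (hL0 : L 0 = {z}) (hLcov : ∀ h < s, L (h+1) ⊆ nbhd G (L h))
    (hLdisj : ∀ h ≤ s, ∀ h' ≤ s, h ≠ h' → Disjoint (L h) (L h'))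
    (hZ : ∀ t ∈ J, Z t ⊆ L s) (hWZ : ∀ t ∈ J, W t ⊆ nbhd G (Z t)) (hWX : ∀ t ∈ J, W t ⊆ X t)
    (hXne : ∀ t ∈ J0, (X t).Nonempty)
    (hnd : ∀ q ∈ J0, ∀ t ∈ J0, q ≠ t → NDp G ν (X q) (X t))
    (hκ3 : 0 < κ3) (hU : κ3 * sz (X (q (s+1))) ≤ sz (U (s+1)))
    (hW : κ3 ≤ κ * dl ^ (s+1)) (hν : 0 ≤ ν) (hγ : 0 < γ) (hνγ : ν / κ3 ≤ γ) (hγ8 : γ ≤ 1/8)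
    (hJγ : ((J.card : ℝ) + 1) * γ ≤ 1/2) :
    ∃ P p i j J3 W4, S3 G s (q (s+1)) γ L U W Z J P p i j J3 W4 := by
  classical
  set q' := q (s+1) with hq'
  have hqJ : ∀ t ∈ J, q' < t := fun t ht => S.qJ t ht (s+1) (by omega) le_rfl
  have hqn : q' ∉ J := fun h => lt_irrefl _ (hqJ _ h)
  have hq0 := S.Mq (s+1) (by omega) le_rfl
  let X3 : ℕ → Set V := fun t => if t = q' then U (s+1) else W t
  have hX3q : X3 q' = U (s+1) := by simp [X3]
  have hX3t : ∀ t ∈ J, X3 t = W t := by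
    intro t ht
    simp only [X3]
    rw [if_neg (hqJ t ht).ne']
  have hX3 : ∀ t ∈ insert q' J, t ∈ J0 ∧ X3 t ⊆ X t ∧ κ3 * sz (X t) ≤ sz (X3 t) := by
    intro t ht
    rcases Finset.mem_insert.1 ht with e | ht
    · rw [e, hX3q]; exact ⟨hq0.1, hq0.2, hU⟩
    · rw [hX3t t ht]
      refine ⟨S.JJ0 ht, hWX t ht, ?_⟩
      exact (mul_le_mul_of_nonneg_right hW (sz_nonneg _)).trans (S.Wsz t ht)
  have hnd3 : ∀ a ∈ insert q' J, ∀ t ∈ insert q' J, a ≠ t → NDp G γ (X3 a) (X3 t) := by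
    intro a ha t ht hne
    obtain ⟨a1, a2, a3⟩ := hX3 a ha
    obtain ⟨t1, t2, t3⟩ := hX3 t ht
    exact ((hnd a a1 t t1 hne).sub hν hκ3 a2 t2 a3 t3).mono hνγ
  have hne3 : ∀ t ∈ insert q' J, (X3 t).Nonempty := by
    intro t ht
    obtain ⟨a1, a2, a3⟩ := hX3 t ht
    apply nonempty_of_sz
    have := sz_pos (hXne t a1)
    have : 0 < κ3 * sz (X t) := by positivity
    linarith
  obtain ⟨P, hP, hPe⟩ := clean (G := G) (insert q' J) X3 γ hγ hγ8
    (by rw [Finset.card_insert_of_notMem hqn]; push_cast; exact hJγ) hne3 hnd3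
  have hPn : ∀ a ∈ insert q' J, ∀ t ∈ insert q' J, a ≠ t → NDp G (2*γ) (P a) (P t) := by
    intro a ha t ht hne
    have := (hnd3 a ha t ht hne).sub (κ := 1/2) hγ.le (by norm_num) (hP a ha).1 (hP t ht).1
      (hP a ha).2 (hP t ht).2
    exact this.mono (by rw [div_div_eq_mul_div]; linarith)
  have hq'm : q' ∈ insert q' J := Finset.mem_insert_self _ _
  have hJm : ∀ t ∈ J, t ∈ insert q' J := fun t ht => Finset.mem_insert_of_mem ht
  have hPne : (P q').Nonempty := by
    apply nonempty_of_sz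
    have h1 := (hP q' hq'm).2
    have h2 := sz_pos (hne3 q' hq'm)
    linarith
  obtain ⟨w, hw⟩ := hPne
  have hPU : P q' ⊆ U (s+1) := by have := (hP q' hq'm).1; rwa [hX3q] at this
  have hPW : ∀ t ∈ J, P t ⊆ W t := by
    intro t ht
    have := (hP t (hJm t ht)).1; rwa [hX3t t ht] at this
  obtain ⟨p, hp1, hp2, hp3⟩ := level_path (G := G) U (s+1) S.cov (s+1) le_rfl w (hPU hw)
  have hp0 : L 0 = {p 0} := by
    have := hp2 0 (by omega)
    rw [S.M0] at this
    rw [hL0, Set.mem_singleton_iff.1 this]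
  let SS : Finset (ℕ × ℕ) := Finset.range (s+1) ×ˢ Finset.Icc 1 s
  have hSSc : SS.card = (s+1) * s := by simp [SS]
  have hSSne : SS.Nonempty := by
    rw [← Finset.card_pos, hSSc]
    exact Nat.mul_pos (by omega) (by omega)
  let E : ℕ → ℕ × ℕ → Set V := fun t a => nbhd G (Z t ∩ Rd G L p s a.1 a.2 (s - a.2))
  have h1 : ∀ t, ∃ a ∈ SS, t ∈ J → sz (P t) ≤ SS.card * sz (E t a ∩ P t) := by
    intro t
    by_cases ht : t ∈ J
    · obtain ⟨a, ha, hh⟩ := pigeon_set SS (P t) (E t) hSSne (by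
        intro v hv
        obtain ⟨x, hx, hxv⟩ := hWZ t ht (hPW t ht hv)
        obtain ⟨i, hi, j, hj1, hj2, hR⟩ := desc (G := G) L p s hs hp0 hLcov hLdisj x (hZ t ht hx)
        simp only [Set.mem_iUnion]
        refine ⟨(i, j), ?_, x, ⟨hx, hR⟩, hxv⟩
        simp only [SS, Finset.mem_product, Finset.mem_range, Finset.mem_Icc]
        omega)
      exact ⟨a, ha, fun _ => hh⟩
    · obtain ⟨a, ha⟩ := hSSne
      exact ⟨a, ha, fun h => absurd h ht⟩
  choose f hf hf2 using h1
  obtain ⟨⟨i, j⟩, hij, hc⟩ := pigeon_fin J SS f hSSne (fun t _ => hf t)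
  have hij' : i < s + 1 ∧ 1 ≤ j ∧ j ≤ s := by
    simpa only [SS, Finset.mem_product, Finset.mem_range, Finset.mem_Icc] using hij
  refine ⟨P, p, i, j, J.filter (fun t => f t = (i,j)), fun t => E t (i,j) ∩ P t, ?_⟩
  constructor
  · exact hPU
  · exact hPW
  · intro t ht
    have := (hP t (hJm t ht)).2; rwa [hX3t t ht] at this
  · rw [hp1]; exact hw
  · exact hp2
  · exact fun h hh => hp3 h (by omega)
  · exact fun t ht => hPe q' hq'm t (hJm t ht) (hqJ t ht).ne
  · exact fun a ha t ht hne => hPe a (hJm a ha) t (hJm t ht) hne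
  · exact fun t ht => hPn q' hq'm t (hJm t ht) (hqJ t ht).ne
  · exact fun a ha t ht hne => hPn a (hJm a ha) t (hJm t ht) hne
  · omega
  · omega
  · omega
  · exact Finset.filter_subset _ _
  · rw [hSSc] at hc; exact hc
  · exact fun t _ => Set.inter_subset_right
  · intro t ht
    obtain ⟨ht1, ht2⟩ := Finset.mem_filter.1 ht
    have := hf2 t ht1
    rw [hSSc, ht2] at this
    push_cast at this
    exact this
  · exact fun t _ => Set.inter_subset_left

/-- outcome of the fourth stage -/
lemma stage4 {P W4 : ℕ → Set V} {J3 : Finset ℕ} {w : V} {K' : ℕ} (hK' : 1 ≤ K')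
    (C : GCtx G X0 w P W4 J3 r b (r * K') Λ κ τ ν lam dl)
    (hl : lam / (κ * dl ^ b / (2 * r)) * 4 ^ K' ≤ 1/4) :
    ∃ (M : ℕ → Set V) (qM : ℕ → ℕ) (J4 : Finset ℕ) (W5 : ℕ → Set V) (J : Finset ℕ)
      (B Zb : ℕ → Set V), GState G w P W4 J3 κ lam dl b M qM J4 W5 ∧ J ⊆ J4 ∧ J.card = K' ∧
      (∀ t ∈ J, Zb t ⊆ M b ∧ B t ⊆ W5 t ∧
        κ * dl ^ b / (2 * r) * sz (P t) ≤ 8 * K' * Λ * 4 ^ K' * sz (B t) ∧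
        B t ⊆ nbhd G (Zb t) ∧ ∀ t' ∈ J, t < t' → Disjoint (nbhd G (Zb t)) (B t')) ∧
      ∀ t ∈ J, ∀ t' ∈ J, t ≠ t' → Lk G (4 ^ K' * (lam / (κ * dl ^ b / (2 * r)))) (B t) (B t') := by
  obtain ⟨M, qM, J4, W5, S, hJ, hP⟩ := growth C
  have hk := C.kd0 b
  have hr0 : (0:ℝ) < r := by exact_mod_cast C.hr
  have hΛ1 : 1 ≤ Λ := by
    have := C.Λ64
    have h0 : (0:ℝ) ≤ b := Nat.cast_nonneg _
    linarith
  obtain ⟨k, _, R, hR, D, hRc, hD⟩ := classes (G := G) (M b) J4 (fun t => nbhd G (M b) ∩ W5 t) Λ r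
    C.hr C.hn (fun t _ => Set.inter_subset_left)
  have hRK : K' ≤ R.card := by
    rw [hJ] at hRc
    exact Nat.le_of_mul_le_mul_left hRc (by have := C.hr; omega)
  obtain ⟨J, hJR, hJc⟩ := Finset.exists_subset_card_eq hRK
  set κ' := κ * dl ^ b / (2 * r) with hκ'
  have hκ'0 : 0 < κ' := by positivity
  have hDP : ∀ t ∈ R, D t ⊆ P t := fun t ht => ((hD t ht).1.trans Set.inter_subset_right).trans
    ((S.Wsub t (hR ht)).trans (C.W0sub t (S.JJ0 (hR ht))))
  have hDsz : ∀ t ∈ R, κ' * sz (P t) ≤ sz (D t) := by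
    intro t ht
    have h1 := hP t (hR ht)
    have h2 := S.Wsz t (hR ht)
    have h3 := (hD t ht).2.1
    rw [hκ', div_mul_eq_mul_div, div_le_iff₀ (by positivity)]
    linarith
  obtain ⟨Zb, B, hB1, hB2⟩ := backgrade (G := G) (M b) J D Λ hΛ1 k
    (fun t ht => (hD t (hJR ht)).2.2)
    (by
      intro t ht
      apply nonempty_of_sz
      have h1 := sz_pos (C.Xne t (S.JJ0 (hR (hJR ht))))
      have h2 := hDsz t (hJR ht)
      have : 0 < κ' * sz (P t) := by positivity
      linarith)
    (lam / κ') (lam / κ') (div_nonneg C.hlam hκ'0.le) (div_nonneg C.hlam hκ'0.le)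
    (by rw [hJc]; exact hl)
    (fun t ht => (S.lkM t (hR (hJR ht))).sub C.hlam hκ'0 subset_rfl (hDP t (hJR ht))
      (hDsz t (hJR ht)))
    (fun t ht t' ht' hne => (C.lk t (S.JJ0 (hR (hJR ht))) t' (S.JJ0 (hR (hJR ht'))) hne).sub C.hlam
      hκ'0 (hDP t (hJR ht)) (hDP t' (hJR ht')) (hDsz t' (hJR ht')))
  refine ⟨M, qM, J4, W5, J, B, Zb, S, hJR.trans hR, hJc, ?_, ?_⟩
  · intro t ht
    obtain ⟨g1, g2, g3, g4, g5⟩ := hB1 t ht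
    rw [hJc] at g3
    exact ⟨g1, g2.trans ((hD t (hJR ht)).1.trans Set.inter_subset_right),
      (hDsz t (hJR ht)).trans g3, g4, g5⟩
  · rw [hJc] at hB2; exact hB2

end stages3

/-- the numerical hypotheses -/
structure Num (s ℓ K' r K0 K1 K2 K3 : ℕ) (dl κ2 κ4 κ5 Λ γ lam lam' n : ℝ) : Prop where
  hs : 1 ≤ s
  hℓ : 3 * s + 1 ≤ ℓ
  hK' : 1 ≤ K'
  hr : 1 ≤ r
  hK3 : K3 = Kf r (r * K') ℓ
  hK2 : K2 = (s+1) * s * K3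
  hK1 : K1 = Kf r (r * (K2 + 1)) s
  hK0 : K0 = Kf r K1 s
  hdl : dl = 1 / (4 * r)
  hκ2 : κ2 = dl ^ s / 2 / 4 ^ K1
  hκ4 : κ4 = κ2 * dl ^ (s+1) / 2
  hκ5 : κ5 = 1 / (((s:ℝ)+1) * s)
  a1 : 64 * r * (K0 + 1) * (s + 1) ≤ Λ * (1 * dl ^ s)
  a2 : 64 * r * (K1 + 1) * (s + 1) ≤ Λ * (κ2 * dl ^ s)
  a3 : 32 * r * (K2 + 1) ≤ Λ * (κ2 * dl ^ (s+1))
  a4 : 64 * r * (K3 + 1) * (ℓ + 1) ≤ Λ * (κ5 * dl ^ ℓ)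
  a5 : 2 * (K0:ℝ) + 2 * K2 + 64 * ℓ + 64 ≤ Λ * 1
  a6 : 16 * K' * 4 ^ K' ≤ Λ * (κ5 * dl ^ ℓ / (2 * r) * κ4)
  b1 : lam * (16 * r) ≤ dl ^ s
  b2 : lam * (2 * 4 ^ K1) ≤ dl ^ s / 2
  b3 : lam * (16 * r) ≤ κ2 * dl ^ s
  b4 : lam * (16 * r) ≤ κ5 * dl ^ ℓ * κ4
  b5 : lam * (8 * 4 ^ K') ≤ κ5 * dl ^ ℓ / (2 * r) * κ4
  b6 : lam * (2 * 4 ^ K') ≤ lam' * (κ5 * dl ^ ℓ / (2 * r) * κ4)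
  hlam : 0 ≤ lam
  g0 : 0 < γ
  g8 : γ * Λ ^ 8 ≤ 1
  hn : n ≤ Λ ^ r
  hns : n < (1 / (γ * Λ ^ 3)) ^ s

section num
variable {s ℓ K' r K0 K1 K2 K3 : ℕ} {dl κ2 κ4 κ5 Λ γ lam lam' n : ℝ}

lemma Num.Λ64 (N : Num s ℓ K' r K0 K1 K2 K3 dl κ2 κ4 κ5 Λ γ lam lam' n) : 64 ≤ Λ := by
  have := N.a5
  have h1 : (0:ℝ) ≤ K0 := Nat.cast_nonneg _
  have h2 : (0:ℝ) ≤ K2 := Nat.cast_nonneg _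
  have h3 : (0:ℝ) ≤ ℓ := Nat.cast_nonneg _
  linarith

lemma Num.Λ1 (N : Num s ℓ K' r K0 K1 K2 K3 dl κ2 κ4 κ5 Λ γ lam lam' n) : 1 ≤ Λ := by
  linarith [N.Λ64]

lemma Num.gk (N : Num s ℓ K' r K0 K1 K2 K3 dl κ2 κ4 κ5 Λ γ lam lam' n) {k : ℕ} (hk : k ≤ 8) :
    γ * Λ ^ k ≤ 1 :=
  (mul_le_mul_of_nonneg_left (pow_le_pow_right₀ N.Λ1 hk) N.g0.le).trans N.g8

lemma Num.r0 (N : Num s ℓ K' r K0 K1 K2 K3 dl κ2 κ4 κ5 Λ γ lam lam' n) : (0:ℝ) < r := by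
  exact_mod_cast N.hr

lemma Num.dl0 (N : Num s ℓ K' r K0 K1 K2 K3 dl κ2 κ4 κ5 Λ γ lam lam' n) : 0 < dl := by
  rw [N.hdl]; have := N.r0; positivity

lemma Num.dl1 (N : Num s ℓ K' r K0 K1 K2 K3 dl κ2 κ4 κ5 Λ γ lam lam' n) : dl ≤ 1 := by
  rw [N.hdl]
  have : (1:ℝ) ≤ r := by exact_mod_cast N.hr
  rw [div_le_one (by linarith)]; linarith

lemma Num.κ20 (N : Num s ℓ K' r K0 K1 K2 K3 dl κ2 κ4 κ5 Λ γ lam lam' n) : 0 < κ2 := by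
  rw [N.hκ2]; have := N.dl0; positivity

lemma Num.κ21 (N : Num s ℓ K' r K0 K1 K2 K3 dl κ2 κ4 κ5 Λ γ lam lam' n) : κ2 ≤ 1 := by
  rw [N.hκ2, div_div, div_le_one (by positivity)]
  have h1 : dl ^ s ≤ 1 := pow_le_one₀ N.dl0.le N.dl1
  have h2 : (1:ℝ) ≤ 4 ^ K1 := one_le_pow₀ (by norm_num)
  linarith

lemma Num.κ40 (N : Num s ℓ K' r K0 K1 K2 K3 dl κ2 κ4 κ5 Λ γ lam lam' n) : 0 < κ4 := by
  rw [N.hκ4]; have := N.dl0; have := N.κ20; positivity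

lemma Num.s0 (N : Num s ℓ K' r K0 K1 K2 K3 dl κ2 κ4 κ5 Λ γ lam lam' n) : (1:ℝ) ≤ s := by
  exact_mod_cast N.hs

lemma Num.κ50 (N : Num s ℓ K' r K0 K1 K2 K3 dl κ2 κ4 κ5 Λ γ lam lam' n) : 0 < κ5 := by
  rw [N.hκ5]; have := N.s0; positivity

lemma Num.κ51 (N : Num s ℓ K' r K0 K1 K2 K3 dl κ2 κ4 κ5 Λ γ lam lam' n) : κ5 ≤ 1 := by
  have := N.s0
  rw [N.hκ5, div_le_one (by positivity)]; nlinarith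

lemma Num.tau (N : Num s ℓ K' r K0 K1 K2 K3 dl κ2 κ4 κ5 Λ γ lam lam' n) {γ' : ℝ} {b : ℕ}
    (h0 : 0 < γ') (h1 : γ' ≤ γ * Λ ^ 2) (hb : s ≤ b) (hbℓ : b ≤ ℓ) :
    4 * b * Λ ≤ 1 / (16 * γ') ∧ n < (1 / (16 * γ') / 2) ^ b := by
  have g := N.g0
  have hΛ := N.Λ64
  have h3 := N.gk (k := 3) (by norm_num)
  have h4 := N.gk (k := 4) (by norm_num)
  have hbΛ : 64 * (b:ℝ) ≤ Λ := by
    have := N.a5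
    have h1 : (0:ℝ) ≤ K0 := Nat.cast_nonneg _
    have h2 : (0:ℝ) ≤ K2 := Nat.cast_nonneg _
    have h3 : (b:ℝ) ≤ ℓ := by exact_mod_cast hbℓ
    linarith
  have hb0 : (0:ℝ) ≤ b := Nat.cast_nonneg _
  constructor
  · rw [le_div_iff₀ (by positivity)]
    calc 4 * b * Λ * (16 * γ') = 64 * b * Λ * γ' := by ring
      _ ≤ Λ * Λ * (γ * Λ ^ 2) := by gcongr
      _ = γ * Λ ^ 4 := by ring
      _ ≤ 1 := h4
  · have e1 : 1 / (γ * Λ ^ 3) ≤ 1 / (16 * γ') / 2 := by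
      rw [div_div]
      apply one_div_le_one_div_of_le (by positivity)
      calc 16 * γ' * 2 = 32 * γ' := by ring
        _ ≤ Λ * (γ * Λ ^ 2) := by gcongr; linarith
        _ = γ * Λ ^ 3 := by ring
    have hpos : 0 < γ * Λ ^ 3 := by positivity
    have e2 : 1 ≤ 1 / (γ * Λ ^ 3) := by rw [le_div_iff₀ hpos]; linarith
    calc n < _ := N.hns
      _ ≤ (1 / (γ * Λ ^ 3)) ^ b := pow_le_pow_right₀ e2 hb
      _ ≤ _ := pow_le_pow_left₀ (by positivity) e1 b

end num

section core
variable {V : Type} [Fintype V] {G : SimpleGraph V}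
  {s ℓ K' r K0 K1 K2 K3 : ℕ} {dl κ2 κ4 κ5 Λ γ lam lam' : ℝ}

lemma ctx1 (N : Num s ℓ K' r K0 K1 K2 K3 dl κ2 κ4 κ5 Λ γ lam lam' (Fintype.card V))
    (X : ℕ → Set V) (z : V) (hz : z ∈ X 0) (hne : ∀ x ≤ K0, (X x).Nonempty)
    (hex : ∀ x ≤ K0, ∀ y ≤ K0, x ≠ y → Exq G (1/(16*γ)) (X x) (X y))
    (hnd : ∀ x ≤ K0, ∀ y ≤ K0, x ≠ y → NDp G (2*γ) (X x) (X y))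
    (hlk : ∀ x ≤ K0, ∀ y ≤ K0, x ≠ y → Lk G (2*lam) (X x) (X y)) :
    GCtx G (X 0) z X X (Finset.Icc 1 K0) r s K1 Λ 1 (1/(16*γ)) (2*γ) (2*lam) dl := by
  have hm : ∀ t ∈ Finset.Icc 1 K0, 1 ≤ t ∧ t ≤ K0 := fun t ht => Finset.mem_Icc.1 ht
  have hℓ := N.hℓ
  have hΛ2 : γ ≤ γ * Λ ^ 2 := le_mul_of_one_le_right N.g0.le (one_le_pow₀ N.Λ1)
  have ht := N.tau N.g0 hΛ2 le_rfl (by omega)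
  constructor
  · exact N.hr
  · exact N.hs
  · exact N.hn
  · exact hz
  · exact fun t _ => subset_rfl
  · intro t _; rw [one_mul]
  · exact fun t ht => hne t (hm t ht).2
  · intro t ht; obtain ⟨h1, h2⟩ := hm t ht; exact hex 0 (by omega) t h2 (by omega)
  · intro q hq t ht h; exact hex q (hm q hq).2 t (hm t ht).2 h
  · intro t ht; obtain ⟨h1, h2⟩ := hm t ht; exact hnd 0 (by omega) t h2 (by omega)
  · intro q hq t ht h; exact hnd q (hm q hq).2 t (hm t ht).2 h
  · intro t ht; obtain ⟨h1, h2⟩ := hm t ht; exact hlk 0 (by omega) t h2 (by omega)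
  · intro q hq t ht h; exact hlk q (hm q hq).2 t (hm t ht).2 h
  · rw [Nat.card_Icc, ← N.hK0]; omega
  · exact N.hdl
  · norm_num
  · exact le_rfl
  · linarith [N.g0]
  · have h1 := N.gk (k := 6) (by norm_num)
    have h2 := N.Λ64
    have : 0 ≤ γ * Λ ^ 5 := by have := N.g0; positivity
    calc 2 * γ * Λ ^ 5 = γ * Λ ^ 5 * 2 := by ring
      _ ≤ γ * Λ ^ 5 * Λ := by gcongr; linarith
      _ = γ * Λ ^ 6 := by ring
      _ ≤ 1 := h1
  · rw [← N.hK0]; exact N.a1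
  · linarith [N.hlam]
  · rw [one_mul]; linarith [N.b1]
  · exact ht.1
  · exact ht.2

lemma ctx2 (N : Num s ℓ K' r K0 K1 K2 K3 dl κ2 κ4 κ5 Λ γ lam lam' (Fintype.card V))
    (X : ℕ → Set V) (z : V) (hz : z ∈ X 0) (hne : ∀ x ≤ K0, (X x).Nonempty)
    (hex : ∀ x ≤ K0, ∀ y ≤ K0, x ≠ y → Exq G (1/(16*γ)) (X x) (X y))
    (hnd : ∀ x ≤ K0, ∀ y ≤ K0, x ≠ y → NDp G (2*γ) (X x) (X y))
    (hlk : ∀ x ≤ K0, ∀ y ≤ K0, x ≠ y → Lk G (2*lam) (X x) (X y))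
    {L : ℕ → Set V} {q e : ℕ → ℕ} {Z D : ℕ → Set V}
    (H : S1 G z X (Finset.Icc 1 K0) s K1 κ2 L q e Z D) :
    GCtx G (X 0) z (fun a => X (e a)) D (Finset.range K1) r s (r * (K2 + 1)) Λ κ2 (1/(16*γ))
      (2*γ) (2*lam) dl := by
  have hm : ∀ t ∈ Finset.range K1, 1 ≤ e t ∧ e t ≤ K0 := fun t ht =>
    Finset.mem_Icc.1 (H.eJ t (Finset.mem_range.1 ht))
  have hinj : ∀ q ∈ Finset.range K1, ∀ t ∈ Finset.range K1, q ≠ t → e q ≠ e t := by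
    intro q hq t ht hne h
    exact hne (H.einj q (Finset.mem_range.1 hq) t (Finset.mem_range.1 ht) h)
  have C := ctx1 N X z hz hne hex hnd hlk
  constructor
  · exact N.hr
  · exact N.hs
  · exact N.hn
  · exact hz
  · exact fun t ht => H.Dsub t (Finset.mem_range.1 ht)
  · exact fun t ht => H.Dsz t (Finset.mem_range.1 ht)
  · exact fun t ht => hne _ (hm t ht).2
  · intro t ht; obtain ⟨h1, h2⟩ := hm t ht; exact hex 0 (by omega) _ h2 (by omega)
  · intro q hq t ht h; exact hex _ (hm q hq).2 _ (hm t ht).2 (hinj q hq t ht h)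
  · intro t ht; obtain ⟨h1, h2⟩ := hm t ht; exact hnd 0 (by omega) _ h2 (by omega)
  · intro q hq t ht h; exact hnd _ (hm q hq).2 _ (hm t ht).2 (hinj q hq t ht h)
  · intro t ht; obtain ⟨h1, h2⟩ := hm t ht; exact hlk 0 (by omega) _ h2 (by omega)
  · intro q hq t ht h; exact hlk _ (hm q hq).2 _ (hm t ht).2 (hinj q hq t ht h)
  · rw [Finset.card_range, ← N.hK1]
  · exact N.hdl
  · exact N.κ20
  · exact N.κ21
  · exact C.hν
  · exact C.hνΛ
  · rw [← N.hK1]; exact N.a2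
  · exact C.hlam
  · linarith [N.b3]
  · exact C.hτ
  · exact C.hτn

lemma ctx4 (N : Num s ℓ K' r K0 K1 K2 K3 dl κ2 κ4 κ5 Λ γ lam lam' (Fintype.card V))
    {Y : ℕ → Set V} {q' : ℕ} {L U W Z : ℕ → Set V} {J : Finset ℕ}
    {P : ℕ → Set V} {p : ℕ → V} {i j : ℕ} {J3 : Finset ℕ} {W4 : ℕ → Set V}
    (H : S3 G s q' (γ * Λ ^ 2) L U W Z J P p i j J3 W4) (hJ : J.card = K2)
    (hWY : ∀ t ∈ J, W t ⊆ Y t) (hYne : ∀ t ∈ J, (Y t).Nonempty)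
    (hWsz : ∀ t ∈ J, κ2 * dl ^ (s+1) * sz (Y t) ≤ sz (W t))
    (hPq : P q' ⊆ Y q') (hlk0 : ∀ t ∈ J, Lk G (2*lam) (Y q') (Y t))
    (hlk : ∀ q ∈ J, ∀ t ∈ J, q ≠ t → Lk G (2*lam) (Y q) (Y t)) (b : ℕ) (hb : s ≤ b) (hbℓ : b ≤ ℓ) :
    GCtx G (P q') (p (s+1)) P W4 J3 r b (r * K') Λ κ5 (1/(16*(γ * Λ ^ 2)))
      (2*(γ * Λ ^ 2)) (2*lam/κ4) dl := by
  have hℓ := N.hℓ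
  have g := N.g0
  have hΛ := N.Λ64
  have hP : ∀ t ∈ J, κ4 * sz (Y t) ≤ sz (P t) := by
    intro t ht
    have h1 := H.Psz t ht
    have h2 := hWsz t ht
    rw [N.hκ4]
    linarith
  have hPY : ∀ t ∈ J, P t ⊆ Y t := fun t ht => (H.PW t ht).trans (hWY t ht)
  have ht := N.tau (γ' := γ * Λ ^ 2) (by positivity) le_rfl hb hbℓ
  have hKf : Kf r (r * K') b ≤ K3 := by rw [N.hK3]; exact Kf_mono_b _ _ N.hr hbℓ
  have hdl : dl ^ ℓ ≤ dl ^ b := pow_le_pow_of_le_one N.dl0.le N.dl1 hbℓ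
  have hs := N.hs
  have hlam2 : 0 ≤ 2 * lam := by linarith [N.hlam]
  have hr := N.r0
  constructor
  · exact N.hr
  · omega
  · exact N.hn
  · exact H.pP
  · exact H.W4P
  · intro t ht
    have h1 := H.W4sz t ht
    have h2 := N.s0
    rw [N.hκ5, div_mul_eq_mul_div, div_le_iff₀ (by positivity)]
    linarith
  · intro t ht
    apply nonempty_of_sz
    have h1 := sz_pos (hYne t (H.J3J ht))
    have h2 := hP t (H.J3J ht)
    have h3 := N.κ40
    have : 0 < κ4 * sz (Y t) := by positivity
    linarith
  · exact fun t ht => H.exp0 t (H.J3J ht)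
  · exact fun q hq t ht h => H.exp q (H.J3J hq) t (H.J3J ht) h
  · exact fun t ht => H.nd0 t (H.J3J ht)
  · exact fun q hq t ht h => H.nd q (H.J3J hq) t (H.J3J ht) h
  · exact fun t ht => (hlk0 t (H.J3J ht)).sub hlam2 N.κ40 hPq (hPY t (H.J3J ht)) (hP t (H.J3J ht))
  · exact fun q hq t ht h => (hlk q (H.J3J hq) t (H.J3J ht) h).sub hlam2 N.κ40 (hPY q (H.J3J hq))
      (hPY t (H.J3J ht)) (hP t (H.J3J ht))
  · refine hKf.trans ?_
    have h1 := H.J3c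
    rw [hJ, N.hK2] at h1
    exact Nat.le_of_mul_le_mul_left h1 (Nat.mul_pos (by omega) (by omega))
  · exact N.hdl
  · exact N.κ50
  · exact N.κ51
  · positivity
  · have h1 := N.gk (k := 8) (by norm_num)
    have : 0 ≤ γ * Λ ^ 7 := by positivity
    calc 2 * (γ * Λ ^ 2) * Λ ^ 5 = γ * Λ ^ 7 * 2 := by ring
      _ ≤ γ * Λ ^ 7 * Λ := by gcongr; linarith
      _ = γ * Λ ^ 8 := by ring
      _ ≤ 1 := h1
  · have h1 : (Kf r (r * K') b : ℝ) ≤ K3 := by exact_mod_cast hKf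
    have h2 : (b:ℝ) ≤ ℓ := by exact_mod_cast hbℓ
    have h5 := N.κ50
    calc (64:ℝ) * r * (Kf r (r * K') b + 1) * (b + 1) ≤ 64 * r * (K3 + 1) * (ℓ + 1) := by gcongr
      _ ≤ _ := N.a4
      _ ≤ Λ * (κ5 * dl ^ b) := by gcongr
  · exact div_nonneg hlam2 N.κ40.le
  · have h4 := N.κ40
    have h5 := N.κ50
    rw [← mul_div_assoc, div_le_iff₀ h4]
    calc 8 * r * (2 * lam) = lam * (16 * r) := by ring
      _ ≤ _ := N.b4
      _ ≤ _ := by gcongr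
  · exact ht.1
  · exact ht.2

end core

section core2
variable {V : Type} [Fintype V] {G : SimpleGraph V}
  {s ℓ K' r K0 K1 K2 K3 : ℕ} {dl κ2 κ4 κ5 Λ γ lam lam' : ℝ}

lemma core (N : Num s ℓ K' r K0 K1 K2 K3 dl κ2 κ4 κ5 Λ γ lam lam' (Fintype.card V))
    (A : ℕ → Set V) (hAne : ∀ x ≤ K0, (A x).Nonempty)
    (hAd : ∀ x < K0 + 1, ∀ y < K0 + 1, x ≠ y → Disjoint (A x) (A y))
    (hAnd : ∀ x ≤ K0, ∀ y ≤ K0, x ≠ y → NDp G γ (A x) (A y))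
    (hAlk : ∀ x ≤ K0, ∀ y ≤ K0, x ≠ y → Lk G lam (A x) (A y)) :
    ∃ (i j b : ℕ) (L : ℕ → Set V) (qL : ℕ → ℕ) (p : ℕ → V) (qp : ℕ → ℕ) (M : ℕ → Set V)
      (qM : ℕ → ℕ) (J : Finset ℕ) (B : ℕ → Set V) (qB : ℕ → ℕ) (Z Zb : ℕ → Set V),
      BiData G s i j b (K0+1) A L qL p qp M qM J B qB Z Zb ∧
      (s + 1 - i) + (s - j + 1) + b = ℓ ∧ J.card = K' ∧
      (∀ t ∈ J, sz (A (qB t)) ≤ Λ ^ 2 * sz (B t)) ∧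
      ∀ t ∈ J, ∀ t' ∈ J, t ≠ t' → Lk G lam' (B t) (B t') := by
  have g := N.g0
  have hΛ := N.Λ64
  have hΛ0 : 0 < Λ := by linarith
  have g1 := N.gk (k := 1) (by norm_num)
  have g3 := N.gk (k := 3) (by norm_num)
  have hK0r : (0:ℝ) ≤ K0 := Nat.cast_nonneg _
  have hK2r : (0:ℝ) ≤ K2 := Nat.cast_nonneg _
  have hℓr : (0:ℝ) ≤ ℓ := Nat.cast_nonneg _
  have a5 := N.a5
  have hs := N.hs
  have hℓ := N.hℓ
  have hr0 := N.r0
  have hd0 := N.dl0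
  have hκ20 := N.κ20
  have hκ40 := N.κ40
  have hκ50 := N.κ50
  -- cleaning
  obtain ⟨X, hX, hex⟩ := clean (G := G) (Finset.range (K0+1)) A γ g
    (by
      have : γ * 8 ≤ γ * Λ ^ 1 := by rw [pow_one]; gcongr; linarith
      linarith)
    (by
      rw [Finset.card_range]; push_cast
      have : γ * (2 * ((K0:ℝ) + 1)) ≤ γ * Λ ^ 1 := by rw [pow_one]; gcongr; linarith
      linarith)
    (fun x hx => hAne x (by have := Finset.mem_range.1 hx; omega))
    (fun x hx y hy h => hAnd x (by have := Finset.mem_range.1 hx; omega) y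
      (by have := Finset.mem_range.1 hy; omega) h)
  have hm : ∀ x ≤ K0, x ∈ Finset.range (K0+1) := fun x hx => Finset.mem_range.2 (by omega)
  have hne : ∀ x ≤ K0, (X x).Nonempty := by
    intro x hx
    apply nonempty_of_sz
    have h1 := sz_pos (hAne x hx)
    have h2 := (hX x (hm x hx)).2
    linarith
  have hXA : ∀ x ≤ K0, X x ⊆ A x := fun x hx => (hX x (hm x hx)).1
  have hex' : ∀ x ≤ K0, ∀ y ≤ K0, x ≠ y → Exq G (1/(16*γ)) (X x) (X y) :=
    fun x hx y hy h => hex x (hm x hx) y (hm y hy) h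
  have hnd : ∀ x ≤ K0, ∀ y ≤ K0, x ≠ y → NDp G (2*γ) (X x) (X y) := by
    intro x hx y hy h
    refine ((hAnd x hx y hy h).sub (κ := 1/2) g.le (by norm_num) (hXA x hx) (hXA y hy)
      (hX x (hm x hx)).2 (hX y (hm y hy)).2).mono ?_
    rw [div_div_eq_mul_div]; linarith
  have hlk : ∀ x ≤ K0, ∀ y ≤ K0, x ≠ y → Lk G (2*lam) (X x) (X y) := by
    intro x hx y hy h
    have := (hAlk x hx y hy h).sub (κ := 1/2) N.hlam (by norm_num) (hXA x hx) (hXA y hy)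
      (hX y (hm y hy)).2
    have e : lam / (1/2) = 2 * lam := by ring
    rwa [e] at this
  obtain ⟨z, hz⟩ := hne 0 (by omega)
  -- stage 1
  have C1 := ctx1 N X z hz hne hex' hnd hlk
  obtain ⟨L, q1, e, Z, D, H1⟩ := stage1 C1 (by
    rw [div_mul_eq_mul_div, div_le_one (by positivity)]
    have := N.b2
    linarith)
  rw [← N.hκ2] at H1
  have hLdisj : ∀ h ≤ s, ∀ h' ≤ s, h ≠ h' → Disjoint (L h) (L h') := by
    have key : ∀ h ≤ s, ∃ x < K0 + 1, L h ⊆ A x ∧ ((h = 0 ∧ x = 0) ∨ (1 ≤ h ∧ 1 ≤ x ∧ x = q1 h)) := by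
      intro h hh
      rcases Nat.eq_zero_or_pos h with e | e
      · subst e
        refine ⟨0, by omega, ?_, Or.inl ⟨rfl, rfl⟩⟩
        rw [H1.L0]; exact Set.singleton_subset_iff.2 (hXA 0 (by omega) hz)
      · obtain ⟨a1, a2⟩ := H1.Lq h e hh
        have a3 := Finset.mem_Icc.1 a1
        exact ⟨q1 h, by omega, a2.trans (hXA _ a3.2), Or.inr ⟨e, a3.1, rfl⟩⟩
    intro h hh h' hh' hne'
    obtain ⟨x, x1, x2, x3⟩ := key h hh
    obtain ⟨y, y1, y2, y3⟩ := key h' hh'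
    refine (hAd x x1 y y1 ?_).mono x2 y2
    rcases x3 with ⟨u1, u2⟩ | ⟨u1, u2, u3⟩ <;> rcases y3 with ⟨v1, v2⟩ | ⟨v1, v2, v3⟩
    · omega
    · omega
    · omega
    · rcases lt_or_gt_of_ne hne' with c | c
      · have := H1.qlt h h' u1 c hh'; omega
      · have := H1.qlt h' h v1 c hh; omega
  -- stage 2
  have C2 := ctx2 N X z hz hne hex' hnd hlk H1
  obtain ⟨U, qU, J2, W3, S2, hJ2, hUsz, hUD, hWU⟩ := stage2 C2
  have hJ2K : ∀ t ∈ J2, t < K1 := fun t ht => Finset.mem_range.1 (S2.JJ0 ht)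
  have hqsK : qU (s+1) < K1 := Finset.mem_range.1 (S2.Mq (s+1) (by omega) le_rfl).1
  have hqst : ∀ t ∈ J2, qU (s+1) < t := fun t ht => S2.qJ t ht (s+1) (by omega) le_rfl
  have heI : ∀ a < K1, 1 ≤ e a ∧ e a ≤ K0 := fun a ha => Finset.mem_Icc.1 (H1.eJ a ha)
  have hene : ∀ a < K1, ∀ a' < K1, a ≠ a' → e a ≠ e a' :=
    fun a ha a' ha' h h' => h (H1.einj a ha a' ha' h')
  -- stage 3
  set κ3 : ℝ := κ2 * dl ^ (s+1) / (16 * r * (K2 + 1) * Λ) with hκ3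
  have hden : 0 < 16 * (r:ℝ) * (K2 + 1) * Λ := by positivity
  have hκ30 : 0 < κ3 := by positivity
  obtain ⟨P, p, i, j, J3, W4, H3⟩ := stage3 (ν := 2 * γ) (γ := γ * Λ ^ 2) (κ3 := κ3) (L := L) (Z := Z)
    hs S2 H1.L0 H1.cov hLdisj
    (fun t ht => H1.Zsub t (hJ2K t ht))
    (fun t ht => (S2.Wsub t ht).trans (H1.DZ t (hJ2K t ht)))
    (fun t ht => (S2.Wsub t ht).trans (H1.Dsub t (hJ2K t ht)))
    C2.Xne C2.nd hκ30
    (by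
      rw [hκ3, div_mul_eq_mul_div, div_le_iff₀ hden]
      have e1 : κ2 * dl ^ (s+1) ≤ κ2 * dl ^ s := by
        gcongr ?_ * ?_
        exact pow_le_pow_of_le_one hd0.le N.dl1 (by omega)
      have := mul_le_mul_of_nonneg_right e1 (sz_nonneg (X (e (qU (s+1)))))
      linarith)
    (by
      rw [hκ3]
      apply div_le_self (by positivity)
      have h1 : (1:ℝ) ≤ r := by exact_mod_cast N.hr
      have h2 : (1:ℝ) ≤ 16 * r := by linarith
      have h3 : (1:ℝ) ≤ 16 * r * (K2 + 1) := one_le_mul_of_one_le_of_one_le h2 (by linarith)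
      exact one_le_mul_of_one_le_of_one_le h3 N.Λ1)
    (by positivity) (by positivity)
    (by
      rw [div_le_iff₀ hκ30, hκ3, ← mul_div_assoc, le_div_iff₀ hden]
      have := N.a3
      have h2 : 0 ≤ γ * Λ := by positivity
      have := mul_le_mul_of_nonneg_left this h2
      linarith)
    (by
      have : γ * Λ ^ 2 * 8 ≤ γ * Λ ^ 2 * Λ := by gcongr; linarith
      have e : γ * Λ ^ 2 * Λ = γ * Λ ^ 3 := by ring
      linarith)
    (by
      rw [hJ2]
      have : γ * Λ ^ 2 * (2 * ((K2:ℝ) + 1)) ≤ γ * Λ ^ 2 * Λ := by gcongr; linarith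
      have e : γ * Λ ^ 2 * Λ = γ * Λ ^ 3 := by ring
      linarith)
  have hi := H3.hi
  have hj1 := H3.hj1
  have hj2 := H3.hj2
  -- stage 4
  obtain ⟨b, hb⟩ : ∃ b, (s + 1 - i) + (s - j + 1) + b = ℓ :=
    ⟨ℓ - ((s + 1 - i) + (s - j + 1)), by omega⟩
  have hsb : s ≤ b := by omega
  have hbℓ : b ≤ ℓ := by omega
  have hWX : ∀ t ∈ J2, W3 t ⊆ X (e t) := fun t ht => (S2.Wsub t ht).trans (H1.Dsub t (hJ2K t ht))
  have hPqD : P (qU (s+1)) ⊆ D (qU (s+1)) := H3.PU.trans hUD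
  have C4 := ctx4 N (Y := fun a => X (e a)) H3 hJ2 hWX
    (fun t ht => hne _ (heI t (hJ2K t ht)).2) S2.Wsz
    (hPqD.trans (H1.Dsub _ hqsK))
    (fun t ht => C2.lk _ (Finset.mem_range.2 hqsK) t (S2.JJ0 ht) (hqst t ht).ne)
    (fun q hq t ht h => C2.lk q (S2.JJ0 hq) t (S2.JJ0 ht) h) b hsb hbℓ
  have hdlb : dl ^ ℓ ≤ dl ^ b := pow_le_pow_of_le_one hd0.le N.dl1 hbℓ
  have hkb : κ5 * dl ^ ℓ / (2 * r) ≤ κ5 * dl ^ b / (2 * r) := by gcongr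
  have hkb0 : 0 < κ5 * dl ^ ℓ / (2 * r) := by positivity
  have hkb1 : 0 < κ5 * dl ^ b / (2 * r) := by positivity
  have hlamP : 2 * lam / κ4 / (κ5 * dl ^ b / (2 * r)) ≤ 2 * lam / (κ5 * dl ^ ℓ / (2 * r) * κ4) := by
    rw [div_div]
    apply div_le_div_of_nonneg_left (by linarith [N.hlam]) (by positivity)
    calc κ5 * dl ^ ℓ / (2 * r) * κ4 ≤ κ5 * dl ^ b / (2 * r) * κ4 := by gcongr
      _ = κ4 * (κ5 * dl ^ b / (2 * r)) := by ring
  have hk40 : 0 < κ5 * dl ^ ℓ / (2 * r) * κ4 := by positivity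
  obtain ⟨M, qM, J4, W5, J, B, Zb, S4, hJJ4, hJc, hB, hBlk⟩ := stage4 N.hK' C4 (by
    calc _ ≤ 2 * lam / (κ5 * dl ^ ℓ / (2 * r) * κ4) * 4 ^ K' := by gcongr
      _ ≤ 1/4 := by
        rw [div_mul_eq_mul_div, div_le_iff₀ hk40]
        have := N.b5
        linarith)
  -- bookkeeping
  have hJ3J2 := H3.J3J
  have hJJ2 : ∀ t ∈ J, t ∈ J2 := fun t ht => hJ3J2 (S4.JJ0 (hJJ4 ht))
  have hMJ2 : ∀ h, 1 ≤ h → h ≤ b → qM h ∈ J2 ∧ M h ⊆ P (qM h) := fun h h1 h2 =>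
    ⟨hJ3J2 (S4.Mq h h1 h2).1, (S4.Mq h h1 h2).2⟩
  have hBP : ∀ t ∈ J, B t ⊆ P t := fun t ht => (hB t ht).2.1.trans
    ((S4.Wsub t (hJJ4 ht)).trans (H3.W4P t (S4.JJ0 (hJJ4 ht))))
  have hPX : ∀ t ∈ J2, P t ⊆ X (e t) := fun t ht => (H3.PW t ht).trans (hWX t ht)
  have hPD : ∀ t ∈ J2, P t ⊆ D t := fun t ht => (H3.PW t ht).trans (S2.Wsub t ht)
  have hPA : ∀ t ∈ J2, P t ⊆ A (e t) := fun t ht => (hPX t ht).trans (hXA _ (heI t (hJ2K t ht)).2)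
  have hBsz : ∀ t ∈ J, sz (A (e t)) ≤ Λ ^ 2 * sz (B t) := by
    intro t ht
    have h1 := (hX (e t) (hm _ (heI t (hJ2K t (hJJ2 t ht))).2)).2
    have h2 := S2.Wsz t (hJJ2 t ht)
    have h3 := H3.Psz t (hJJ2 t ht)
    have h4 := (hB t ht).2.2.1
    have h5 : κ4 * sz (X (e t)) ≤ sz (P t) := by rw [N.hκ4]; linarith
    have hBnn := sz_nonneg (B t)
    have h6 : κ5 * dl ^ ℓ / (2 * r) * κ4 * sz (X (e t)) ≤ κ5 * dl ^ b / (2 * r) * sz (P t) := by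
      rw [mul_assoc]
      exact mul_le_mul hkb h5 (mul_nonneg hκ40.le (sz_nonneg _)) hkb1.le
    have h7 : 8 * K' * Λ * 4 ^ K' * sz (B t) ≤
        (κ5 * dl ^ ℓ / (2 * r) * κ4) * (Λ ^ 2 * sz (B t) / 2) := by
      have := mul_le_mul_of_nonneg_right N.a6 (mul_nonneg hΛ0.le hBnn)
      linarith
    have h8 := le_of_mul_le_mul_left ((h6.trans h4).trans h7) hk40
    linarith
  have hMw : M 0 ⊆ D (qU (s+1)) := by
    rw [S4.M0]
    exact Set.singleton_subset_iff.2 (hPqD H3.pP)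
  have hpU : ∀ h, 1 ≤ h → h ≤ s + 1 → qU h < K1 ∧ p h ∈ X (e (qU h)) := by
    intro h h1 h2
    have := S2.Mq h h1 h2
    exact ⟨Finset.mem_range.1 this.1, this.2 (H3.pU h h2)⟩
  have hqU : ∀ h, 1 ≤ h → h ≤ s + 1 → ∀ t ∈ J2, qU h < t := fun h h1 h2 t ht => S2.qJ t ht h h1 h2
  have hLne : ∀ h, 1 ≤ h → h ≤ s → ∀ a < K1, q1 h ≠ e a := fun h h1 h2 a ha =>
    (H1.qe a ha h h1 h2).ne
  have hZanti : ∀ t ∈ J, ∀ a < t, Anticomplete G (Z t) (D a) := fun t ht a ha =>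
    anti_of_disj (H1.ZD t (hJ2K t (hJJ2 t ht)) a ha)
  have hLDanti : ∀ h < s, ∀ a < K1, Anticomplete G (L h) (D a) := fun h hh a ha =>
    anti_of_disj (H1.LD h hh a ha)
  have hqp1 : ∀ h, 1 ≤ h → (if h = 0 then 0 else e (qU h)) = e (qU h) := by
    intro h hh; rw [if_neg (by omega)]
  have hpanti : ∀ h ≤ s, ∀ t ∈ J2, Anticomplete G {p h} (P t) := by
    intro h hh t ht
    refine anti_mono (anti_of_disj (hWU t ht h hh)) ?_ (H3.PW t ht)
    exact Set.singleton_subset_iff.2 (H3.pU h (by omega))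
  refine ⟨i, j, b, L, q1, p, fun h => if h = 0 then 0 else e (qU h), M, fun h => e (qM h), J, B, e,
    Z, Zb, ?_, hb, hJc, hBsz, ?_⟩
  · constructor
    · exact hi
    · exact hj1
    · exact hj2
    · omega
    · exact hAd
    · intro h h1 h2
      obtain ⟨c1, c2⟩ := H1.Lq h h1 h2
      have c3 := Finset.mem_Icc.1 c1
      exact ⟨by omega, c2.trans (hXA _ c3.2)⟩
    · intro h h2
      rcases Nat.eq_zero_or_pos h with c | c
      · subst c
        refine ⟨by simp, ?_⟩
        have := H3.pU 0 (by omega)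
        rw [S2.M0, Set.mem_singleton_iff] at this
        simp only [if_true]
        rw [this]; exact hXA 0 (by omega) hz
      · simp only [hqp1 h c]
        obtain ⟨c1, c2⟩ := hpU h c h2
        have c3 := heI _ c1
        exact ⟨by omega, hXA _ c3.2 c2⟩
    · intro h h1 h2
      obtain ⟨c1, c2⟩ := hMJ2 h h1 h2
      have c3 := heI _ (hJ2K _ c1)
      exact ⟨by omega, c2.trans (hPA _ c1)⟩
    · intro t ht
      have c3 := heI _ (hJ2K _ (hJJ2 t ht))
      exact ⟨by omega, (hBP t ht).trans (hPA _ (hJJ2 t ht))⟩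
    · intro t ht
      apply nonempty_of_sz
      have c1 := sz_pos (hAne _ (heI _ (hJ2K _ (hJJ2 t ht))).2)
      have c2 := hBsz t ht
      by_contra hcon
      have c3 : sz (B t) = 0 := le_antisymm (not_lt.1 hcon) (sz_nonneg _)
      rw [c3, mul_zero] at c2
      linarith
    · intro h h' h1 h2 h1' h2' hq
      by_contra hne'
      rcases lt_or_gt_of_ne hne' with c | c
      · have := H1.qlt h h' h1 c h2'; omega
      · have := H1.qlt h' h h1' c h2; omega
    · intro h h' h2 h2' hq
      rcases Nat.eq_zero_or_pos h with c | c <;> rcases Nat.eq_zero_or_pos h' with c' | c'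
      · omega
      · simp only [hqp1 h' c', c, if_true] at hq
        have := heI _ (hpU h' c' h2').1
        omega
      · simp only [hqp1 h c, c', if_true] at hq
        have := heI _ (hpU h c h2).1
        omega
      · simp only [hqp1 h c, hqp1 h' c'] at hq
        have hq := H1.einj _ (hpU h c h2).1 _ (hpU h' c' h2').1 hq
        by_contra hne'
        rcases lt_or_gt_of_ne hne' with d | d
        · have := S2.qlt h h' c d h2'; omega
        · have := S2.qlt h' h c' d h2; omega
    · intro h h' h1 h2 h1' h2' hq
      have hq := H1.einj _ (hJ2K _ (hMJ2 h h1 h2).1) _ (hJ2K _ (hMJ2 h' h1' h2').1) hq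
      by_contra hne'
      rcases lt_or_gt_of_ne hne' with c | c
      · have := S4.qlt h h' h1 c h2'; omega
      · have := S4.qlt h' h h1' c h2; omega
    · intro t ht t' ht' hq
      exact H1.einj _ (hJ2K _ (hJJ2 t ht)) _ (hJ2K _ (hJJ2 t' ht')) hq
    · intro h h' h1 h2 h2'
      rcases Nat.eq_zero_or_pos h' with c' | c'
      · simp only [c', if_true]
        have := Finset.mem_Icc.1 (H1.Lq h h1 h2).1
        omega
      · simp only [hqp1 h' c']
        exact hLne h h1 h2 _ (hpU h' c' h2').1
    · intro h h' h1 h2 h1' h2'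
      exact hLne h h1 h2 _ (hJ2K _ (hMJ2 h' h1' h2').1)
    · intro h h1 h2 t ht
      exact hLne h h1 h2 _ (hJ2K _ (hJJ2 t ht))
    · intro h h' h2 h1' h2'
      have c1 := (hMJ2 h' h1' h2').1
      rcases Nat.eq_zero_or_pos h with c | c
      · simp only [c, if_true]
        have := heI _ (hJ2K _ c1)
        omega
      · simp only [hqp1 h c]
        exact hene _ (hpU h c h2).1 _ (hJ2K _ c1) (hqU h c h2 _ c1).ne
    · intro h h2 t ht
      have c1 := hJJ2 t ht
      rcases Nat.eq_zero_or_pos h with c | c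
      · simp only [c, if_true]
        have := heI _ (hJ2K _ c1)
        omega
      · simp only [hqp1 h c]
        exact hene _ (hpU h c h2).1 _ (hJ2K _ c1) (hqU h c h2 _ c1).ne
    · intro h h1 h2 t ht
      exact hene _ (hJ2K _ (hMJ2 h h1 h2).1) _ (hJ2K _ (hJJ2 t ht)) (S4.qJ t (hJJ4 ht) h h1 h2).ne
    · exact fun h h' h1 h2 => anti_of_disj (H1.anti h h' h1 h2)
    · exact H3.padj
    · intro h h' h1 h2
      exact anti_of_disj (S2.anti h h' h1 h2) _ (H3.pU h (by omega)) _ (H3.pU h' h2)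
    · exact S4.M0
    · intro h hh v hv
      exact S4.cov h hh hv
    · exact fun h h' h1 h2 => anti_of_disj (S4.anti h h' h1 h2)
    · intro h hh h' h1' h2'
      exact anti_mono (hpanti h hh _ (hMJ2 h' h1' h2').1) subset_rfl (hMJ2 h' h1' h2').2
    · intro h hh t ht
      exact anti_mono (hpanti h hh _ (hJJ2 t ht)) subset_rfl (hBP t ht)
    · intro h hh h' h2'
      rcases Nat.eq_zero_or_pos h' with c | c
      · subst c
        exact anti_mono (hLDanti h hh _ hqsK) subset_rfl hMw
      · obtain ⟨c1, c2⟩ := hMJ2 h' c h2'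
        exact anti_mono (hLDanti h hh _ (hJ2K _ c1)) subset_rfl (c2.trans (hPD _ c1))
    · intro h hh t ht
      exact anti_mono (hLDanti h hh _ (hJ2K _ (hJJ2 t ht))) subset_rfl
        ((hBP t ht).trans (hPD _ (hJJ2 t ht)))
    · exact fun t ht => H1.Zsub t (hJ2K t (hJJ2 t ht))
    · intro t ht h' h2'
      rcases Nat.eq_zero_or_pos h' with c | c
      · subst c
        exact anti_mono (hZanti t ht _ (hqst t (hJJ2 t ht))) subset_rfl hMw
      · obtain ⟨c1, c2⟩ := hMJ2 h' c h2'
        exact anti_mono (hZanti t ht _ (S4.qJ t (hJJ4 ht) h' c h2')) subset_rfl (c2.trans (hPD _ c1))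
    · intro t ht t' ht' hlt
      exact anti_mono (hZanti t ht t' hlt) subset_rfl ((hBP t' ht').trans (hPD _ (hJJ2 t' ht')))
    · intro t ht v hv
      exact H3.W4Z t (S4.JJ0 (hJJ4 ht)) (S4.Wsub t (hJJ4 ht) ((hB t ht).2.1 hv))
    · intro h hh t ht
      exact anti_mono (anti_of_disj (S4.Wanti t (hJJ4 ht) h hh)) subset_rfl (hB t ht).2.1
    · exact fun t ht => (hB t ht).1
    · exact fun t ht v hv => (hB t ht).2.2.2.1 hv
    · exact fun t ht t' ht' hlt => anti_of_disj ((hB t ht).2.2.2.2 t' ht' hlt)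
  · intro t ht t' ht' hne' v hv
    refine (hBlk t ht t' ht' hne' v hv).trans ?_
    apply mul_le_mul_of_nonneg_right _ (sz_nonneg _)
    calc _ ≤ 4 ^ K' * (2 * lam / (κ5 * dl ^ ℓ / (2 * r) * κ4)) := by gcongr
      _ ≤ lam' := by
        rw [← mul_div_assoc, div_le_iff₀ hk40]
        have := N.b6
        linarith

end core2

section final

lemma ev_large (C k : ℝ) (hk : 0 < k) : ∀ᶠ Λ in Filter.atTop, C ≤ Λ * k :=
  (Filter.tendsto_id.atTop_mul_const hk).eventually_ge_atTop C

lemma ev_small (k C : ℝ) (hC : 0 < C) : ∀ᶠ lam in nhdsWithin (0:ℝ) (Set.Ioi 0), lam * k ≤ C := by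
  have h : Filter.Tendsto (fun x : ℝ => x * k) (nhdsWithin (0:ℝ) (Set.Ioi 0)) (nhds (0 * k)) :=
    ((continuous_id.mul continuous_const).tendsto (0:ℝ)).mono_left nhdsWithin_le_nhds
  rw [zero_mul] at h
  exact h.eventually (eventually_le_nhds hC)

lemma num_exists (s ℓ K' r : ℕ) (lam' : ℝ) (hs : 1 ≤ s) (hℓ : 3 * s + 1 ≤ ℓ) (hK' : 1 ≤ K')
    (hr : 1 ≤ r) (hlam' : 0 < lam') :
    ∃ (K0 K1 K2 K3 : ℕ) (dl κ2 κ4 κ5 lam Λ0 : ℝ), 0 < lam ∧ 1 ≤ Λ0 ∧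
      ∀ Λ γ n : ℝ, Λ0 ≤ Λ → 0 < γ → γ * Λ ^ 8 ≤ 1 → n ≤ Λ ^ r →
        n < (1 / (γ * Λ ^ 3)) ^ s →
        Num s ℓ K' r K0 K1 K2 K3 dl κ2 κ4 κ5 Λ γ lam lam' n := by
  obtain ⟨K3, hK3⟩ : ∃ x, x = Kf r (r * K') ℓ := ⟨_, rfl⟩
  obtain ⟨K2, hK2⟩ : ∃ x, x = (s+1) * s * K3 := ⟨_, rfl⟩
  obtain ⟨K1, hK1⟩ : ∃ x, x = Kf r (r * (K2 + 1)) s := ⟨_, rfl⟩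
  obtain ⟨K0, hK0⟩ : ∃ x, x = Kf r K1 s := ⟨_, rfl⟩
  obtain ⟨dl, hdl⟩ : ∃ x : ℝ, x = 1 / (4 * r) := ⟨_, rfl⟩
  obtain ⟨κ2, hκ2⟩ : ∃ x : ℝ, x = dl ^ s / 2 / 4 ^ K1 := ⟨_, rfl⟩
  obtain ⟨κ4, hκ4⟩ : ∃ x : ℝ, x = κ2 * dl ^ (s+1) / 2 := ⟨_, rfl⟩
  obtain ⟨κ5, hκ5⟩ : ∃ x : ℝ, x = 1 / (((s:ℝ)+1) * s) := ⟨_, rfl⟩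
  have hr0 : (0:ℝ) < r := by exact_mod_cast hr
  have hs0 : (0:ℝ) < s := by exact_mod_cast hs
  have hdl0 : 0 < dl := by rw [hdl]; positivity
  have hκ20 : 0 < κ2 := by rw [hκ2]; positivity
  have hκ40 : 0 < κ4 := by rw [hκ4]; positivity
  have hκ50 : 0 < κ5 := by rw [hκ5]; positivity
  obtain ⟨lam, ⟨⟨⟨⟨⟨⟨b1, b2⟩, b3⟩, b4⟩, b5⟩, b6⟩, hlam⟩⟩ := ((((((
    (ev_small (16 * r) (dl ^ s) (by positivity)).and
    (ev_small (2 * 4 ^ K1) (dl ^ s / 2) (by positivity))).and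
    (ev_small (16 * r) (κ2 * dl ^ s) (by positivity))).and
    (ev_small (16 * r) (κ5 * dl ^ ℓ * κ4) (by positivity))).and
    (ev_small (8 * 4 ^ K') (κ5 * dl ^ ℓ / (2 * r) * κ4) (by positivity))).and
    (ev_small (2 * 4 ^ K') (lam' * (κ5 * dl ^ ℓ / (2 * r) * κ4)) (by positivity))).and
    (self_mem_nhdsWithin)).exists
  obtain ⟨Λ0, hΛ0⟩ := Filter.eventually_atTop.1 (((((
    (ev_large (64 * r * (K0 + 1) * (s + 1)) (1 * dl ^ s) (by positivity)).and
    (ev_large (64 * r * (K1 + 1) * (s + 1)) (κ2 * dl ^ s) (by positivity))).and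
    (ev_large (32 * r * (K2 + 1)) (κ2 * dl ^ (s+1)) (by positivity))).and
    (ev_large (64 * r * (K3 + 1) * (ℓ + 1)) (κ5 * dl ^ ℓ) (by positivity))).and
    (ev_large (2 * (K0:ℝ) + 2 * K2 + 64 * ℓ + 64) 1 (by positivity))).and
    (ev_large (16 * K' * 4 ^ K') (κ5 * dl ^ ℓ / (2 * r) * κ4) (by positivity)))
  refine ⟨K0, K1, K2, K3, dl, κ2, κ4, κ5, lam, max Λ0 1, hlam, le_max_right _ _, ?_⟩
  intro Λ γ n hΛ g0 g8 hn hns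
  obtain ⟨⟨⟨⟨⟨a1, a2⟩, a3⟩, a4⟩, a5⟩, a6⟩ := hΛ0 Λ ((le_max_left _ _).trans hΛ)
  exact ⟨hs, hℓ, hK', hr, hK3, hK2, hK1, hK0, hdl, hκ2, hκ4, hκ5, a1, a2, a3, a4, a5, a6,
    b1, b2, b3, b4, b5, b6, le_of_lt hlam, g0, g8, hn, hns⟩

lemma r_exists (s : ℕ) (c σ σ' : ℝ) (hs : 1 ≤ s) (hc : 0 < c) (hσσ' : σ < σ')
    (hcs : 1 / (s:ℝ) < c) :
    ∃ r : ℕ, 1 ≤ r ∧ 8 / (r:ℝ) ≤ c ∧ 1 < (c - 3 / r) * s ∧ 2 / (r:ℝ) ≤ σ' - σ := by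
  have hs0 : (0:ℝ) < s := by exact_mod_cast hs
  have t (C : ℝ) : Filter.Tendsto (fun r : ℕ => C / (r:ℝ)) Filter.atTop (nhds 0) :=
    tendsto_const_div_atTop_nhds_zero_nat C
  have e1 := (t 8).eventually (eventually_le_nhds hc)
  have e2 := (t 3).eventually (eventually_lt_nhds (sub_pos.2 hcs))
  have e3 := (t 2).eventually (eventually_le_nhds (sub_pos.2 hσσ'))
  obtain ⟨r, ⟨⟨⟨h1, h2⟩, h3⟩, h4⟩⟩ :=
    (((e1.and e2).and e3).and (Filter.eventually_ge_atTop 1)).exists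
  refine ⟨r, h4, h1, ?_, h3⟩
  have : 1 / (s:ℝ) < c - 3 / r := by linarith
  rwa [div_lt_iff₀ hs0] at this

lemma asym (s r : ℕ) (c n : ℝ) (hr : 1 ≤ r) (hn : 1 < n) (h8 : 8 / (r:ℝ) ≤ c)
    (h3 : 1 < (c - 3 / r) * s) :
    n ^ (-c) * (n ^ (1 / (r:ℝ))) ^ 8 ≤ 1 ∧ n ≤ (n ^ (1 / (r:ℝ))) ^ r ∧
      n < (1 / (n ^ (-c) * (n ^ (1 / (r:ℝ))) ^ 3)) ^ s := by
  have hn0 : 0 < n := by linarith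
  have hr0 : (r:ℝ) ≠ 0 := by positivity
  have pw (k : ℕ) : (n ^ (1 / (r:ℝ))) ^ k = n ^ ((k:ℝ) / r) := by
    rw [← Real.rpow_natCast, ← Real.rpow_mul hn0.le]; congr 1; ring
  refine ⟨?_, ?_, ?_⟩
  · rw [pw, ← Real.rpow_add hn0]
    apply Real.rpow_le_one_of_one_le_of_nonpos hn.le
    push_cast; linarith
  · rw [pw, div_self hr0, Real.rpow_one]
  · rw [pw, ← Real.rpow_add hn0, one_div, ← Real.rpow_neg hn0.le, ← Real.rpow_natCast,
      ← Real.rpow_mul hn0.le]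
    have : n ^ (1:ℝ) < n ^ (-(-c + ((3:ℕ):ℝ) / r) * (s:ℝ)) := by
      apply Real.rpow_lt_rpow_of_exponent_lt hn
      push_cast
      calc (1:ℝ) < (c - 3 / r) * s := h3
        _ = _ := by ring
    rwa [Real.rpow_one] at this

lemma main_result (ℓ : ℕ) (hℓ3 : 1 ≤ (ℓ - 1) / 3)
    (c σ σ' : ℝ) (hc : 0 < c) (hσσ' : σ < σ')
    (hcℓ : 1 / ((((ℓ - 1) / 3 : ℕ)) : ℝ) < c)
    (K' : ℕ) (hK' : 0 < K') (lam' : ℝ) (hlam' : 0 < lam') :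
    ∃ (lam : ℝ) (N K : ℕ), 0 < lam ∧ 0 < N ∧ 0 < K ∧
      ∀ {V : Type} [Fintype V] (G : SimpleGraph V), N ≤ Fintype.card V →
        ∀ (I : Finset ℤ) (A : ℤ → Set V), IsBlockade I A → I.card = K →
          LinkageLE G I A lam → ShrinkageLE I A σ →
          ¬ Divergent G I A ((Fintype.card V : ℝ) ^ (-c))
              ((Fintype.card V : ℝ) ^ (-c)) →
          ∃ (L : ℕ → Set V) (a : ℕ) (M : ℕ → Set V) (b : ℕ)
            (J : Finset ℤ) (B : ℤ → Set V),
            IsBiGrading G L a M b J B ∧ RainbowBiLevelling I A L a M b J B ∧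
            a + b = ℓ ∧ J.card = K' ∧ LinkageLE G J B lam' ∧ ShrinkageLE J B σ' := by
  obtain ⟨s, hsdef⟩ : ∃ s, s = (ℓ - 1) / 3 := ⟨_, rfl⟩
  rw [← hsdef] at hℓ3 hcℓ
  obtain ⟨r, hr, h8, h3, h2⟩ := r_exists s c σ σ' hℓ3 hc hσσ' hcℓ
  obtain ⟨K0, K1, K2, K3, dl, κ2, κ4, κ5, lam, Λ0, hlam, hΛ0, hNum⟩ :=
    num_exists s ℓ K' r lam' hℓ3 (by omega) hK' hr hlam'
  refine ⟨lam, ⌈Λ0 ^ r⌉₊ + 2, K0 + 1, hlam, by omega, by omega, ?_⟩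
  intro V _ G hN I A hbl hcard hlink hshr hdiv
  obtain ⟨n, hndef⟩ : ∃ n : ℝ, n = (Fintype.card V : ℝ) := ⟨_, rfl⟩
  have hNr : ((⌈Λ0 ^ r⌉₊ + 2 : ℕ) : ℝ) ≤ n := by rw [hndef]; exact_mod_cast hN
  push_cast at hNr
  have hce : Λ0 ^ r ≤ (⌈Λ0 ^ r⌉₊ : ℝ) := Nat.le_ceil _
  have hΛr : 0 ≤ Λ0 ^ r := by positivity
  have hn1 : 1 < n := by linarith
  have hn0 : 0 < n := by linarith
  have hr0 : (r:ℝ) ≠ 0 := by positivity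
  obtain ⟨q1, q2, q3⟩ := asym s r c n hr hn1 h8 h3
  have hΛ : Λ0 ≤ n ^ (1 / (r:ℝ)) := by
    have e : (Λ0 ^ r) ^ (1 / (r:ℝ)) = Λ0 := by
      rw [one_div, Real.pow_rpow_inv_natCast (by linarith) (by omega)]
    rw [← e]
    exact Real.rpow_le_rpow hΛr (by linarith) (by positivity)
  have hNm := hNum _ _ n hΛ (Real.rpow_pos_of_pos hn0 (-c)) q1 q2 q3
  -- enumeration of the index set
  obtain ⟨e0, he1, he2⟩ : ∃ e0 : ℕ → ℤ, (∀ x < K0 + 1, e0 x ∈ I) ∧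
      ∀ x < K0 + 1, ∀ y < K0 + 1, e0 x = e0 y → x = y := by
    refine ⟨fun x => if h : x < K0 + 1 then I.orderEmbOfFin hcard ⟨x, h⟩ else 0, ?_, ?_⟩
    · intro x hx
      simp only [hx, dif_pos]
      exact Finset.orderEmbOfFin_mem _ _ _
    · intro x hx y hy h
      simp only [hx, hy, dif_pos] at h
      have := (I.orderEmbOfFin hcard).injective h
      simpa using this
  rw [← hndef] at hdiv
  rw [hndef] at hNm
  obtain ⟨i, j, b, L, qL, p, qp, M, qM, J, B, qB, Z, Zb, D, hh, hJ, hsz, hlk⟩ :=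
    core (G := G) hNm (fun x => A (e0 x))
      (fun x hx => hbl.1 _ (he1 x (by omega)))
      (fun x hx y hy hne => hbl.2 _ (he1 x hx) _ (he1 y hy) (fun h => hne (he2 x hx y hy h)))
      (by
        intro x hx y hy hne S hS hsS
        by_contra hcon
        push Not at hcon
        rw [← hndef] at hcon hsS
        exact hdiv ⟨e0 x, he1 x (by omega), e0 y, he1 y (by omega),
          fun h => hne (he2 x (by omega) y (by omega) h), S, hS,
          A (e0 y) \ nbhd G S, Set.diff_subset, hsS, hcon,
          fun a ha b hb hadj => hb.2 ⟨a, ha, hadj⟩⟩)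
      (by
        intro x hx y hy hne v hv
        rw [nbhd_singleton]
        exact hlink _ (he1 x (by omega)) _ (he1 y (by omega))
          (fun h => hne (he2 x (by omega) y (by omega) h)) v hv)
  refine ⟨_, _, M, b, JZ J, BZ B, D.bigrading,
    D.rainbow I A e0 (fun x hx => ⟨he1 x hx, subset_rfl⟩) he2, hh, ?_, ?_, ?_⟩
  · rw [JZ, Finset.card_map]; exact hJ
  · intro x hx y hy hne v hv
    obtain ⟨t, ht, rfl⟩ := (mem_JZ x).1 hx
    obtain ⟨t', ht', rfl⟩ := (mem_JZ y).1 hy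
    have := hlk t ht t' ht' (fun h => hne (by rw [h])) v (by simpa [BZ] using hv)
    rw [nbhd_singleton] at this
    simpa [BZ, sz] using this
  · intro x hx
    obtain ⟨t, ht, rfl⟩ := (mem_JZ x).1 hx
    have k1 := hshr (e0 (qB t)) (he1 _ (D.Bq t ht).1)
    have k2 := hsz t ht
    rw [← hndef] at k1 k2 ⊢
    simp only [BZ, Int.toNat_natCast]
    have k3 : n ^ (1 - σ) ≤ (n ^ (1 / (r:ℝ))) ^ 2 * sz (B t) := k1.trans k2
    have pw : (n ^ (1 / (r:ℝ))) ^ 2 = n ^ (2 / (r:ℝ)) := by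
      rw [← Real.rpow_natCast, ← Real.rpow_mul hn0.le]; congr 1; push_cast; ring
    rw [pw] at k3
    have hp : 0 < n ^ (2 / (r:ℝ)) := Real.rpow_pos_of_pos hn0 _
    have k4 : n ^ (2 / (r:ℝ)) * n ^ (1 - σ') ≤ n ^ (2 / (r:ℝ)) * sz (B t) := by
      refine le_trans ?_ k3
      rw [← Real.rpow_add hn0]
      exact Real.rpow_le_rpow_of_exponent_le hn1.le (by linarith)
    exact le_of_mul_le_mul_left k4 hp

end final

/-- obtaining a rainbow bi-grading of height `ℓ` whose blockade has
prescribed length, small linkage and small shrinkage. -/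
theorem statement_18 (ℓ : ℕ) (hℓ3 : 1 ≤ (ℓ - 1) / 3)
    (c σ σ' : ℝ) (hc : 0 < c) (hσ0 : 0 < σ) (hσσ' : σ < σ')
    (hcℓ : 1 / ((((ℓ - 1) / 3 : ℕ)) : ℝ) < c)
    (K' : ℕ) (hK' : 0 < K') (lam' : ℝ) (hlam' : 0 < lam') :
    ∃ (lam : ℝ) (N K : ℕ), 0 < lam ∧ 0 < N ∧ 0 < K ∧
      ∀ {V : Type} [Fintype V] (G : SimpleGraph V), N ≤ Fintype.card V →
        ∀ (I : Finset ℤ) (A : ℤ → Set V), IsBlockade I A → I.card = K →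
          LinkageLE G I A lam → ShrinkageLE I A σ →
          ¬ Divergent G I A ((Fintype.card V : ℝ) ^ (-c))
              ((Fintype.card V : ℝ) ^ (-c)) →
          ∃ (L : ℕ → Set V) (a : ℕ) (M : ℕ → Set V) (b : ℕ)
            (J : Finset ℤ) (B : ℤ → Set V),
            IsBiGrading G L a M b J B ∧ RainbowBiLevelling I A L a M b J B ∧
            a + b = ℓ ∧ J.card = K' ∧ LinkageLE G J B lam' ∧ ShrinkageLE J B σ' := by
  exact main_result ℓ hℓ3 c σ σ' hc hσσ' hcℓ K' hK' lam' hlam'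

end PurePairs
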